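/- arXiv:math/0011230 — 5 statements merged into one kernel-verified Lean document; each statement's English description precedes it below -/
import Mathlib

section
/- For every cardinal κ ≥ ℵ₁ there exists a commutative ring R such that: R is a principal ideal domain (and not a field); R is local with maximal ideal generated by a prime element p; R is not complete in the p-adic topology (there is a p-adically Cauchy sequence in R with no limit in R); R has cardinality 2^κ; and every R-module M that is ℵ₁-free and κ-generated is a Whitehead module, i.e., Ext¹_R(M, R) = 0. -/
/-!
Statement 0 (Eklof–Shelah, "Whitehead modules over large principal ideal domains",
Theorem 1): There is a slender (local, not `p`-adically complete) p.i.d. `R` of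
cardinality `2 ^ ℵ₁` such that every `ℵ₁`-free `ℵ₁`-generated `R`-module is a
Whitehead module.
-/

open Cardinal

universe u

/-- The first Ext group `Ext¹_R(M, N)` (as a module, via the derived-functor `Ext`). -/
noncomputable def ext1 (R : Type u) [CommRing R] (M N : Type u) [AddCommGroup M] [Module R M]
    [AddCommGroup N] [Module R N] : ModuleCat R :=
  ((Ext R (ModuleCat.{u} R) 1).obj (Opposite.op (ModuleCat.of R M))).obj (ModuleCat.of R N)

/-- `M` is a Whitehead `R`-module: `Ext¹_R(M, R) = 0`. -/
def IsWhitehead (R : Type u) [CommRing R] (M : Type u) [AddCommGroup M] [Module R M] : Prop :=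
  Subsingleton (ext1 R M R)

/-- `M` is `κ`-generated: generated by a subset of cardinality `≤ κ`. -/
def IsGenerated (R : Type u) [Semiring R] (M : Type u) [AddCommMonoid M] [Module R M]
    (κ : Cardinal.{u}) : Prop :=
  ∃ S : Set M, #S ≤ κ ∧ Submodule.span R S = ⊤

/-- `M` is `κ`-free: every submodule generated by fewer than `κ` elements is free.
(So `ℵ₁`-free means every countably generated submodule is free.) -/
def IsKappaFree (R : Type u) [Ring R] (M : Type u) [AddCommGroup M] [Module R M]
    (κ : Cardinal.{u}) : Prop :=
  ∀ S : Set M, #S < κ → Module.Free R (Submodule.span R S)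

/-- `a` is a Cauchy sequence for the `p`-adic topology on `R`. -/
def PAdicCauchy {R : Type u} [CommRing R] (p : R) (a : ℕ → R) : Prop :=
  ∀ n : ℕ, ∃ N : ℕ, ∀ j ≥ N, ∀ k ≥ N, p ^ n ∣ (a j - a k)

/-- `L` is a limit of the sequence `a` in the `p`-adic topology on `R`. -/
def PAdicLimit {R : Type u} [CommRing R] (p : R) (a : ℕ → R) (L : R) : Prop :=
  ∀ n : ℕ, ∃ N : ℕ, ∀ j ≥ N, p ^ n ∣ (a j - L)

/-- `R` is not complete in the `p`-adic topology: there is a `p`-adically Cauchy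
sequence in `R` with no limit in `R`. -/
def NotPAdicComplete (R : Type u) [CommRing R] (p : R) : Prop :=
  ∃ a : ℕ → R, PAdicCauchy p a ∧ ∀ L : R, ¬ PAdicLimit p a L

/-!
Let `k` be a field of cardinality greater than `μ`. A subring `R` of `k⟦X⟧` which contains `X` and
is closed under division by its nonzero elements whenever the quotient lies in `k⟦X⟧` is a discrete
valuation ring with uniformizer `X`, and it is not complete as soon as some `b ∉ R` is an `X`-adic
limit of elements of `R`.

Let `M = F / K` with `F` free over `R`. Then `M` is a Whitehead module iff every functional
`φ : K → R` extends to `F`. If `M` is torsion free, `φ` extends to a functional on `F` with values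
in `k⟦X⟧`, and the constant coefficients of the extension may be prescribed modulo those forced
by `K`; since `μ < #k` they can be chosen generically, that is, as algebraically independent as
linear relations permit. If moreover every finite subset of `M` lies in a finitely generated pure
submodule, then only finitely many generic values matter at a time, and the division closure of
the ring generated by `R` and the values of the extension still omits `b`.

Since `μ ^ κ = μ`, all functionals defined on submodules of a `κ`-generated free module are extended
in one step without exceeding the cardinality `μ`. Iterating `κ⁺` times gives a ring `R` such
that every set of at most `κ` elements of `R` lies in a stage `S` whose functionals were extended
later on. The generators of the relations of a `κ`-generated module and the values of `φ` on them
live at such a stage, and the condition on pure submodules descends from `R` to `S` by faithful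
flatness.
-/

/-! ### Whitehead modules and extension of functionals -/

theorem exists_comp_eq_of_ker_le {R M N P : Type*} [Ring R] [AddCommGroup M] [Module R M]
    [AddCommGroup N] [Module R N] [AddCommGroup P] [Module R P] {d : M →ₗ[R] N}
    (hd : Function.Surjective d) {f : M →ₗ[R] P} (h : LinearMap.ker d ≤ LinearMap.ker f) :
    ∃ g : N →ₗ[R] P, g ∘ₗ d = f := by
  refine ⟨(LinearMap.ker d).liftQ f h ∘ₗ (d.quotKerEquivOfSurjective hd).symm.toLinearMap, ?_⟩
  ext x
  have hx : (d.quotKerEquivOfSurjective hd).symm (d x) = (LinearMap.ker d).mkQ x := by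
    rw [LinearEquiv.symm_apply_eq]; rfl
  simp only [LinearMap.comp_apply, LinearEquiv.coe_coe, hx, Submodule.mkQ_apply,
    Submodule.liftQ_apply]

-- Schanuel's trick: lift each surjection through the other.
theorem exists_extend_ker_of_projective {R M N F P : Type*} [CommRing R]
    [AddCommGroup M] [Module R M] [AddCommGroup N] [Module R N] [AddCommGroup F] [Module R F]
    [AddCommGroup P] [Module R P] [Module.Projective R F] [Module.Projective R P]
    {π : F →ₗ[R] M} (hπ : Function.Surjective π) {ρ : P →ₗ[R] M} (hρ : Function.Surjective ρ)
    (h : ∀ φ : LinearMap.ker π →ₗ[R] N, ∃ ψ : F →ₗ[R] N, ∀ x : LinearMap.ker π, ψ x = φ x)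
    (φ : LinearMap.ker ρ →ₗ[R] N) : ∃ ψ : P →ₗ[R] N, ∀ x : LinearMap.ker ρ, ψ x = φ x := by
  obtain ⟨u, hu⟩ := Module.projective_lifting_property π ρ hπ
  obtain ⟨v, hv⟩ := Module.projective_lifting_property ρ π hρ
  replace hu : ∀ x, π (u x) = ρ x := LinearMap.congr_fun hu
  replace hv : ∀ x, ρ (v x) = π x := LinearMap.congr_fun hv
  have hv_ker : ∀ x ∈ LinearMap.ker π, v x ∈ LinearMap.ker ρ := fun x hx ↦ by
    rwa [LinearMap.mem_ker, hv]
  have hsub_ker : ∀ x, (LinearMap.id - v ∘ₗ u : P →ₗ[R] P) x ∈ LinearMap.ker ρ := fun x ↦ by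
    simp [hu, hv]
  obtain ⟨ψ, hψ⟩ := h (φ ∘ₗ v.restrict hv_ker)
  refine ⟨ψ ∘ₗ u + φ ∘ₗ (LinearMap.id - v ∘ₗ u).codRestrict _ hsub_ker, fun x ↦ ?_⟩
  have hux : u x ∈ LinearMap.ker π := by rw [LinearMap.mem_ker, hu]; exact x.2
  rw [LinearMap.add_apply, LinearMap.comp_apply, hψ ⟨u x, hux⟩, LinearMap.comp_apply,
    LinearMap.comp_apply, ← map_add]
  congr 1
  ext
  simp

open CategoryTheory in
theorem isWhitehead_of_exists_extend_ker {R M F : Type u} [CommRing R] [AddCommGroup M]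
    [Module R M] [AddCommGroup F] [Module R F] [Module.Projective R F]
    {π : F →ₗ[R] M} (hπ : Function.Surjective π)
    (h : ∀ φ : LinearMap.ker π →ₗ[R] R, ∃ ψ : F →ₗ[R] R, ∀ x : LinearMap.ker π, ψ x = φ x) :
    IsWhitehead R M := by
  refine ModuleCat.subsingleton_of_isZero ?_
  let P := projectiveResolution (ModuleCat.of R M)
  refine Limits.IsZero.of_iso ?_ (P.isoExt 1 (ModuleCat.of R R))
  rw [← HomologicalComplex.exactAt_iff_isZero_homology,
    HomologicalComplex.exactAt_iff' _ 0 1 2 (by simp) (by simp),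
    ShortComplex.moduleCat_exact_iff]
  intro (f : P.complex.X 1 ⟶ ModuleCat.of R R) (hf : P.complex.d 2 1 ≫ f = 0)
  have exact_zero := (ShortComplex.moduleCat_exact_iff _).1 P.exact₀
  have exact_one := (ShortComplex.moduleCat_exact_iff _).1 (P.exact_succ 0)
  have : Module.Projective R (P.complex.X 0) := (IsProjective.iff_projective _).2 (P.projective 0)
  let ρ : P.complex.X 0 →ₗ[R] M := (P.π.f 0).hom
  have hρ : Function.Surjective ρ := (ModuleCat.epi_iff_surjective _).1 inferInstance
  let d : P.complex.X 1 →ₗ[R] LinearMap.ker ρ := (P.complex.d 1 0).hom.codRestrict _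
    fun z ↦ congr($(P.complex_d_comp_π_f_zero).hom z)
  have hd : Function.Surjective d := fun ⟨y, hy⟩ ↦
    (exact_zero y hy).imp fun _ hz ↦ Subtype.ext hz
  have hker : LinearMap.ker d ≤ LinearMap.ker f.hom := fun z hz ↦ by
    obtain ⟨w, rfl⟩ := exact_one z congr(($(LinearMap.mem_ker.1 hz)).1)
    exact congr($(hf).hom w)
  obtain ⟨g, hg⟩ := exists_comp_eq_of_ker_le hd hker
  obtain ⟨ψ, hψ⟩ := exists_extend_ker_of_projective hπ hρ h g
  refine ⟨ModuleCat.ofHom ψ, ?_⟩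
  change P.complex.d 1 0 ≫ ModuleCat.ofHom ψ = f
  ext z
  exact (hψ (d z)).trans (LinearMap.congr_fun hg z)

theorem isTorsionFree_quotient_iff {R M : Type*} [CommRing R] [IsDomain R] [AddCommGroup M]
    [Module R M] {A : Submodule R M} :
    Module.IsTorsionFree R (M ⧸ A) ↔ ∀ r : R, r ≠ 0 → ∀ m, r • m ∈ A → m ∈ A := by
  rw [Module.isTorsionFree_iff_smul_eq_zero]
  refine forall_congr' fun r ↦ ?_
  simp_rw [or_iff_not_imp_left, A.mkQ_surjective.forall, ← map_smul, Submodule.mkQ_apply,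
    Submodule.Quotient.mk_eq_zero]
  exact ⟨fun h hr m hm ↦ h m hm hr, fun h m hm hr ↦ h hr m hm⟩

/-- Pontryagin's criterion: every finite subset of the torsion-free module `M` lies in a finitely
generated submodule which is pure, i.e. has a torsion-free quotient. -/
structure HasFGPureHulls (R M : Type*) [CommRing R] [AddCommGroup M] [Module R M] : Prop where
  isTorsionFree : Module.IsTorsionFree R M
  exists_fg : ∀ s : Finset M, ∃ A : Submodule R M,
    A.FG ∧ (s : Set M) ⊆ A ∧ Module.IsTorsionFree R (M ⧸ A)

namespace IsKappaFree

variable {R M : Type u} [CommRing R] [AddCommGroup M] [Module R M] {κ : Cardinal.{u}}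

theorem submodule (h : IsKappaFree R M κ) (B : Submodule R M) : IsKappaFree R B κ := fun S hS ↦ by
  have := h (B.subtype '' S) (mk_image_le.trans_lt hS)
  rw [← Submodule.map_span] at this
  exact .of_equiv (Submodule.equivMapOfInjective _ B.injective_subtype (.span R S)).symm

theorem isTorsionFree [IsDomain R] (h : IsKappaFree R M (aleph 1)) : Module.IsTorsionFree R M := by
  refine .of_smul_eq_zero fun r m hrm ↦ ?_
  have := h {m} (by simp)
  let m' : Submodule.span R {m} := ⟨m, Submodule.mem_span_singleton_self m⟩
  have hrm' : r • m' = 0 := Subtype.ext hrm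
  exact (smul_eq_zero.1 hrm').imp_right (congrArg Subtype.val)

theorem isNoetherian_of_rank_lt_aleph0 [IsDomain R] [IsNoetherianRing R]
    (h : IsKappaFree R M (aleph 1)) (hM : Module.rank R M < ℵ₀) : IsNoetherian R M := by
  rw [isNoetherian_iff_fg_wellFounded, wellFoundedGT_iff_monotone_chain_condition]
  intro a
  choose G hG using fun n ↦ (a n).2
  let U : Submodule R M := .span R (⋃ n, G n)
  have hU : U = ⨆ n, (a n).1 := by simp_rw [U, Submodule.span_iUnion, hG]
  have : Module.Free R U := h _ <| lt_aleph_one_iff.2 <| le_aleph0_iff_set_countable.2 <|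
    Set.countable_iUnion fun n ↦ (G n).countable_toSet
  have hU_fg : U.FG := by
    rw [← Module.Finite.iff_fg, ← Module.rank_lt_aleph0_iff]
    exact (Submodule.rank_le U).trans_lt hM
  obtain ⟨n, hn⟩ : ∃ n, U ≤ (a n).1 := by
    simpa using (CompleteLattice.isCompactElement_iff_le_of_directed_sSup_le _ _).1
      (Submodule.fg_iff_compact _ |>.1 hU_fg) _ (Set.range_nonempty fun n ↦ (a n).1)
      (directedOn_range.2 (a.monotone.directed_le (f := fun n ↦ a n))) hU.le
  refine ⟨n, fun m hnm ↦ le_antisymm (a.monotone hnm) ?_⟩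
  exact (le_iSup (fun n ↦ (a n).1) m).trans (hU.ge.trans hn)

-- The pure hull `B` of a finite set `s` has the same rank as its span.
theorem hasFGPureHulls [IsDomain R] [IsNoetherianRing R] (h : IsKappaFree R M (aleph 1)) :
    HasFGPureHulls R M where
  isTorsionFree := h.isTorsionFree
  exists_fg s := by
    let A : Submodule R M := .span R s
    let B : Submodule R M := (Submodule.torsion R (M ⧸ A)).comap A.mkQ
    have mem_B {m : M} : m ∈ B ↔ ∃ r : R, r ≠ 0 ∧ r • m ∈ A := by
      simp [B, ← Submodule.Quotient.mk_smul]
    have hAB : A ≤ B := fun m hm ↦ mem_B.2 ⟨1, one_ne_zero, by rwa [one_smul]⟩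
    refine ⟨B, ?_, Submodule.subset_span.trans hAB, isTorsionFree_quotient_iff.2 ?_⟩
    · have hquot : Module.rank R (B ⧸ A.submoduleOf B) = 0 := by
        refine rank_eq_zero_iff.2 fun b ↦ ?_
        obtain ⟨b, rfl⟩ := Submodule.mkQ_surjective _ b
        obtain ⟨r, hr, hrb⟩ := mem_B.1 b.2
        refine ⟨r, hr, ?_⟩
        rw [← map_smul, Submodule.mkQ_apply, Submodule.Quotient.mk_eq_zero]
        exact hrb
      have hA : Module.rank R (A.submoduleOf B) < ℵ₀ := by
        rw [(Submodule.submoduleOfEquivOfLe hAB).rank_eq]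
        exact Module.rank_lt_aleph0 R A
      have := (h.submodule B).isNoetherian_of_rank_lt_aleph0 <| by
        rwa [← rank_quotient_add_rank_of_isDomain (A.submoduleOf B), hquot, zero_add]
      exact Module.Finite.iff_fg.1 inferInstance
    · intro r hr m hm
      obtain ⟨q, hq, hqm⟩ := mem_B.1 hm
      exact mem_B.2 ⟨q * r, mul_ne_zero hq hr, by rwa [mul_smul]⟩

end IsKappaFree

open DirectSum in
theorem exists_fg_directSum_mem_iff {R T : Type*} [Ring R] {M : T → Type*}
    [∀ t, AddCommGroup (M t)] [∀ t, Module R (M t)] {A : ∀ t, Submodule R (M t)}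
    (hA : ∀ t, (A t).FG) {S : Finset T} (hS : ∀ t ∉ S, A t = ⊥) :
    ∃ D : Submodule R (⨁ t, M t), D.FG ∧ ∀ m, m ∈ D ↔ ∀ t, m t ∈ A t := by
  classical
  refine ⟨⨆ t ∈ S, (A t).map (lof R T M t), Submodule.fg_biSup _ _ fun t _ ↦ (hA t).map _,
    fun m ↦ ⟨fun hm t ↦ ?_, fun hm ↦ ?_⟩⟩
  · have hle : ⨆ i ∈ S, (A i).map (lof R T M i) ≤ (A t).comap (component R T M t) :=
      iSup₂_le fun i _ ↦ Submodule.map_le_iff_le_comap.2 fun x hx ↦ by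
        obtain rfl | hi := eq_or_ne i t
        · simpa [component.of] using hx
        · simp [component.of, hi]
    exact hle hm
  · rw [← sum_support_of m]
    refine sum_mem fun t ht ↦ Submodule.mem_iSup_of_mem t <| Submodule.mem_iSup_of_mem ?_ <|
      Submodule.mem_map_of_mem (hm t)
    by_contra htS
    have hmt : m t ∈ (⊥ : Submodule R (M t)) := hS t htS ▸ hm t
    exact DFinsupp.mem_support_iff.1 ht hmt

namespace HasFGPureHulls

open TensorProduct DirectSum

theorem of_injective_liftBaseChange {A B N M : Type*} [CommRing A] [IsDomain A] [CommRing B]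
    [IsDomain B] [IsNoetherianRing B] [Algebra A B] [Module.FaithfullyFlat A B] [AddCommGroup N]
    [Module A N] [AddCommGroup M] [Module A M] [Module B M] [IsScalarTower A B M]
    (h : HasFGPureHulls B M) {j : N →ₗ[A] M} (hj : Function.Injective (j.liftBaseChange B)) :
    HasFGPureHulls A N where
  isTorsionFree := by
    have := h.isTorsionFree
    have : Module.IsTorsionFree A M := .trans_faithfulSMul A B M
    have hj' : Function.Injective j := by
      simpa [Function.comp_def] using
        hj.comp (Module.FaithfullyFlat.tensorProduct_mk_injective (A := A) (B := B) N)
    exact hj'.moduleIsTorsionFree _ j.map_smul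
  exists_fg s := by
    classical
    obtain ⟨C, hC, hsC, hMC⟩ := h.exists_fg (s.image j)
    rw [isTorsionFree_quotient_iff] at hMC
    let A' : Submodule A N := (C.restrictScalars A).comap j
    have hbase : ∀ x, j.liftBaseChange B (A'.subtype.baseChange B x) ∈ C := fun x ↦ by
      induction x with
      | zero => simp
      | add x y hx hy => simpa using add_mem hx hy
      | tmul b x => simpa using C.smul_mem b x.2
    have hinj : Function.Injective
        (((j.liftBaseChange B) ∘ₗ A'.subtype.baseChange B).codRestrict C hbase) :=
      Function.Injective.codRestrict _ <| hj.comp <|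
        Module.Flat.lTensor_preserves_injective_linearMap _ A'.injective_subtype
    have : Module.Finite B C := .of_fg hC
    have : Module.Finite B (B ⊗[A] A') := .of_injective _ hinj
    have : Module.Finite A A' := .of_finite_tensorProduct_of_faithfullyFlat B
    refine ⟨A', Module.Finite.iff_fg.1 this, fun x hx ↦ ?_,
      isTorsionFree_quotient_iff.2 fun r hr m hm ↦ ?_⟩
    · exact hsC (Finset.mem_coe.2 (Finset.mem_image_of_mem j hx))
    · refine hMC (algebraMap A B r) (by simpa) _ ?_
      rw [algebraMap_smul, ← map_smul]
      exact hm

theorem of_ker_eq_span {A B I M : Type*} [CommRing A] [IsDomain A] [CommRing B] [IsDomain B]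
    [IsNoetherianRing B] [Algebra A B] [Module.FaithfullyFlat A B] [AddCommGroup M] [Module A M]
    [Module B M] [IsScalarTower A B M] (h : HasFGPureHulls B M) (π : (I →₀ B) →ₗ[B] M)
    (K : Submodule A (I →₀ A))
    (hK : LinearMap.ker π =
      .span B (Finsupp.mapRange.linearMap (Algebra.linearMap A B) '' (K : Set (I →₀ A)))) :
    HasFGPureHulls A ((I →₀ A) ⧸ K) := by
  let ι : (I →₀ A) →ₗ[A] (I →₀ B) := Finsupp.mapRange.linearMap (Algebra.linearMap A B)
  have hιK : K ≤ LinearMap.ker (π.restrictScalars A ∘ₗ ι) := fun f hf ↦ by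
    have : ι f ∈ LinearMap.ker π := hK ▸ Submodule.subset_span (Set.mem_image_of_mem ι hf)
    exact this
  classical
  let e : B ⊗[A] (I →₀ A) ≃ₗ[B] (I →₀ B) := finsuppScalarRight A B B I
  have he : ∀ f, e (1 ⊗ₜ f) = ι f := fun f ↦ by ext i; simp [e, ι, Algebra.smul_def]
  let L : (I →₀ B) →ₗ[B] B ⊗[A] ((I →₀ A) ⧸ K) := K.mkQ.baseChange B ∘ₗ e.symm.toLinearMap
  have hL : Function.Surjective L :=
    (LinearMap.lTensor_surjective B K.mkQ_surjective).comp e.symm.surjective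
  have hπL : LinearMap.ker π ≤ LinearMap.ker L := by
    rw [hK, Submodule.span_le]
    rintro _ ⟨f, hf, rfl⟩
    have : L (ι f) = 1 ⊗ₜ K.mkQ f := by simp [L, ← he]
    rw [SetLike.mem_coe, LinearMap.mem_ker, this, Submodule.mkQ_apply,
      (Submodule.Quotient.mk_eq_zero K).2 hf, tmul_zero]
  let j : ((I →₀ A) ⧸ K) →ₗ[A] M := K.liftQ _ hιK
  have hj : j.liftBaseChange B ∘ₗ L = π := by
    ext i
    simp [L, j, e, ι]
  refine h.of_injective_liftBaseChange (j := j) ?_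
  refine (injective_iff_map_eq_zero _).2 fun x hx ↦ ?_
  obtain ⟨f, rfl⟩ := hL x
  exact hπL <| (LinearMap.congr_fun hj f).symm.trans hx

theorem directSum {R T : Type*} [CommRing R] [IsDomain R] {M : T → Type*}
    [∀ t, AddCommGroup (M t)] [∀ t, Module R (M t)] (h : ∀ t, HasFGPureHulls R (M t)) :
    HasFGPureHulls R (⨁ t, M t) where
  isTorsionFree := by
    have := fun t ↦ (h t).isTorsionFree
    refine .of_smul_eq_zero fun r m hrm ↦ or_iff_not_imp_left.2 fun hr ↦ DFinsupp.ext fun t ↦ ?_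
    have hrmt : r • m t = 0 := DFunLike.congr_fun hrm t
    exact (smul_eq_zero_iff_right hr).1 hrmt
  exists_fg s := by
    classical
    let S : Finset T := s.biUnion fun m ↦ m.support
    have hull : ∀ t, ∃ A : Submodule R (M t), A.FG ∧ (∀ m ∈ s, m t ∈ A) ∧
        Module.IsTorsionFree R (M t ⧸ A) ∧ (t ∉ S → A = ⊥) := fun t ↦ by
      by_cases ht : t ∈ S
      · obtain ⟨A, hA, hsA, hMA⟩ := (h t).exists_fg (s.image (· t))
        exact ⟨A, hA, fun m hm ↦ hsA (Finset.mem_coe.2 (Finset.mem_image_of_mem (· t) hm)), hMA,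
          fun h ↦ (h ht).elim⟩
      · have := (h t).isTorsionFree
        refine ⟨⊥, Submodule.fg_bot, fun m hm ↦ ?_, ?_, fun _ ↦ rfl⟩
        · simpa using fun hmt ↦ ht (Finset.mem_biUnion.2 ⟨m, hm, DFinsupp.mem_support_iff.2 hmt⟩)
        · exact isTorsionFree_quotient_iff.2 fun r hr m hm ↦ (smul_eq_zero_iff_right hr).1 hm
    choose A hA hsA hMA hA_bot using hull
    obtain ⟨D, hD, mem_D⟩ := exists_fg_directSum_mem_iff hA hA_bot
    refine ⟨D, hD, fun m hm ↦ (mem_D m).2 fun t ↦ hsA t m hm,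
      isTorsionFree_quotient_iff.2 fun r hr m hm ↦ (mem_D m).2 fun t ↦ ?_⟩
    exact isTorsionFree_quotient_iff.1 (hMA t) r hr _ ((mem_D _).1 hm t)

end HasFGPureHulls

/-! ### Generic functionals with values in a field -/

section AlgebraicIndependence

variable {K L W ι : Type*}

theorem algebraicIndependent_comp_basis_iff [CommRing K] [CommRing L] [Algebra K L]
    [AddCommGroup W] [Module K W] (b : Module.Basis ι K W) (θ : W →ₗ[K] L) :
    AlgebraicIndependent K (θ ∘ b) ↔ Function.Injective (SymmetricAlgebra.lift θ) := by
  have hlift : SymmetricAlgebra.lift θ = (MvPolynomial.aeval (θ ∘ b)).comp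
      (SymmetricAlgebra.equivMvPolynomial b).toAlgHom := by
    refine SymmetricAlgebra.algHom_ext (b.ext fun i ↦ ?_)
    simp
  rw [algebraicIndependent_iff_injective_aeval, hlift]
  exact (EquivLike.injective_comp (SymmetricAlgebra.equivMvPolynomial b) _).symm

theorem algebraicIndependent_comp_of_linearIndependent [Field K] [CommRing L] [Algebra K L]
    [AddCommGroup W] [Module K W] {ι' : Type*} {b : Module.Basis ι K W} {θ : W →ₗ[K] L}
    (h : AlgebraicIndependent K (θ ∘ b)) {w : ι' → W} (hw : LinearIndependent K w) :
    AlgebraicIndependent K (θ ∘ w) := by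
  let b' := Module.Basis.extend hw.linearIndepOn_id
  have hb' : AlgebraicIndependent K (θ ∘ b') := by
    rwa [algebraicIndependent_comp_basis_iff, ← algebraicIndependent_comp_basis_iff b]
  let e (i : ι') : hw.linearIndepOn_id.extend (Set.subset_univ _) :=
    ⟨w i, hw.linearIndepOn_id.subset_extend _ ⟨i, rfl⟩⟩
  have he : Function.Injective e := fun i j hij ↦ hw.injective (congrArg Subtype.val hij)
  simpa [b', Function.comp_def, e] using hb'.comp e he

theorem algebraicIndependent_algebraMap_add [CommRing K] [CommRing L] [Algebra K L] {x : ι → L}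
    (h : AlgebraicIndependent K x) (c : ι → K) :
    AlgebraicIndependent K fun i ↦ algebraMap K L (c i) + x i := by
  let shift (c : ι → K) : MvPolynomial ι K →ₐ[K] MvPolynomial ι K :=
    MvPolynomial.aeval fun i ↦ MvPolynomial.C (c i) + MvPolynomial.X i
  have hshift : Function.Injective (shift c) := by
    have : (shift (-c)).comp (shift c) = AlgHom.id K _ := by
      ext i : 1
      simp [shift, ← add_assoc, MvPolynomial.algHom_C]
    exact Function.LeftInverse.injective (g := shift (-c)) (DFunLike.congr_fun this)
  have haeval : (MvPolynomial.aeval x).comp (shift c) =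
      MvPolynomial.aeval fun i ↦ algebraMap K L (c i) + x i := by
    ext i : 1
    simp [shift]
  rw [algebraicIndependent_iff_injective_aeval] at h ⊢
  rw [← haeval]
  exact h.comp hshift

theorem exists_algebraicIndependent_of_lt_mk {k J : Type u} [Field k] {K : Subfield k}
    {μ : Cardinal.{u}} (hμ : ℵ₀ ≤ μ) (hK : #K ≤ μ) (hk : μ < #k) (hJ : #J ≤ μ) :
    ∃ y : J → k, AlgebraicIndependent K y := by
  obtain ⟨s, hs⟩ := exists_isTranscendenceBasis K k
  have hμs : μ < #s := by
    by_contra! hsμ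
    have hadjoin : #(Algebra.adjoin K s) ≤ μ :=
      (Algebra.cardinalMk_adjoin_le K s).trans (max_le (max_le hK hsμ) hμ)
    have := hs.isAlgebraic
    rw [Subtype.range_coe] at this
    exact hk.not_ge ((Algebra.IsAlgebraic.cardinalMk_le_max (Algebra.adjoin K s) k).trans
      (max_le hadjoin hμ))
  obtain ⟨e⟩ := hJ.trans hμs.le
  exact ⟨fun j ↦ e j, hs.1.comp e e.injective⟩

end AlgebraicIndependence

section FieldFunctionals

open TensorProduct

variable {R k M : Type*} [CommRing R] [IsDomain R] [IsPrincipalIdealRing R] [Field k]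
  [AddCommGroup M] [Module R M] {ρ : R →+* k}

theorem baseChange_subtype_injective (k : Type*) [CommRing k] [Algebra R k] (A : Submodule R M)
    [Module.IsTorsionFree R (M ⧸ A)] : Function.Injective (A.subtype.baseChange k) :=
  LinearMap.lTensor_injective_of_exact_of_flat A.mkQ A.mkQ_surjective A.subtype
    A.injective_subtype (LinearMap.exact_subtype_mkQ A) k

theorem exists_extend_semilinearMap (A : Submodule R M) [Module.IsTorsionFree R (M ⧸ A)]
    (φ : A →ₛₗ[ρ] k) : ∃ χ : M →ₛₗ[ρ] k, ∀ x : A, χ x = φ x := by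
  algebraize [ρ]
  let φ' : A →ₗ[R] k := { φ with }
  obtain ⟨l, hl⟩ := LinearMap.exists_leftInverse_of_injective (A.subtype.baseChange k)
    (LinearMap.ker_eq_bot.2 (baseChange_subtype_injective k A))
  let χ : M →ₗ[R] k := (φ'.liftBaseChange k ∘ₗ l).restrictScalars R ∘ₗ TensorProduct.mk R k M 1
  have hχ : ∀ x : A, χ x = φ x := fun x ↦ by
    have := LinearMap.congr_fun hl (1 ⊗ₜ[R] x)
    simp only [LinearMap.comp_apply, LinearMap.baseChange_tmul, Submodule.subtype_apply,
      LinearMap.id_apply] at this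
    simp [χ, φ', this]
  exact ⟨{ χ with map_smul' := χ.map_smul }, hχ⟩

/-- A semilinear functional `χ : M → k` is generic over the subfield `K` if it maps bases of pure
submodules of `M` to algebraically independent families over `K`. -/
def IsGeneric (K : Subfield k) (χ : M →ₛₗ[ρ] k) : Prop :=
  ∀ A : Submodule R M, Module.IsTorsionFree R (M ⧸ A) →
    ∀ (n : ℕ) (β : Module.Basis (Fin n) R A), AlgebraicIndependent K fun i ↦ χ (β i)

theorem exists_isGeneric {K : Subfield k} (hρ : ∀ r, ρ r ∈ K) {y : M → k}
    (hy : AlgebraicIndependent K y) : ∃ χ : M →ₛₗ[ρ] k, IsGeneric K χ := by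
  let ρK : R →+* K := ρ.codRestrict K hρ
  algebraize [ρK]
  have hspan : ⊤ ≤ Submodule.span K (Set.range fun m : M ↦ (1 : K) ⊗ₜ[R] m) := by
    rw [← Submodule.baseChange_top, Submodule.baseChange_eq_span, Submodule.map_top]
    rfl
  let b := Module.Basis.ofSpan hspan
  have hb : ∀ i, ∃ m : M, (1 : K) ⊗ₜ[R] m = b i := fun i ↦
    Module.Basis.ofSpan_subset hspan ⟨i, rfl⟩
  choose m hm using hb
  have hm_inj : Function.Injective m := fun i j hij ↦ b.injective (by rw [← hm, ← hm, hij])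
  let θ : K ⊗[R] M →ₗ[K] k := b.constr K (y ∘ m)
  have hθ : AlgebraicIndependent K (θ ∘ b) := by
    simpa [θ, Function.comp_def] using hy.comp m hm_inj
  let χ : M →ₛₗ[ρ] k :=
    { toFun := fun x ↦ θ (1 ⊗ₜ x)
      map_add' := fun x y ↦ by rw [tmul_add, map_add]
      map_smul' := fun r x ↦ by
        rw [tmul_smul, ← algebraMap_smul K, map_smul, Algebra.smul_def]
        rfl }
  refine ⟨χ, fun A hA n β ↦ algebraicIndependent_comp_of_linearIndependent hθ ?_⟩
  simpa [Function.comp_def] using (β.baseChange K).linearIndependent.map' _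
    (LinearMap.ker_eq_bot.2 (baseChange_subtype_injective K A))

end FieldFunctionals

/-! ### Division-closed subrings of power series rings -/

open PowerSeries

section DivisionClosed

variable {k : Type*} [Field k]

/-- A subring of `k⟦X⟧` that contains `X` and is closed under those divisions that are possible
in `k⟦X⟧`. -/
structure IsDivisionClosed (R : Subring k⟦X⟧) : Prop where
  X_mem : X ∈ R
  mem_of_mul_mem : ∀ ⦃t r : k⟦X⟧⦄, t ∈ R → t ≠ 0 → t * r ∈ R → r ∈ R

/-- The map from a subring of `k⟦X⟧` to the residue field `k`. -/
noncomputable abbrev residue (R : Subring k⟦X⟧) : R →+* k := constantCoeff.comp R.subtype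

/-- Reduction modulo `X`, semilinear over the map from a subring of `k⟦X⟧` to the residue field. -/
noncomputable def residueMap (R : Subring k⟦X⟧) : k⟦X⟧ →ₛₗ[residue R] k where
  toFun := constantCoeff
  map_add' := map_add _
  map_smul' r v := map_mul constantCoeff (r : k⟦X⟧) v

@[simp]
theorem residueMap_apply (R : Subring k⟦X⟧) (v : k⟦X⟧) : residueMap R v = constantCoeff v := rfl

theorem eq_zero_of_forall_X_pow_dvd {v : k⟦X⟧} (h : ∀ n, X ^ n ∣ v) : v = 0 := by
  ext n
  exact X_pow_dvd_iff.1 (h (n + 1)) n n.lt_succ_self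

namespace IsDivisionClosed

variable {R S : Subring k⟦X⟧}

/-- The indeterminate as an element of a division-closed subring. -/
noncomputable def unif (hR : IsDivisionClosed R) : R := ⟨X, hR.X_mem⟩

@[simp]
theorem coe_unif (hR : IsDivisionClosed R) : (hR.unif : k⟦X⟧) = X := rfl

theorem isLocalHom_subtype (hR : IsDivisionClosed R) : IsLocalHom R.subtype where
  map_nonunit r hr := by
    obtain ⟨v, hv⟩ := hr.exists_right_inv
    refine .of_mul_eq_one ⟨v, hR.mem_of_mul_mem r.2 hr.ne_zero ?_⟩ (Subtype.ext hv)
    exact hv ▸ one_mem R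

theorem irreducible_unif (hR : IsDivisionClosed R) : Irreducible hR.unif := by
  have := hR.isLocalHom_subtype
  exact .of_map (f := R.subtype) X_irreducible

theorem isDiscreteValuationRing (hR : IsDivisionClosed R) : IsDiscreteValuationRing R := by
  have := hR.isLocalHom_subtype
  refine .ofHasUnitMulPowIrreducibleFactorization ⟨hR.unif, hR.irreducible_unif, fun {r} hr ↦ ?_⟩
  obtain ⟨n, v, hv⟩ := IsDiscreteValuationRing.associated_pow_irreducible
    (Subtype.coe_ne_coe.2 hr) (X_irreducible (R := k))
  have hv' : (X : k⟦X⟧) ^ n * ↑v⁻¹ = r := by rw [← hv, Units.mul_inv_cancel_right]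
  have hvR : ↑v⁻¹ ∈ R :=
    hR.mem_of_mul_mem (pow_mem hR.X_mem n) (pow_ne_zero n X_ne_zero) (hv' ▸ r.2)
  have hunit : IsUnit (⟨_, hvR⟩ : R) := .of_map R.subtype _ (v⁻¹).isUnit
  exact ⟨n, hunit.unit, Subtype.ext hv'⟩

theorem unif_pow_dvd_iff (hR : IsDivisionClosed R) {n : ℕ} {r : R} :
    hR.unif ^ n ∣ r ↔ (X : k⟦X⟧) ^ n ∣ r := by
  refine ⟨map_dvd R.subtype, fun ⟨v, hv⟩ ↦ ?_⟩
  have hvR : v ∈ R := hR.mem_of_mul_mem (pow_mem hR.X_mem n) (pow_ne_zero n X_ne_zero) (hv ▸ r.2)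
  exact ⟨⟨v, hvR⟩, Subtype.ext hv⟩

theorem faithfullyFlat_inclusion (hS : IsDivisionClosed S) (hR : IsDivisionClosed R) (h : S ≤ R) :
    (Subring.inclusion h).FaithfullyFlat := by
  algebraize [Subring.inclusion h]
  have := hS.isDiscreteValuationRing
  have := hR.isDiscreteValuationRing
  have : IsLocalHom (R.subtype.comp (algebraMap S R)) := hS.isLocalHom_subtype
  have : IsLocalHom (algebraMap S R) := isLocalHom_of_comp _ R.subtype
  have : FaithfulSMul S R := (faithfulSMul_iff_algebraMap_injective S R).2
    (Subring.inclusion_injective h)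
  exact Module.FaithfullyFlat.of_flat_of_isLocalHom

end IsDivisionClosed

end DivisionClosed

section ExtendFunctionals

variable {k : Type*} [Field k] {R : Subring k⟦X⟧} {F : Type*} [AddCommGroup F] [Module R F]

theorem exists_linearMap_sum_X_pow (l : ℕ → F →ₗ[R] k⟦X⟧) :
    ∃ ψ : F →ₗ[R] k⟦X⟧, ∀ n f, X ^ n ∣ ψ f - ∑ i ∈ Finset.range n, X ^ i * l i f := by
  let σ (n : ℕ) : F →ₗ[R] k⟦X⟧ :=
    ∑ i ∈ Finset.range n, LinearMap.mulLeft R ((X : k⟦X⟧) ^ i) ∘ₗ l i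
  let ψ (f : F) : k⟦X⟧ := .mk fun n ↦ coeff n (σ (n + 1) f)
  have hcoeff : ∀ i n, i < n → ∀ f, coeff i (σ n f) = coeff i (σ (i + 1) f) := fun i n hin f ↦ by
    induction n, (hin : i + 1 ≤ n) using Nat.le_induction with
    | base => rfl
    | succ n hin ih =>
      have hσ : σ (n + 1) f = σ n f + X ^ n * l n f := by simp [σ, Finset.sum_range_succ]
      rw [hσ, map_add, coeff_X_pow_mul', if_neg (Nat.not_le.2 hin), add_zero, ih]
  have hψ : ∀ n f, X ^ n ∣ ψ f - σ n f := fun n f ↦ X_pow_dvd_iff.2 fun i hi ↦ by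
    rw [map_sub, coeff_mk, hcoeff i n hi, sub_self]
  refine ⟨{ toFun := ψ, map_add' := fun f g ↦ ?_, map_smul' := fun r f ↦ ?_ }, fun n f ↦ ?_⟩
  · refine sub_eq_zero.1 (eq_zero_of_forall_X_pow_dvd fun n ↦ ?_)
    convert dvd_sub (hψ n (f + g)) (dvd_add (hψ n f) (hψ n g)) using 1
    rw [map_add]
    ring
  · refine sub_eq_zero.1 (eq_zero_of_forall_X_pow_dvd fun n ↦ ?_)
    convert dvd_sub (hψ n (r • f)) (dvd_mul_of_dvd_right (hψ n f) (r : k⟦X⟧)) using 1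
    rw [map_smul, RingHom.id_apply, Subring.smul_def, Subring.smul_def, smul_eq_mul, smul_eq_mul]
    ring
  · simpa [σ] using hψ n f

theorem exists_linearMap_mul_X (φ : F →ₗ[R] k⟦X⟧) (h : ∀ f, constantCoeff (φ f) = 0) :
    ∃ φ' : F →ₗ[R] k⟦X⟧, ∀ f, φ f = X * φ' f := by
  choose φ' hφ' using fun f ↦ X_dvd_iff.2 (h f)
  refine ⟨{ toFun := φ', map_add' := fun f g ↦ ?_, map_smul' := fun r f ↦ ?_ }, hφ'⟩ <;>
    apply mul_left_cancel₀ (X_ne_zero (R := k))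
  · rw [mul_add, ← hφ', ← hφ', ← hφ', map_add]
  · rw [RingHom.id_apply, mul_smul_comm, ← hφ', ← hφ', map_smul]

theorem exists_eq_add_X_mul [Module.Free R F] {K : Submodule R F} (φ : K →ₗ[R] k⟦X⟧)
    {χ : F →ₛₗ[residue R] k} (hχ : ∀ x : K, χ x = constantCoeff (φ x)) :
    ∃ (l : F →ₗ[R] k⟦X⟧) (φ' : K →ₗ[R] k⟦X⟧), (∀ f, constantCoeff (l f) = χ f) ∧
      ∀ x : K, φ x = l x + X * φ' x := by
  let b := Module.Free.chooseBasis R F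
  let l : F →ₗ[R] k⟦X⟧ := b.constr R fun i ↦ C (χ (b i))
  have hl : ∀ f, constantCoeff (l f) = χ f := fun f ↦ by
    have : (residueMap R).comp l = χ := b.ext fun i ↦ by simp [l]
    exact congr($this f)
  obtain ⟨φ', hφ'⟩ := exists_linearMap_mul_X (φ - l ∘ₗ K.subtype) fun x ↦ by simp [hl, hχ]
  exact ⟨l, φ', hl, fun x ↦ by simp [← hφ']⟩

theorem exists_extend_powerSeries [Module.Free R F] (hR : IsDivisionClosed R) {K : Submodule R F}
    [Module.IsTorsionFree R (F ⧸ K)] (φ : K →ₗ[R] k⟦X⟧) :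
    ∃ ψ : F →ₗ[R] k⟦X⟧, ∀ x : K, ψ x = φ x := by
  have := hR.isDiscreteValuationRing
  have hstep : ∀ φ : K →ₗ[R] k⟦X⟧, ∃ (l : F →ₗ[R] k⟦X⟧) (φ' : K →ₗ[R] k⟦X⟧),
      ∀ x : K, φ x = l x + X * φ' x := fun φ ↦ by
    obtain ⟨χ, hχ⟩ := exists_extend_semilinearMap K ((residueMap R).comp φ)
    obtain ⟨l, φ', -, hφ'⟩ := exists_eq_add_X_mul φ hχ
    exact ⟨l, φ', hφ'⟩
  choose l next hnext using hstep
  let φs (n : ℕ) : K →ₗ[R] k⟦X⟧ := next^[n] φ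
  obtain ⟨ψ, hψ⟩ := exists_linearMap_sum_X_pow fun n ↦ l (φs n)
  refine ⟨ψ, fun x ↦ sub_eq_zero.1 (eq_zero_of_forall_X_pow_dvd fun n ↦ ?_)⟩
  have hsum : φ x = ∑ i ∈ Finset.range n, X ^ i * l (φs i) x + X ^ n * φs n x := by
    induction n with
    | zero => simp [φs]
    | succ n ih =>
      have hφs : φs n x = l (φs n) x + X * φs (n + 1) x := by
        rw [hnext (φs n) x, ← Function.iterate_succ_apply' next]
      rw [ih, hφs, Finset.sum_range_succ]
      ring
  rw [hsum, ← sub_sub]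
  exact dvd_sub (hψ n x) (dvd_mul_right _ _)

theorem exists_extend_powerSeries_of_residue [Module.Free R F] (hR : IsDivisionClosed R)
    {K : Submodule R F} [Module.IsTorsionFree R (F ⧸ K)] (φ : K →ₗ[R] k⟦X⟧)
    {χ : F →ₛₗ[residue R] k} (hχ : ∀ x : K, χ x = constantCoeff (φ x)) :
    ∃ ψ : F →ₗ[R] k⟦X⟧, (∀ x : K, ψ x = φ x) ∧ ∀ f, constantCoeff (ψ f) = χ f := by
  obtain ⟨l, φ', hl, hφ'⟩ := exists_eq_add_X_mul φ hχ
  obtain ⟨ψ', hψ'⟩ := exists_extend_powerSeries hR φ'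
  have hψ : ∀ f, (l + hR.unif • ψ') f = l f + X * ψ' f := fun f ↦ rfl
  refine ⟨l + hR.unif • ψ', fun x ↦ ?_, fun f ↦ ?_⟩
  · rw [hψ, hψ', ← hφ']
  · rw [hψ, map_add, map_mul, constantCoeff_X, zero_mul, add_zero, hl]

end ExtendFunctionals

section DivisionClosure

variable {k : Type u} [Field k]

/-- The subring of all power series that are quotients of elements of a given subring. -/
def divisionClosure (A : Subring k⟦X⟧) : Subring k⟦X⟧ where
  carrier := {r | ∃ t ∈ A, t ≠ 0 ∧ t * r ∈ A}
  one_mem' := ⟨1, one_mem A, one_ne_zero, by simp⟩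
  zero_mem' := ⟨1, one_mem A, one_ne_zero, by simp⟩
  neg_mem' := by
    rintro r ⟨t, ht, ht0, htr⟩
    exact ⟨t, ht, ht0, by rw [mul_neg]; exact neg_mem htr⟩
  mul_mem' := by
    rintro r r' ⟨t, ht, ht0, htr⟩ ⟨t', ht', ht0', htr'⟩
    refine ⟨t * t', mul_mem ht ht', mul_ne_zero ht0 ht0', ?_⟩
    rw [mul_mul_mul_comm]
    exact mul_mem htr htr'
  add_mem' := by
    rintro r r' ⟨t, ht, ht0, htr⟩ ⟨t', ht', ht0', htr'⟩
    refine ⟨t * t', mul_mem ht ht', mul_ne_zero ht0 ht0', ?_⟩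
    have : t * t' * (r + r') = t' * (t * r) + t * (t' * r') := by ring
    exact this ▸ add_mem (mul_mem ht' htr) (mul_mem ht htr')

variable {A : Subring k⟦X⟧}

theorem le_divisionClosure : A ≤ divisionClosure A :=
  fun r hr ↦ ⟨1, one_mem A, one_ne_zero, by rwa [one_mul]⟩

theorem divisionClosure_mono {B : Subring k⟦X⟧} (h : A ≤ B) :
    divisionClosure A ≤ divisionClosure B :=
  fun _ ⟨t, ht, ht0, htr⟩ ↦ ⟨t, h ht, ht0, h htr⟩

theorem isDivisionClosed_divisionClosure (hX : X ∈ A) : IsDivisionClosed (divisionClosure A) where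
  X_mem := le_divisionClosure hX
  mem_of_mul_mem := by
    rintro t r ⟨u, hu, hu0, hut⟩ ht ⟨v, hv, hv0, hvr⟩
    refine ⟨v * (u * t), mul_mem hv hut, mul_ne_zero hv0 (mul_ne_zero hu0 ht), ?_⟩
    have : v * (u * t) * r = u * (v * (t * r)) := by ring
    exact this ▸ mul_mem hu hvr

theorem mk_divisionClosure_le {μ : Cardinal.{u}} (hμ : ℵ₀ ≤ μ) (hA : #A ≤ μ) :
    #(divisionClosure A) ≤ μ := by
  choose t ht ht0 htr using fun r : divisionClosure A ↦ r.2
  let fraction (r : divisionClosure A) : A × A := (⟨t r, ht r⟩, ⟨t r * r, htr r⟩)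
  have hinj : Function.Injective fraction := fun r r' h ↦ by
    have hden : t r = t r' := congrArg (fun q ↦ (q.1 : k⟦X⟧)) h
    have hnum : t r * r = t r' * r' := congrArg (fun q ↦ (q.2 : k⟦X⟧)) h
    rw [← hden] at hnum
    exact Subtype.ext (mul_left_cancel₀ (ht0 r) hnum)
  calc #(divisionClosure A) ≤ #(A × A) := mk_le_of_injective hinj
    _ = #A * #A := (mul_def A A).symm
    _ ≤ μ * μ := mul_le_mul' hA hA
    _ = μ := mul_eq_self hμ

end DivisionClosure

section Adjoin

variable {k : Type*} [Field k] {R : Subring k⟦X⟧} {k₁ : Subfield k} {ι : Type*} {y : ι → k⟦X⟧}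

theorem C_unif_dvd_of_X_dvd_aeval (hR : IsDivisionClosed R) (hk₁ : ∀ r ∈ R, constantCoeff r ∈ k₁)
    (hy : AlgebraicIndependent k₁ fun i ↦ constantCoeff (y i)) {T : MvPolynomial ι R}
    (hT : X ∣ MvPolynomial.aeval y T) : MvPolynomial.C hR.unif ∣ T := by
  let ρ : R →+* k₁ := (residue R).codRestrict k₁ fun r ↦ hk₁ r r.2
  have hρ : (algebraMap k₁ k).comp ρ = residue R := rfl
  have hmap : T.map ρ = 0 := by
    refine (injective_iff_map_eq_zero _).1 hy _ ?_
    rw [MvPolynomial.aeval_def, MvPolynomial.eval₂_map, hρ, ← X_dvd_iff.1 hT,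
      MvPolynomial.aeval_def, MvPolynomial.hom_eval₂]
    rfl
  refine MvPolynomial.C_dvd_iff_dvd_coeff _ _ |>.2 fun m ↦ ?_
  have hm : constantCoeff ((T.coeff m : R) : k⟦X⟧) = 0 := by
    have := congr(((MvPolynomial.coeff m $hmap : k₁) : k))
    rwa [MvPolynomial.coeff_map] at this
  rw [← pow_one hR.unif, hR.unif_pow_dvd_iff, pow_one]
  exact X_dvd_iff.2 hm

theorem C_unif_pow_dvd_of_X_pow_dvd_aeval (hR : IsDivisionClosed R)
    (hk₁ : ∀ r ∈ R, constantCoeff r ∈ k₁)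
    (hy : AlgebraicIndependent k₁ fun i ↦ constantCoeff (y i)) {n : ℕ} {T : MvPolynomial ι R}
    (hT : X ^ n ∣ MvPolynomial.aeval y T) : MvPolynomial.C (hR.unif ^ n) ∣ T := by
  induction n generalizing T with
  | zero => simp
  | succ n ih =>
    obtain ⟨T', rfl⟩ :=
      C_unif_dvd_of_X_dvd_aeval hR hk₁ hy ((dvd_pow_self _ n.succ_ne_zero).trans hT)
    have haeval : MvPolynomial.aeval y (MvPolynomial.C hR.unif * T') =
        X * MvPolynomial.aeval y T' := by
      rw [map_mul, MvPolynomial.aeval_C]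
      rfl
    rw [haeval, pow_succ', mul_dvd_mul_iff_left X_ne_zero] at hT
    rw [pow_succ', map_mul]
    exact mul_dvd_mul_left _ (ih hT)

theorem notMem_divisionClosure_adjoin_range (hR : IsDivisionClosed R) {b : k⟦X⟧} (hb : b ∉ R)
    (hlim : ∀ n, ∃ c ∈ R, X ^ n ∣ b - c) (hk₁ : ∀ r ∈ R, constantCoeff r ∈ k₁)
    (hy : AlgebraicIndependent k₁ fun i ↦ constantCoeff (y i)) :
    b ∉ divisionClosure (Algebra.adjoin R (Set.range y)).toSubring := by
  rintro ⟨t, ht, ht0, htb⟩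
  rw [Subalgebra.mem_toSubring, Algebra.adjoin_range_eq_range_aeval] at ht htb
  obtain ⟨Q, rfl⟩ := ht
  obtain ⟨P, hP⟩ := htb
  simp only [AlgHom.toRingHom_eq_coe, RingHom.coe_coe] at ht0 hP
  obtain ⟨m, hm⟩ := MvPolynomial.ne_zero_iff.1 (ne_of_apply_ne _ (ht0.trans_eq (map_zero _).symm))
  -- Comparing coefficients in `Q(y) b = P(y)` shows that `b` is the quotient `Pₘ / Qₘ` in `R`.
  have hcoeff : ((Q.coeff m : R) : k⟦X⟧) * b = P.coeff m := by
    refine sub_eq_zero.1 (eq_zero_of_forall_X_pow_dvd fun n ↦ ?_)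
    obtain ⟨c, hc, hbc⟩ := hlim n
    have haeval : MvPolynomial.aeval y (P - MvPolynomial.C ⟨c, hc⟩ * Q) =
        MvPolynomial.aeval y Q * (b - c) := by
      rw [map_sub, map_mul, MvPolynomial.aeval_C, hP, mul_sub, mul_comm (algebraMap _ _ _)]
      rfl
    have hdvd := C_unif_pow_dvd_of_X_pow_dvd_aeval hR hk₁ hy
      (haeval ▸ dvd_mul_of_dvd_right hbc _)
    rw [MvPolynomial.C_dvd_iff_dvd_coeff] at hdvd
    have hdvd_m := hR.unif_pow_dvd_iff.1 (hdvd m)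
    rw [MvPolynomial.coeff_sub, MvPolynomial.coeff_C_mul, AddSubgroupClass.coe_sub, Subring.coe_mul]
      at hdvd_m
    convert dvd_sub (dvd_mul_of_dvd_right hbc ((Q.coeff m : R) : k⟦X⟧)) hdvd_m using 1
    ring
  refine hb (hR.mem_of_mul_mem (Q.coeff m).2 (fun h ↦ hm (Subtype.ext h)) ?_)
  rw [hcoeff]
  exact (P.coeff m).2

theorem exists_finset_mem_adjoin {R A : Type*} [CommSemiring R] [CommSemiring A] [Algebra R A]
    {Y : Set A} {x : A} (hx : x ∈ Algebra.adjoin R Y) :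
    ∃ s : Finset A, (s : Set A) ⊆ Y ∧ x ∈ Algebra.adjoin R (s : Set A) := by
  classical
  rw [Algebra.adjoin_eq_range] at hx
  obtain ⟨P, rfl⟩ := hx
  refine ⟨P.vars.image Subtype.val, by simp, ?_⟩
  have := Subalgebra.mem_map.2
    ⟨P, P.mem_supported_vars, (rfl : MvPolynomial.aeval (Subtype.val : Y → A) P = _)⟩
  rw [MvPolynomial.supported, AlgHom.map_adjoin, Set.image_image] at this
  simpa using this

theorem notMem_divisionClosure_adjoin_of_forall_finset {b : k⟦X⟧} {Y : Set k⟦X⟧}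
    (hb : ∀ s : Finset k⟦X⟧, (s : Set k⟦X⟧) ⊆ Y →
      b ∉ divisionClosure (Algebra.adjoin R (s : Set k⟦X⟧)).toSubring) :
    b ∉ divisionClosure (Algebra.adjoin R Y).toSubring := by
  classical
  rintro ⟨t, ht, ht0, htb⟩
  obtain ⟨s, hs, hst⟩ := exists_finset_mem_adjoin (R := R) ht
  obtain ⟨s', hs', hst'⟩ := exists_finset_mem_adjoin (R := R) htb
  refine hb (s ∪ s') (by simp [hs, hs']) ⟨t, ?_, ht0, ?_⟩
  · exact Algebra.adjoin_mono (by simp) hst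
  · exact Algebra.adjoin_mono (by simp) hst'

end Adjoin

section AdjoinFunctional

variable {k : Type*} [Field k] {R : Subring k⟦X⟧} {k₁ : Subfield k} {F N : Type*}
  [AddCommGroup F] [Module R F] [AddCommGroup N] [Module R N] {Ψ : F →ₗ[R] k⟦X⟧} {π : F →ₗ[R] N}
  {χ : N →ₛₗ[residue R] k}

theorem IsGeneric.exists_map_mem_adjoin_range (hχ : IsGeneric k₁ χ) (hR : IsDivisionClosed R)
    [Module.IsTorsionFree R N] (hπ : Function.Surjective π)
    (hΨπ : ∀ f, π f = 0 → Ψ f ∈ R) (hΨχ : ∀ f, constantCoeff (Ψ f) - χ (π f) ∈ k₁)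
    {A : Submodule R N} (hA : A.FG) (hNA : Module.IsTorsionFree R (N ⧸ A)) :
    ∃ (n : ℕ) (y : Fin n → k⟦X⟧), AlgebraicIndependent k₁ (fun i ↦ constantCoeff (y i)) ∧
      ∀ f, π f ∈ A → Ψ f ∈ Algebra.adjoin R (Set.range y) := by
  have := hR.isDiscreteValuationRing
  have : Module.Finite R A := .of_fg hA
  let β := Module.finBasis R A
  choose g hg using fun i ↦ hπ (β i)
  refine ⟨_, fun i ↦ Ψ (g i), ?_, fun f hf ↦ ?_⟩
  · convert algebraicIndependent_algebraMap_add (hχ A hNA _ β) fun i ↦ ⟨_, hΨχ (g i)⟩ using 2 with i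
    rw [← hg]
    exact (sub_add_cancel _ _).symm
  · let h := ∑ i, β.repr ⟨π f, hf⟩ i • g i
    have hh : π h = π f := by
      have hβ : ∑ i, β.repr ⟨π f, hf⟩ i • (β i : N) = π f := by
        simpa only [Submodule.coe_sum, Submodule.coe_smul] using
          congrArg Subtype.val (β.sum_repr ⟨π f, hf⟩)
      simpa only [h, map_sum, map_smul, hg]
    have hfh : Ψ f = Ψ h + Ψ (f - h) := by rw [← map_add, add_sub_cancel]
    rw [hfh]
    refine add_mem ?_ (Subalgebra.algebraMap_mem _ (⟨_, hΨπ (f - h) (by simp [hh])⟩ : R))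
    simp_rw [h, map_sum, map_smul]
    exact sum_mem fun i _ ↦
      Subalgebra.smul_mem _ (Algebra.subset_adjoin (Set.mem_range_self i)) (β.repr ⟨π f, hf⟩ i)

theorem IsGeneric.notMem_divisionClosure_adjoin_range_linearMap (hχ : IsGeneric k₁ χ)
    (hR : IsDivisionClosed R) (hk₁ : ∀ r ∈ R, constantCoeff r ∈ k₁) (hN : HasFGPureHulls R N)
    (hπ : Function.Surjective π) (hΨπ : ∀ f, π f = 0 → Ψ f ∈ R)
    (hΨχ : ∀ f, constantCoeff (Ψ f) - χ (π f) ∈ k₁)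
    {b : k⟦X⟧} (hb : b ∉ R) (hlim : ∀ n, ∃ c ∈ R, X ^ n ∣ b - c) :
    b ∉ divisionClosure (Algebra.adjoin R (Set.range Ψ)).toSubring := by
  classical
  refine notMem_divisionClosure_adjoin_of_forall_finset fun s hs hbs ↦ ?_
  obtain ⟨t, -, rfl⟩ := Finset.subset_set_image_iff.1 (hs.trans Set.image_univ.superset)
  have := hN.isTorsionFree
  obtain ⟨A, hA, htA, hNA⟩ := hN.exists_fg (t.image π)
  obtain ⟨n, y, hy, hyA⟩ := hχ.exists_map_mem_adjoin_range hR hπ hΨπ hΨχ hA hNA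
  refine notMem_divisionClosure_adjoin_range hR hb hlim hk₁ hy
    (divisionClosure_mono (Algebra.adjoin_le fun v hv ↦ ?_) hbs)
  obtain ⟨f, hf, rfl⟩ := Finset.mem_image.1 (Finset.mem_coe.1 hv)
  exact hyA f (htA (Finset.mem_coe.2 (Finset.mem_image_of_mem π hf)))

end AdjoinFunctional

section Step

variable {k : Type u} [Field k] {μ : Cardinal.{u}} {b : k⟦X⟧} {R : Subring k⟦X⟧}

/-- The subrings that the construction runs through: division-closed of cardinality at most `μ`,
omitting the fixed power series `b` although `b` is an `X`-adic limit of elements of the subring,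
so that they are not complete. -/
structure IsAdmissible (μ : Cardinal.{u}) (b : k⟦X⟧) (R : Subring k⟦X⟧) : Prop where
  isDivisionClosed : IsDivisionClosed R
  notMem : b ∉ R
  exists_dvd_sub : ∀ n, ∃ c ∈ R, X ^ n ∣ b - c
  mk_le : #R ≤ μ

theorem le_divisionClosure_adjoin (R : Subring k⟦X⟧) (Y : Set k⟦X⟧) :
    R ≤ divisionClosure (Algebra.adjoin R Y).toSubring := fun r hr ↦
  le_divisionClosure (Subalgebra.algebraMap_mem _ (⟨r, hr⟩ : R))

theorem IsAdmissible.divisionClosure_adjoin (hR : IsAdmissible μ b R) (hμ : ℵ₀ ≤ μ)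
    {Y : Set k⟦X⟧} (hY : #Y ≤ μ) (hb : b ∉ divisionClosure (Algebra.adjoin R Y).toSubring) :
    IsAdmissible μ b (divisionClosure (Algebra.adjoin R Y).toSubring) where
  isDivisionClosed := isDivisionClosed_divisionClosure
    (Subalgebra.algebraMap_mem _ (⟨X, hR.isDivisionClosed.X_mem⟩ : R))
  notMem := hb
  exists_dvd_sub n :=
    (hR.exists_dvd_sub n).imp fun _ hc ↦ ⟨le_divisionClosure_adjoin R Y hc.1, hc.2⟩
  mk_le := mk_divisionClosure_le hμ <| (Algebra.cardinalMk_adjoin_le R Y).trans <|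
    max_le (max_le hR.mk_le hY) hμ

theorem IsAdmissible.exists_linearMap_mem (hR : IsAdmissible μ b R) (hμ : ℵ₀ ≤ μ) (hμk : μ < #k)
    {F N : Type u} [AddCommGroup F] [Module R F] [Module.Free R F] [AddCommGroup N] [Module R N]
    (hF : #F ≤ μ) (hN : HasFGPureHulls R N) {π : F →ₗ[R] N} (hπ : Function.Surjective π)
    (Ψ : F →ₗ[R] k⟦X⟧) (hΨ : ∀ f, π f = 0 → Ψ f ∈ R) :
    ∃ R', IsAdmissible μ b R' ∧ R ≤ R' ∧
      ∃ ψ : F →ₗ[R] k⟦X⟧, (∀ f, ψ f ∈ R') ∧ ∀ f, π f = 0 → ψ f = Ψ f := by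
  let k₁ := Subfield.closure
    (Set.range (fun r : R ↦ constantCoeff (r : k⟦X⟧)) ∪ Set.range fun f ↦ constantCoeff (Ψ f))
  have hk₁R : ∀ r ∈ R, constantCoeff r ∈ k₁ := fun r hr ↦
    Subfield.subset_closure (Or.inl ⟨⟨r, hr⟩, rfl⟩)
  have hk₁Ψ : ∀ f, constantCoeff (Ψ f) ∈ k₁ := fun f ↦ Subfield.subset_closure (Or.inr ⟨f, rfl⟩)
  have hk₁ : #k₁ ≤ μ := (Subfield.cardinalMk_closure_le_max _).trans <| max_le
    ((mk_union_le _ _).trans <|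
      add_le_of_le hμ (mk_range_le.trans hR.mk_le) (mk_range_le.trans hF)) hμ
  obtain ⟨y, hy⟩ := exists_algebraicIndependent_of_lt_mk (J := N) hμ hk₁ hμk
    ((mk_le_of_surjective hπ).trans hF)
  have := hR.isDivisionClosed.isDiscreteValuationRing
  obtain ⟨χ, hχ⟩ := exists_isGeneric (ρ := residue R) (fun r ↦ hk₁R r r.2) hy
  have := hN.isTorsionFree
  have : Module.IsTorsionFree R (F ⧸ LinearMap.ker π) :=
    (LinearMap.quotKerEquivOfSurjective π hπ).injective.moduleIsTorsionFree _ (map_smul _)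
  obtain ⟨ψ, hψker, hψ⟩ := exists_extend_powerSeries_of_residue hR.isDivisionClosed
    (Ψ ∘ₗ (LinearMap.ker π).subtype) (χ := residueMap R ∘ₛₗ Ψ + χ ∘ₛₗ π)
    fun x ↦ by simp
  have hψπ : ∀ f, π f = 0 → ψ f = Ψ f := fun f hf ↦ hψker ⟨f, hf⟩
  refine ⟨_, hR.divisionClosure_adjoin hμ (Y := Set.range ψ) (mk_range_le.trans hF) ?_,
    le_divisionClosure_adjoin R _, ψ,
    fun f ↦ le_divisionClosure (Algebra.subset_adjoin ⟨f, rfl⟩), hψπ⟩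
  refine hχ.notMem_divisionClosure_adjoin_range_linearMap hR.isDivisionClosed hk₁R hN hπ
    (fun f hf ↦ hψπ f hf ▸ hΨ f hf) (fun f ↦ ?_) hR.notMem hR.exists_dvd_sub
  rw [hψ]
  simpa using hk₁Ψ f

end Step

section Cardinality

variable {R M N α β : Type u} {κ μ : Cardinal.{u}}

theorem mk_finset_le (hμ : ℵ₀ ≤ μ) (hα : #α ≤ μ) : #(Finset α) ≤ μ := by
  classical
  exact (mk_le_of_surjective List.toFinset_surjective).trans
    ((mk_list_le_max α).trans (max_le hμ hα))

theorem mk_finsupp_le [Zero β] (hμ : ℵ₀ ≤ μ) (hα : #α ≤ μ) (hβ : #β ≤ μ) : #(α →₀ β) ≤ μ :=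
  (mk_le_of_injective (Finsupp.graph_injective α β)).trans
    (mk_finset_le hμ (by simpa using mul_le_of_le hμ hα hβ))

theorem isGenerated_finsupp [Semiring R] (I : Type u) : IsGenerated R (I →₀ R) #I :=
  ⟨_, mk_range_le, Finsupp.basisSingleOne.span_eq⟩

variable [Ring R] [AddCommGroup M] [Module R M] [AddCommGroup N] [Module R N]

theorem IsGenerated.prod (hκ : ℵ₀ ≤ κ) (hM : IsGenerated R M κ) (hN : IsGenerated R N κ) :
    IsGenerated R (M × N) κ := by
  obtain ⟨s, hs, hsM⟩ := hM
  obtain ⟨t, ht, htN⟩ := hN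
  refine ⟨LinearMap.inl R M N '' s ∪ LinearMap.inr R M N '' t, ?_, ?_⟩
  · exact (mk_union_le _ _).trans
      (add_le_of_le hκ (mk_image_le.trans hs) (mk_image_le.trans ht))
  · rw [LinearMap.span_inl_union_inr, hsM, htN, Submodule.prod_top]

theorem IsGenerated.exists_span_eq [IsNoetherianRing R] (hκ : ℵ₀ ≤ κ) (h : IsGenerated R M κ)
    (K : Submodule R M) : ∃ s : Set M, #s ≤ κ ∧ Submodule.span R s = K := by
  obtain ⟨s, hs, hsM⟩ := h
  let L (t : Finset s) : Submodule R M := Submodule.span R (Subtype.val '' (t : Set s))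
  have hfg (t : Finset s) : (K ⊓ L t).FG := by
    have := isNoetherian_span_of_finite R (t.finite_toSet.image Subtype.val)
    exact isNoetherian_submodule.1 this _ inf_le_right
  have hK : ⨆ t, K ⊓ L t = K := by
    refine le_antisymm (iSup_le fun t ↦ inf_le_left) fun x hx ↦ ?_
    have hxs : x ∈ Submodule.span R s := hsM ▸ Submodule.mem_top
    obtain ⟨l, rfl⟩ := (Finsupp.mem_span_iff_linearCombination R s x).1 hxs
    exact Submodule.mem_iSup_of_mem l.support ⟨hx,
      (Finsupp.mem_span_image_iff_linearCombination R).2 ⟨l, fun _ hi ↦ hi, rfl⟩⟩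
  choose G hG using hfg
  refine ⟨⋃ t, G t, ?_, by rw [Submodule.span_iUnion, ← hK]; exact iSup_congr hG⟩
  refine (mk_iUnion_le _).trans (mul_le_of_le hκ (mk_finset_le hκ hs) (ciSup_le' fun t ↦ ?_))
  exact (mk_le_aleph0_iff.2 (G t).countable_toSet).trans hκ

theorem mk_submodule_le [IsNoetherianRing R] (hκ : ℵ₀ ≤ κ) (h : IsGenerated R M κ)
    (hμ : ℵ₀ ≤ μ) (hM : #M ≤ μ) (hμκ : μ ^ κ ≤ μ) : #(Submodule R M) ≤ μ := by
  have hspan : Function.Surjective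
      fun s : {s : Set M // #s ≤ κ} ↦ Submodule.span R (s : Set M) := fun K ↦
    let ⟨s, hs, hsK⟩ := h.exists_span_eq hκ K
    ⟨⟨s, hs⟩, hsK⟩
  exact (mk_le_of_surjective hspan).trans <| (mk_bounded_set_le M κ).trans <|
    (power_le_power_right (max_le hM hμ)).trans hμκ

theorem mk_linearPMap_le [IsNoetherianRing R] (hκ : ℵ₀ ≤ κ) (hM : IsGenerated R M κ)
    (hN : IsGenerated R N κ) (hμ : ℵ₀ ≤ μ) (hMμ : #M ≤ μ) (hNμ : #N ≤ μ) (hμκ : μ ^ κ ≤ μ) :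
    #(M →ₗ.[R] N) ≤ μ :=
  (mk_le_of_injective fun _ _ ↦ LinearPMap.eq_of_eq_graph).trans <|
    mk_submodule_le hκ (hM.prod hκ hN) hμ (by simpa using mul_le_of_le hμ hMμ hNμ) hμκ

end Cardinality

section Family

open scoped DirectSum

variable {k : Type u} [Field k] {μ : Cardinal.{u}} {b : k⟦X⟧} {R : Subring k⟦X⟧}

theorem IsAdmissible.exists_extend_linearPMap (hR : IsAdmissible μ b R) (hμ : ℵ₀ ≤ μ)
    (hμk : μ < #k) {F T : Type u} [AddCommGroup F] [Module R F] [Module.Free R F] (hF : #F ≤ μ)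
    (hT : #T ≤ μ) (φ : T → F →ₗ.[R] R) (hφ : ∀ t, HasFGPureHulls R (F ⧸ (φ t).domain)) :
    ∃ R', IsAdmissible μ b R' ∧ R ≤ R' ∧
      ∀ t, ∃ ψ : F →ₗ[R] k⟦X⟧, (∀ f, ψ f ∈ R') ∧ ∀ x : (φ t).domain, ψ x = φ t x := by
  classical
  have := fun t ↦ (hφ t).isTorsionFree
  choose Ψ hΨ using fun t ↦
    exists_extend_powerSeries hR.isDivisionClosed (Algebra.linearMap R k⟦X⟧ ∘ₗ (φ t).toFun)
  have hΨR : ∀ t f, f ∈ (φ t).domain → Ψ t f ∈ LinearMap.range (Algebra.linearMap R k⟦X⟧) :=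
    fun t f hf ↦ ⟨φ t ⟨f, hf⟩, (hΨ t ⟨f, hf⟩).symm⟩
  let π : (⨁ _ : T, F) →ₗ[R] ⨁ t, F ⧸ (φ t).domain := DirectSum.lmap fun t ↦ (φ t).domain.mkQ
  let Ψ' : (⨁ _ : T, F) →ₗ[R] k⟦X⟧ := DirectSum.toModule R T _ Ψ
  have hΨ' : ∀ f, π f = 0 → Ψ' f ∈ LinearMap.range (Algebra.linearMap R k⟦X⟧) := fun f hf ↦ by
    rw [← DirectSum.sum_support_of f, map_sum]
    refine sum_mem fun t _ ↦ ?_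
    rw [← DirectSum.lof_eq_of R, DirectSum.toModule_lof]
    exact hΨR t _ ((Submodule.Quotient.mk_eq_zero _).1 (DFunLike.congr_fun hf t))
  obtain ⟨R', hR', hle, ψ, hψR', hψ⟩ := hR.exists_linearMap_mem hμ hμk
    ((mk_congr (finsuppLEquivDirectSum R F T).symm.toEquiv).trans_le (mk_finsupp_le hμ hT hF))
    (HasFGPureHulls.directSum hφ)
    ((DirectSum.lmap_surjective _).2 fun t ↦ Submodule.mkQ_surjective _) Ψ' fun f hf ↦ by
      obtain ⟨r, hr⟩ := hΨ' f hf
      exact hr ▸ r.2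
  let ι (t : T) : F →ₗ[R] ⨁ _ : T, F := DirectSum.lof R T (fun _ ↦ F) t
  refine ⟨R', hR', hle, fun t ↦ ⟨ψ ∘ₗ ι t, fun f ↦ hψR' _, fun x ↦ ?_⟩⟩
  have hx : π (ι t x) = 0 := by
    simp [π, ι, DirectSum.lmap_lof, (Submodule.Quotient.mk_eq_zero (φ t).domain).2 x.2]
  rw [LinearMap.comp_apply, hψ _ hx]
  simp only [Ψ', ι, DirectSum.toModule_lof, hΨ]
  rfl

end Family

/-! ### Transfinite construction of a saturated ring -/

section Chain

theorem exists_chain_of_forall_exists_le {L A : Type*} [CompleteLattice L] [LinearOrder A]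
    [OrderBot A] [SuccOrder A] [NoMaxOrder A] [WellFoundedLT A] {P : L → Prop} {Q : L → L → Prop}
    {x₀ : L} (h₀ : P x₀) (hstep : ∀ x, P x → ∃ y, P y ∧ x ≤ y ∧ Q x y)
    (hlim : ∀ (a : A) (c : Set.Iio a → L), Nonempty (Set.Iio a) → Monotone c → (∀ i, P (c i)) →
      P (⨆ i, c i)) :
    ∃ c : A → L, Monotone c ∧ c ⊥ = x₀ ∧ (∀ a, P (c a)) ∧ ∀ a, Q (c a) (c (Order.succ a)) := by
  classical
  choose next hP hle hQ using hstep
  let φ : L → L := fun x ↦ if h : P x then next x h else x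
  have hφ (x : L) (h : P x) : φ x = next x h := dif_pos h
  have hmono : Monotone fun a : A ↦ transfiniteIterate φ a x₀ :=
    monotone_transfiniteIterate φ x₀ fun x ↦ by
      by_cases h : P x
      · exact (hle x h).trans_eq (hφ x h).symm
      · exact (dif_neg h : φ x = x).ge
  have hPc (a : A) : P (transfiniteIterate φ a x₀) := by
    induction a using SuccOrder.limitRecOn with
    | isMin a ha => rwa [ha.eq_bot, transfiniteIterate_bot]
    | succ a ha ih => exact transfiniteIterate_succ φ x₀ a ha ▸ hφ _ ih ▸ hP _ ih
    | isSuccLimit a ha ih =>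
      rw [transfiniteIterate_limit φ x₀ a ha]
      exact hlim a _ ha.nonempty_Iio.to_subtype (hmono.comp (Subtype.mono_coe _)) fun i ↦ ih i i.2
  refine ⟨_, hmono, transfiniteIterate_bot φ x₀, hPc, fun a ↦ ?_⟩
  rw [transfiniteIterate_succ φ x₀ a (not_isMax a), hφ _ (hPc a)]
  exact hQ _ _

theorem exists_forall_lt_of_mk_lt_cof {A : Type u} [LinearOrder A] {s : Set A}
    (hs : #s < Order.cof A) : ∃ a, ∀ i ∈ s, i < a :=
  not_isCofinal_iff.1 fun h ↦ hs.not_ge (Order.cof_le h)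

end Chain

section Saturated

variable {k : Type u} [Field k] {μ : Cardinal.{u}} {b : k⟦X⟧}

theorem IsAdmissible.iSup {ι : Type u} [Nonempty ι] (hμ : ℵ₀ ≤ μ) (hι : #ι ≤ μ)
    {c : ι → Subring k⟦X⟧} (hc : Directed (· ≤ ·) c) (h : ∀ i, IsAdmissible μ b (c i)) :
    IsAdmissible μ b (⨆ i, c i) where
  isDivisionClosed :=
    { X_mem := le_iSup c (Classical.arbitrary ι) (h _).isDivisionClosed.X_mem
      mem_of_mul_mem := fun {t r} ht ht₀ htr ↦ by
        obtain ⟨i, hi⟩ := (Subring.mem_iSup_of_directed hc).1 ht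
        obtain ⟨j, hj⟩ := (Subring.mem_iSup_of_directed hc).1 htr
        obtain ⟨l, hil, hjl⟩ := hc i j
        exact le_iSup c l ((h l).isDivisionClosed.mem_of_mul_mem (hil hi) ht₀ (hjl hj)) }
  notMem hb :=
    let ⟨i, hi⟩ := (Subring.mem_iSup_of_directed hc).1 hb
    (h i).notMem hi
  exists_dvd_sub n :=
    let i := Classical.arbitrary ι
    ((h i).exists_dvd_sub n).imp fun _ hr ↦ ⟨le_iSup c i hr.1, hr.2⟩
  mk_le := by
    change #((⨆ i, c i : Subring k⟦X⟧) : Set k⟦X⟧) ≤ μ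
    rw [Subring.coe_iSup_of_directed hc]
    exact (mk_iUnion_le _).trans (mul_le_of_le hμ hι (ciSup_le' fun i ↦ (h i).mk_le))

/-- Every functional on a submodule of `I →₀ S` whose quotient has finitely generated pure hulls
extends to a functional with values in `R`. The target `k⟦X⟧` of the extension spares a choice of
an `S`-module structure on `R`. -/
def ExtendsFunctionals (I : Type u) (S R : Subring k⟦X⟧) : Prop :=
  ∀ φ : (I →₀ S) →ₗ.[S] S, HasFGPureHulls S ((I →₀ S) ⧸ φ.domain) →
    ∃ ψ : (I →₀ S) →ₗ[S] k⟦X⟧, (∀ f, ψ f ∈ R) ∧ ∀ x : φ.domain, ψ x = φ x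

/-- Every subset of `R` of cardinality at most `#I` lies in a division-closed subring whose
functionals extend into `R`. -/
def IsSaturated (I : Type u) (R : Subring k⟦X⟧) : Prop :=
  ∀ s ⊆ (R : Set k⟦X⟧), #s ≤ #I →
    ∃ S ≤ R, IsDivisionClosed S ∧ s ⊆ S ∧ ExtendsFunctionals I S R

theorem ExtendsFunctionals.mono {I : Type u} {S R R' : Subring k⟦X⟧} (h : ExtendsFunctionals I S R)
    (hR : R ≤ R') : ExtendsFunctionals I S R' := fun φ hφ ↦
  (h φ hφ).imp fun _ hψ ↦ ⟨fun f ↦ hR (hψ.1 f), hψ.2⟩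

variable {I : Type u} [Infinite I]

theorem IsAdmissible.exists_extendsFunctionals {R : Subring k⟦X⟧} (hR : IsAdmissible μ b R)
    (hμ : ℵ₀ ≤ μ) (hμI : μ ^ #I ≤ μ) (hμk : μ < #k) :
    ∃ R', IsAdmissible μ b R' ∧ R ≤ R' ∧ ExtendsFunctionals I R R' := by
  have := hR.isDivisionClosed.isDiscreteValuationRing
  have hIμ : #I ≤ μ := ((cantor' #I (one_lt_aleph0.trans_le hμ)).trans_le hμI).le
  have hF : #(I →₀ R) ≤ μ := mk_finsupp_le hμ hIμ hR.mk_le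
  let T := {φ : (I →₀ R) →ₗ.[R] R // HasFGPureHulls R ((I →₀ R) ⧸ φ.domain)}
  have hR₁ : IsGenerated R R #I :=
    ⟨{1}, (mk_singleton _).trans_le (one_le_aleph0.trans (aleph0_le_mk I)),
      Ideal.span_singleton_one⟩
  have hT : #T ≤ μ := (mk_subtype_le _).trans <|
    mk_linearPMap_le (aleph0_le_mk I) (isGenerated_finsupp I) hR₁ hμ hF hR.mk_le hμI
  obtain ⟨R', hR', hle, h⟩ :=
    hR.exists_extend_linearPMap hμ hμk hF hT Subtype.val Subtype.property
  exact ⟨R', hR', hle, fun φ hφ ↦ h ⟨φ, hφ⟩⟩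

theorem IsAdmissible.exists_isSaturated {R₀ : Subring k⟦X⟧} (hR₀ : IsAdmissible μ b R₀)
    (hμ : ℵ₀ ≤ μ) (hμI : μ ^ #I ≤ μ) (hμk : μ < #k) :
    ∃ R, IsAdmissible μ b R ∧ R₀ ≤ R ∧ IsSaturated I R := by
  let A := (Order.succ #I).ord.ToType
  have hA : #A ≤ μ := (mk_ord_toType _).trans_le <|
    Order.succ_le_of_lt ((cantor' #I (one_lt_aleph0.trans_le hμ)).trans_le hμI)
  have hI : ℵ₀ ≤ Order.succ #I := (aleph0_le_mk I).trans (Order.le_succ _)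
  have : NoMaxOrder A := noMaxOrder hI
  have : Nonempty A := by simp [A, Ordinal.nonempty_toType_iff]
  let : OrderBot A := WellFoundedLT.toOrderBot A
  let : SuccOrder A := SuccOrder.ofLinearWellFoundedLT A
  obtain ⟨c, hc, hc₀, hadm, hext⟩ := exists_chain_of_forall_exists_le (A := A)
    (Q := ExtendsFunctionals I) hR₀
    (fun R hR ↦ hR.exists_extendsFunctionals hμ hμI hμk)
    fun a c _ hc ↦ .iSup hμ ((mk_set_le _).trans hA) hc.directed_le
  refine ⟨⨆ a, c a, .iSup hμ hA hc.directed_le hadm, hc₀ ▸ le_iSup c ⊥, fun s hs hsI ↦ ?_⟩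
  choose stage hstage using fun x : s ↦ (Subring.mem_iSup_of_directed hc.directed_le).1 (hs x.2)
  obtain ⟨a, ha⟩ := exists_forall_lt_of_mk_lt_cof (s := Set.range stage) <| by
    rw [Ordinal.cof_toType, (isRegular_succ (aleph0_le_mk I)).cof_ord]
    exact (mk_range_le.trans hsI).trans_lt (Order.lt_succ _)
  exact ⟨c a, le_iSup c a, (hadm a).isDivisionClosed,
    fun x hx ↦ hc (ha _ ⟨⟨x, hx⟩, rfl⟩).le (hstage ⟨x, hx⟩), (hext a).mono (le_iSup c _)⟩

end Saturated

section Initial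

variable {k : Type u} [Field k] {μ : Cardinal.{u}} {b : k⟦X⟧} {R : Subring k⟦X⟧}

theorem exists_isAdmissible (k : Type u) [Field k] (hμ : ℵ₀ ≤ μ) :
    ∃ (b : k⟦X⟧) (R : Subring k⟦X⟧), IsAdmissible μ b R := by
  classical
  let A : Subring k⟦X⟧ := (Algebra.adjoin ℤ {X}).toSubring
  have hXA : X ∈ A := Algebra.self_mem_adjoin_singleton ℤ X
  have hA : #(divisionClosure A) ≤ ℵ₀ := mk_divisionClosure_le le_rfl <| lift_le.{0}.1 <|
    (Algebra.lift_cardinalMk_adjoin_le ℤ ({X} : Set k⟦X⟧)).trans (by simp)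
  let f (s : Set ℕ) : k⟦X⟧ := .mk (s.indicator 1)
  have hf : Function.Injective f := fun s t h ↦ Set.indicator_one_inj k <| funext fun n ↦ by
    simpa [f] using congrArg (coeff n) h
  obtain ⟨s, hs⟩ : ∃ s, f s ∉ divisionClosure A := by
    by_contra! h
    have : Countable (divisionClosure A) := mk_le_aleph0_iff.1 hA
    have hcount : #(Set ℕ) ≤ ℵ₀ := mk_le_aleph0_iff.2 (hf.codRestrict h).countable
    exact (cantor ℵ₀).not_ge (by rwa [mk_set, mk_nat] at hcount)
  refine ⟨f s, divisionClosure A, isDivisionClosed_divisionClosure hXA, hs, fun n ↦ ?_,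
    hA.trans hμ⟩
  refine ⟨∑ i ∈ Finset.range n with i ∈ s, X ^ i,
    le_divisionClosure (sum_mem fun i _ ↦ pow_mem hXA i), X_pow_dvd_iff.2 fun m hm ↦ ?_⟩
  simp [f, coeff_X_pow, Set.indicator_apply, hm]

theorem exists_isAdmissible_mk_eq (hμ : ℵ₀ ≤ μ) (hμk : μ < #k) :
    ∃ (b : k⟦X⟧) (R : Subring k⟦X⟧), IsAdmissible μ b R ∧ #R = μ := by
  obtain ⟨b, R, hR⟩ := exists_isAdmissible k hμ
  let k₁ : Subfield k := Subfield.closure (Set.range fun r : R ↦ constantCoeff (r : k⟦X⟧))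
  have hk₁R : ∀ r ∈ R, constantCoeff r ∈ k₁ := fun r hr ↦ Subfield.subset_closure ⟨⟨r, hr⟩, rfl⟩
  have hk₁ : #k₁ ≤ μ := (Subfield.cardinalMk_closure_le_max _).trans <|
    max_le (mk_range_le.trans hR.mk_le) hμ
  obtain ⟨y, hy⟩ := exists_algebraicIndependent_of_lt_mk (J := μ.out) hμ hk₁ hμk μ.mk_out.le
  let Y : μ.out → k⟦X⟧ := fun j ↦ C (y j)
  have hY : AlgebraicIndependent k₁ fun j ↦ constantCoeff (Y j) := by simpa [Y] using hy
  have hR' := hR.divisionClosure_adjoin hμ (Y := Set.range Y) (mk_range_le.trans μ.mk_out.le) <|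
    notMem_divisionClosure_adjoin_range hR.isDivisionClosed hR.notMem hR.exists_dvd_sub hk₁R hY
  refine ⟨b, _, hR', hR'.mk_le.antisymm ?_⟩
  have hYR' : ∀ j, Y j ∈ divisionClosure (Algebra.adjoin R (Set.range Y)).toSubring := fun j ↦
    le_divisionClosure (Algebra.subset_adjoin ⟨j, rfl⟩)
  exact μ.mk_out.ge.trans (mk_le_of_injective ((C_injective.comp hy.injective).codRestrict hYR'))

theorem IsAdmissible.notPAdicComplete (hR : IsAdmissible μ b R) :
    NotPAdicComplete R hR.isDivisionClosed.unif := by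
  choose c hcR hbc using hR.exists_dvd_sub
  refine ⟨fun n ↦ ⟨c n, hcR n⟩, fun n ↦ ⟨n, fun i hi j hj ↦ ?_⟩, fun L hL ↦ ?_⟩
  · rw [hR.isDivisionClosed.unif_pow_dvd_iff]
    simpa using dvd_sub ((pow_dvd_pow X hj).trans (hbc j)) ((pow_dvd_pow X hi).trans (hbc i))
  · suffices b - L = 0 from hR.notMem (sub_eq_zero.1 this ▸ L.2)
    refine eq_zero_of_forall_X_pow_dvd fun n ↦ ?_
    obtain ⟨N, hN⟩ := hL n
    have hcL := hR.isDivisionClosed.unif_pow_dvd_iff.1 (hN (max N n) (le_max_left _ _))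
    simpa using dvd_add ((pow_dvd_pow X (le_max_right N n)).trans (hbc _)) hcL

end Initial

/-! ### Whitehead modules over a saturated ring -/

theorem IsGenerated.exists_surjective {R M I : Type u} [Ring R] [AddCommGroup M] [Module R M]
    [Infinite I] (h : IsGenerated R M #I) :
    ∃ π : (I →₀ R) →ₗ[R] M, Function.Surjective π := by
  obtain ⟨s, hs, hspan⟩ := h
  have h₀s : #(insert 0 s : Set M) ≤ #I := mk_insert_le.trans <|
    add_le_of_le (aleph0_le_mk I) hs (one_le_aleph0.trans (aleph0_le_mk I))
  have : Nonempty (insert 0 s : Set M) := ⟨0, Set.mem_insert _ _⟩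
  obtain ⟨e⟩ := h₀s
  let g (i : I) : M := (Function.invFun e i : (insert 0 s : Set M))
  have hg : s ⊆ Set.range g := fun m hm ↦
    (Function.invFun_surjective e.injective ⟨m, Set.mem_insert_of_mem _ hm⟩).imp fun _ ↦
      congrArg Subtype.val
  refine ⟨Finsupp.linearCombination R g, LinearMap.range_eq_top.1 ?_⟩
  rw [Finsupp.range_linearCombination, eq_top_iff, ← hspan]
  exact Submodule.span_mono hg

theorem exists_linearPMap_mem_graph_iff {A B F F' N N' : Type*} [CommRing A] [CommRing B]
    [Algebra A B] [AddCommGroup F] [Module A F] [Module B F] [IsScalarTower A B F]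
    [AddCommGroup N] [Module A N] [Module B N] [IsScalarTower A B N] [AddCommGroup F'] [Module A F']
    [AddCommGroup N'] [Module A N'] (ι : F' →ₗ[A] F) {j : N' →ₗ[A] N} (hj : Function.Injective j)
    (φ : F →ₗ.[B] N) :
    ∃ φ' : F' →ₗ.[A] N', ∀ x : F' × N', x ∈ φ'.graph ↔ (ι x.1, j x.2) ∈ φ.graph := by
  let G : Submodule A (F' × N') := (φ.graph.restrictScalars A).comap (ι.prodMap j)
  have hG : ∀ x ∈ G, x.1 = 0 → x.2 = 0 := fun x hx hx₁ ↦ by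
    have hx' : (ι x.1, j x.2) ∈ φ.graph := hx
    rw [hx₁, map_zero] at hx'
    exact (map_eq_zero_iff j hj).1 (φ.graph_fst_eq_zero_snd hx' rfl)
  exact ⟨G.toLinearPMap, fun x ↦ SetLike.ext_iff.1 (Submodule.toLinearPMap_graph_eq G hG) x⟩

theorem exists_linearPMap_domain_eq_span {A B F F' N N' : Type*} [CommRing A] [CommRing B]
    [Algebra A B] [AddCommGroup F] [Module A F] [Module B F] [IsScalarTower A B F]
    [AddCommGroup N] [Module A N] [Module B N] [IsScalarTower A B N] [AddCommGroup F'] [Module A F']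
    [AddCommGroup N'] [Module A N'] (ι : F' →ₗ[A] F) {j : N' →ₗ[A] N} (hj : Function.Injective j)
    (φ : F →ₗ.[B] N) {s : Set F} (hs : Submodule.span B s = φ.domain)
    (h : ∀ x : φ.domain, (x : F) ∈ s → (x : F) ∈ Set.range ι ∧ φ x ∈ Set.range j) :
    ∃ φ' : F' →ₗ.[A] N', φ.domain = .span B (ι '' φ'.domain) ∧
      ∀ (x : φ'.domain) (y : φ.domain), ι x = y → j (φ' x) = φ y := by
  obtain ⟨φ', hφ'⟩ := exists_linearPMap_mem_graph_iff ι hj φ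
  have hgraph (x : φ'.domain) : (ι x, j (φ' x)) ∈ φ.graph := (hφ' (x, φ' x)).1 (φ'.mem_graph x)
  refine ⟨φ', le_antisymm ?_ ?_, fun x y hxy ↦ ?_⟩
  · refine hs.symm.trans_le (Submodule.span_mono fun x hx ↦ ?_)
    have hxφ : x ∈ φ.domain := hs ▸ Submodule.subset_span hx
    obtain ⟨⟨f, hf⟩, a, ha⟩ := h ⟨x, hxφ⟩ hx
    refine ⟨f, LinearPMap.mem_domain_iff.2 ⟨a, (hφ' _).2 ?_⟩, hf⟩
    simpa only [hf, ha] using φ.mem_graph ⟨x, hxφ⟩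
  · rw [Submodule.span_le]
    rintro _ ⟨x, hx, rfl⟩
    exact LinearPMap.mem_domain_of_mem_graph (hgraph ⟨x, hx⟩)
  · exact φ.mem_graph_snd_inj (hgraph x) (φ.mem_graph y) hxy

section Saturated

variable {k : Type u} [Field k] {R S : Subring k⟦X⟧} {I M : Type u}

theorem exists_linearMap_mapRange_inclusion (h : S ≤ R) (ψ : (I →₀ S) →ₗ[S] k⟦X⟧)
    (hψ : ∀ f, ψ f ∈ R) :
    ∃ ψ' : (I →₀ R) →ₗ[R] R, ∀ f : I →₀ S,
      (ψ' (f.mapRange (Subring.inclusion h) (map_zero _)) : k⟦X⟧) = ψ f := by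
  refine ⟨Finsupp.linearCombination R fun i ↦ ⟨ψ (.single i 1), hψ _⟩, fun f ↦ ?_⟩
  induction f using Finsupp.induction_linear with
  | zero => simp
  | add f g hf hg => rw [Finsupp.mapRange_add (map_add _), map_add, map_add, ← hf, ← hg]; rfl
  | single i r =>
    have hr : Finsupp.single i r = r • Finsupp.single i 1 := by simp
    rw [Finsupp.mapRange_single, Finsupp.linearCombination_single, hr, map_smul]
    rfl

variable [AddCommGroup M] [Module R M]

theorem ExtendsFunctionals.exists_extend_ker (h : ExtendsFunctionals I S R) (hSR : S ≤ R)
    (hS : IsDivisionClosed S) (hR : IsDivisionClosed R) (hM : HasFGPureHulls R M)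
    (π : (I →₀ R) →ₗ[R] M) (φ : LinearMap.ker π →ₗ[R] R) {s : Set (I →₀ R)}
    (hs : Submodule.span R s = LinearMap.ker π) (hsS : ∀ f ∈ s, ∀ i, (f i : k⟦X⟧) ∈ S)
    (hφS : ∀ x : LinearMap.ker π, (x : I →₀ R) ∈ s → (φ x : k⟦X⟧) ∈ S) :
    ∃ ψ : (I →₀ R) →ₗ[R] R, ∀ x : LinearMap.ker π, ψ x = φ x := by
  have := hR.isDiscreteValuationRing
  let : Algebra S R := (Subring.inclusion hSR).toAlgebra
  have : Module.FaithfullyFlat S R := hS.faithfullyFlat_inclusion hR hSR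
  let : Module S M := .compHom M (algebraMap S R)
  have : IsScalarTower S R M := ⟨fun a r m ↦ mul_smul (algebraMap S R a) r m⟩
  let ι : (I →₀ S) →ₗ[S] (I →₀ R) := Finsupp.mapRange.linearMap (Algebra.linearMap S R)
  have hsι : ∀ f ∈ s, f ∈ Set.range ι := fun f hf ↦
    (Finsupp.range_mapRange _ (map_zero _)).ge fun i ↦ ⟨⟨_, hsS f hf i⟩, rfl⟩
  obtain ⟨φ', hker, hφ'⟩ := exists_linearPMap_domain_eq_span ι (j := Algebra.linearMap S R)
    (Subring.inclusion_injective hSR) ⟨LinearMap.ker π, φ⟩ hs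
    fun x hx ↦ ⟨hsι x hx, ⟨_, hφS x hx⟩, rfl⟩
  obtain ⟨ψ, hψR, hψ⟩ := h φ' (.of_ker_eq_span hM π φ'.domain hker)
  obtain ⟨ψ', hψ'⟩ := exists_linearMap_mapRange_inclusion hSR ψ hψR
  suffices LinearMap.ker π ≤
      (LinearMap.eqLocus (ψ' ∘ₗ (LinearMap.ker π).subtype) φ).map (LinearMap.ker π).subtype by
    refine ⟨ψ', fun ⟨x, hx⟩ ↦ ?_⟩
    obtain ⟨y, hy, rfl⟩ := this hx
    exact hy
  refine hker.trans_le (Submodule.span_le.2 ?_)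
  rintro _ ⟨x, hx, rfl⟩
  have hιx : ι x ∈ LinearMap.ker π := hker.ge (Submodule.subset_span ⟨x, hx, rfl⟩)
  refine ⟨⟨ι x, hιx⟩, Subtype.ext ((hψ' x).trans ((hψ ⟨x, hx⟩).trans ?_)), rfl⟩
  exact congrArg Subtype.val (hφ' ⟨x, hx⟩ ⟨ι x, hιx⟩ rfl)

theorem IsSaturated.isWhitehead [Infinite I] (hsat : IsSaturated I R) (hR : IsDivisionClosed R)
    (hM : IsKappaFree R M (aleph 1)) (hI : IsGenerated R M #I) : IsWhitehead R M := by
  have := hR.isDiscreteValuationRing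
  have hI₀ : ℵ₀ ≤ #I := aleph0_le_mk I
  obtain ⟨π, hπ⟩ := hI.exists_surjective
  refine isWhitehead_of_exists_extend_ker hπ fun φ ↦ ?_
  obtain ⟨s, hsI, hs⟩ := (isGenerated_finsupp I).exists_span_eq hI₀ (LinearMap.ker π)
  let coeffs : Set k⟦X⟧ := Set.range fun p : s × I ↦ ((p.1 : I →₀ R) p.2 : k⟦X⟧)
  let values : Set k⟦X⟧ := Set.range fun f : s ↦ (φ ⟨f, hs ▸ Submodule.subset_span f.2⟩ : k⟦X⟧)
  have hcoeffs : #coeffs ≤ #I := mk_range_le.trans <| by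
    simpa using mul_le_of_le hI₀ hsI le_rfl
  have hvalues : #values ≤ #I := mk_range_le.trans hsI
  obtain ⟨S, hSR, hS, hsub, hext⟩ := hsat (coeffs ∪ values)
    (by rintro _ (⟨p, rfl⟩ | ⟨f, rfl⟩) <;> exact Subtype.property _)
    ((mk_union_le _ _).trans (add_le_of_le hI₀ hcoeffs hvalues))
  exact hext.exists_extend_ker hSR hS hR hM.hasFGPureHulls π φ hs
    (fun f hf i ↦ hsub (.inl ⟨(⟨f, hf⟩, i), rfl⟩)) fun x hx ↦ hsub (.inr ⟨⟨x, hx⟩, rfl⟩)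

end Saturated

theorem exists_pid_kappa_generated_aleph_one_free_implies_whitehead_general
    (κ μ : Cardinal.{u}) (hκ : ℵ₀ ≤ κ) (hμ : 1 < μ) (hμκ : μ ^ κ = μ) :
    ∃ (R : Type u) (_ : CommRing R) (p : R),
      IsDomain R ∧ IsPrincipalIdealRing R ∧ ¬ IsField R ∧
      ∃ _ : IsLocalRing R, Prime p ∧ IsLocalRing.maximalIdeal R = Ideal.span {p} ∧
      NotPAdicComplete R p ∧
      #R = μ ∧
      ∀ (M : Type u) (_ : AddCommGroup M) (_ : Module R M),
        IsKappaFree R M (aleph 1) → IsGenerated R M κ → IsWhitehead R M := by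
  obtain ⟨I, rfl⟩ := Quotient.exists_rep κ
  change ℵ₀ ≤ #I at hκ
  have : Infinite I := infinite_iff.2 hκ
  have hμ₀ : ℵ₀ ≤ μ := hκ.trans ((cantor' #I hμ).trans_eq hμκ).le
  have : Infinite (Set μ.out) := infinite_iff.2 <| hμ₀.trans <| by
    simpa using (cantor μ).le
  obtain ⟨_⟩ := Infinite.nonempty_field (α := Set μ.out)
  have hμk : μ < #(Set μ.out) := by simpa using cantor μ
  obtain ⟨b, R₀, hR₀, hR₀μ⟩ := exists_isAdmissible_mk_eq hμ₀ hμk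
  obtain ⟨R, hR, hle, hsat⟩ := hR₀.exists_isSaturated hμ₀ hμκ.le hμk
  have hdiv := hR.isDivisionClosed
  have := hdiv.isDiscreteValuationRing
  have hRμ : #R = μ :=
    hR.mk_le.antisymm (hR₀μ.ge.trans (mk_le_of_injective (Subring.inclusion_injective hle)))
  exact ⟨R, inferInstance, hdiv.unif, inferInstance, inferInstance,
    IsDiscreteValuationRing.not_isField R, inferInstance, hdiv.irreducible_unif.prime,
    hdiv.irreducible_unif.maximalIdeal_eq, hR.notPAdicComplete, hRμ,
    fun M _ _ hM hgen ↦ hsat.isWhitehead hdiv hM hgen⟩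

/-- Eklof–Shelah, Theorem 4: for every cardinal `κ ≥ ℵ₁` there is a local
slender p.i.d. `R` of cardinality `2 ^ κ` such that every `ℵ₁`-free `κ`-generated
`R`-module is a Whitehead module. -/
theorem exists_pid_kappa_generated_aleph_one_free_implies_whitehead :
    ∀ κ : Cardinal.{0}, aleph 1 ≤ κ →
    ∃ (R : Type) (_ : CommRing R) (p : R),
      IsDomain R ∧ IsPrincipalIdealRing R ∧ ¬ IsField R ∧
      ∃ _ : IsLocalRing R, Prime p ∧ IsLocalRing.maximalIdeal R = Ideal.span {p} ∧
      NotPAdicComplete R p ∧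
      #R = 2 ^ κ ∧
      ∀ (M : Type) (_ : AddCommGroup M) (_ : Module R M),
        IsKappaFree R M (aleph 1) → IsGenerated R M κ → IsWhitehead R M := by
  intro κ hκ
  have hκ₀ : ℵ₀ ≤ κ := (aleph0_le_aleph 1).trans hκ
  exact exists_pid_kappa_generated_aleph_one_free_implies_whitehead_general κ (2 ^ κ) hκ₀
    (one_lt_aleph0.trans (hκ₀.trans_lt (cantor κ))) (by rw [← power_mul, mul_eq_self hκ₀])
end

section
/- For every cardinal κ ≥ ℵ₁ there exists a commutative ring R such that: R is a local principal ideal domain (and not a field); R has cardinality κ; and every R-module M of cardinality ≤ κ which is a Whitehead module (Ext¹_R(M, R) = 0) is a free R-module. -/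
/-!
Statement 0 (Eklof–Shelah, "Whitehead modules over large principal ideal domains",
Theorem 1): There is a slender (local, not `p`-adically complete) p.i.d. `R` of
cardinality `2 ^ ℵ₁` such that every `ℵ₁`-free `ℵ₁`-generated `R`-module is a
Whitehead module.
-/

open Cardinal

universe u

/-!
Choose a discrete valuation ring `R` with elements `x v` and derivations `∂ / ∂ (x v)`, indexed by
a set `V` of cardinality `κ`. Write a Whitehead module as `F / K` with `F` free, and let `(e j)` be
a basis of `K`, indexed by a well-order whose proper initial segments have cardinality `< κ`. Each
`e j` involves only finitely many of the `x v`, so one can greedily assign to each `j` its own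
variable `x (v j)` not involved in any `e i` with `i ≤ j`. By hypothesis some `φ : F → R` satisfies
`φ (e j) = x (v j)` for all `j`. Differentiating these equations with respect to all the `x (v j)`
turns `φ` into a linear map `P : F → R^(J)` for which the vectors `P (e j)` are unitriangular,
hence a basis of `R^(J)`. Sending `P (e j)` back to `e j` retracts `F` onto `K`, so `F / K` embeds
in `F` and is free.
-/

section Triangular

variable {R J N : Type*} [CommRing R] [LinearOrder J]

theorem linearIndependent_of_triangular [AddCommGroup N] [Module R N]
    (v : J → N) (φ : J → Module.Dual R N) (hlt : ∀ i j, i < j → φ j (v i) = 0)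
    (hdiag : ∀ j, φ j (v j) ∈ nonZeroDivisors R) : LinearIndependent R v := by
  refine linearIndependent_iff.2 fun l hl => by_contra fun hl0 => ?_
  have hne := Finsupp.support_nonempty_iff.2 hl0
  have hmem := l.support.max'_mem hne
  set m := l.support.max' hne
  have hsum : φ m (Finsupp.linearCombination R v l) = l m * φ m (v m) := by
    rw [Finsupp.linearCombination_apply, Finsupp.sum, map_sum,
      Finset.sum_eq_single_of_mem m hmem, map_smul, smul_eq_mul]
    intro i hi him
    rw [map_smul, hlt i m ((l.support.le_max' i hi).lt_of_ne him), smul_zero]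
  rw [hl, map_zero, eq_comm, mul_right_mem_nonZeroDivisors_eq_zero_iff (hdiag m)] at hsum
  exact Finsupp.mem_support_iff.1 hmem hsum

theorem le_of_forall_exists_leading_term_eq [WellFoundedLT J] {S N : Submodule R (J →₀ R)}
    (hSN : S ≤ N)
    (h : ∀ f ∈ N, ∀ i, (∀ j > i, f j = 0) → ∃ g ∈ S, g i = f i ∧ ∀ j > i, g j = 0) :
    N ≤ S := by
  intro f hf
  induction hmax : f.support.max using WellFoundedLT.induction generalizing f with
  | ind _ ih =>
    subst hmax
    obtain rfl | hf0 := eq_or_ne f 0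
    · exact zero_mem S
    obtain ⟨m, hm⟩ := Finset.max_of_nonempty (Finsupp.support_nonempty_iff.2 hf0)
    have hfm : ∀ j > m, f j = 0 := fun j hj =>
      Finsupp.notMem_support_iff.1 fun hj' => hj.not_ge (Finset.le_max_of_eq hj' hm)
    obtain ⟨g, hgS, hgm, hg⟩ := h f hf m hfm
    have hlt : (f - g).support.max < f.support.max := by
      rw [hm]
      refine (Finset.sup_lt_iff (WithBot.bot_lt_coe m)).2 fun j hj => ?_
      rw [Finsupp.mem_support_iff, Finsupp.sub_apply] at hj
      refine WithBot.coe_lt_coe.2 (lt_of_not_ge fun hmj => hj ?_)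
      obtain rfl | hmj := hmj.eq_or_lt
      · rw [hgm, sub_self]
      · rw [hfm j hmj, hg j hmj, sub_self]
    simpa using add_mem (ih _ hlt (sub_mem hf (hSN hgS)) rfl) hgS

theorem exists_basis_coe_eq_of_unitriangular [WellFoundedLT J] (T : J → J →₀ R)
    (hT : ∀ i j, i ≤ j → T i j = Finsupp.single i 1 j) :
    ∃ B : Module.Basis J R (J →₀ R), ⇑B = T := by
  have hlt : ∀ i j, i < j → T i j = 0 := fun i j hij => by
    rw [hT i j hij.le, Finsupp.single_eq_of_ne hij.ne']
  have hdiag : ∀ i, T i i = 1 := fun i => by rw [hT i i le_rfl, Finsupp.single_eq_same]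
  refine ⟨.mk (linearIndependent_of_triangular T (Finsupp.lapply (R := R)) hlt
    fun i => by simp [hdiag]) ?_, Module.Basis.coe_mk _ _⟩
  refine le_of_forall_exists_leading_term_eq le_top fun f _ i _ =>
    ⟨f i • T i, Submodule.smul_mem _ _ (Submodule.subset_span ⟨i, rfl⟩), by simp [hdiag], ?_⟩
  exact fun j hij => by simp [hlt i j hij]

end Triangular

section Free

variable {R : Type*} [CommRing R]

/-- The ideal of leading coefficients of the elements of `N` whose support lies in `Iic i`. -/
noncomputable def leadingCoeffIdeal {J : Type*} [LinearOrder J] (N : Submodule R (J →₀ R))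
    (i : J) : Ideal R :=
  (N ⊓ Finsupp.supported R R (Set.Iic i)).map (Finsupp.lapply i)

theorem mem_leadingCoeffIdeal {J : Type*} [LinearOrder J] {N : Submodule R (J →₀ R)} {i : J}
    {c : R} : c ∈ leadingCoeffIdeal N i ↔ ∃ f ∈ N, (∀ j > i, f j = 0) ∧ f i = c := by
  simp [leadingCoeffIdeal, Finsupp.mem_supported', and_assoc]

variable [IsDomain R] [IsPrincipalIdealRing R]

theorem free_submodule_finsupp {J : Type*} (N : Submodule R (J →₀ R)) : Module.Free R N := by
  obtain ⟨_, _⟩ := exists_wellFoundedLT J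
  have hgen (i : J) := mem_leadingCoeffIdeal.1
    (Submodule.IsPrincipal.generator_mem (leadingCoeffIdeal N i))
  choose b hbN hlt hb using hgen
  let v : {i // b i i ≠ 0} → J →₀ R := fun i => b i
  have hvN : Submodule.span R (Set.range v) ≤ N :=
    Submodule.span_le.2 (Set.range_subset_iff.2 fun i => hbN i)
  have hv : LinearIndependent R v := linearIndependent_of_triangular v (fun i => Finsupp.lapply i.1)
    (fun i j hij => hlt i j hij) fun i => mem_nonZeroDivisors_of_ne_zero i.2
  suffices h : N ≤ Submodule.span R (Set.range v) from
    hvN.antisymm h ▸ Module.Free.of_basis (.span hv)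
  refine le_of_forall_exists_leading_term_eq hvN fun f hf i hfi => ?_
  obtain ⟨c, hc⟩ := (Submodule.IsPrincipal.mem_iff_eq_smul_generator _).1
    (mem_leadingCoeffIdeal.2 ⟨f, hf, hfi, rfl⟩)
  rw [← hb] at hc
  by_cases hi : b i i = 0
  · exact ⟨0, zero_mem _, by simp [hc, hi], by simp⟩
  · exact ⟨c • b i, Submodule.smul_mem _ _ (Submodule.subset_span ⟨⟨i, hi⟩, rfl⟩), by simp [hc],
      fun j hj => by simp [hlt i j hj]⟩

theorem free_of_injective {F M : Type*} [AddCommGroup F] [Module R F] [Module.Free R F]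
    [AddCommGroup M] [Module R M] (f : M →ₗ[R] F) (hf : Function.Injective f) :
    Module.Free R M := by
  let g : M →ₗ[R] Module.Free.ChooseBasisIndex R F →₀ R := (Module.Free.chooseBasis R F).repr ∘ₗ f
  have hg : Function.Injective g := (Module.Free.chooseBasis R F).repr.injective.comp hf
  have := free_submodule_finsupp (LinearMap.range g)
  exact .of_equiv (LinearEquiv.ofInjective g hg).symm

theorem free_of_ker_retraction {F M : Type*} [AddCommGroup F] [Module R F] [Module.Free R F]
    [AddCommGroup M] [Module R M] (π : F →ₗ[R] M) (hπ : Function.Surjective π)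
    (r : F →ₗ[R] LinearMap.ker π) (hr : ∀ x : LinearMap.ker π, r x = x) : Module.Free R M := by
  have := free_of_injective (LinearMap.ker r).subtype (Submodule.subtype_injective _)
  exact .of_equiv <|
    (Submodule.quotientEquivOfIsCompl _ _ (LinearMap.isCompl_of_proj hr)).symm ≪≫ₗ
      LinearMap.quotKerEquivOfSurjective π hπ

end Free

section Avoidance

variable {J V : Type u} [Infinite V]

theorem mk_iUnion_finset_lt (hJ : #J < #V) (s : J → Finset V) : #(⋃ j, (s j : Set V)) < #V := by
  cases finite_or_infinite J
  · exact (Set.finite_iUnion fun j => (s j).finite_toSet).lt_aleph0.trans_le (aleph0_le_mk V)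
  · refine lt_of_le_of_lt ((mk_iUnion_le _).trans ?_) hJ
    exact mul_le_of_le (aleph0_le_mk J) le_rfl <|
      (ciSup_le' fun j => (s j).finite_toSet.lt_aleph0.le).trans (aleph0_le_mk J)

theorem exists_injective_forall_notMem [LinearOrder J] [WellFoundedLT J]
    (hJ : ∀ j : J, #(Set.Iio j) < #V) (B : J → Set V) (hB : ∀ j, #(B j) < #V) :
    ∃ v : J → V, Function.Injective v ∧ ∀ j, v j ∉ B j := by
  have hnext (j : J) (w : Set.Iio j → V) : ∃ x, x ∉ Set.range w ∪ B j := by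
    rw [← Set.ne_univ_iff_exists_notMem]
    intro h
    have hlt := (mk_union_le (Set.range w) (B j)).trans_lt
      (add_lt_of_lt (aleph0_le_mk V) (mk_range_le.trans_lt (hJ j)) (hB j))
    rw [h, mk_univ] at hlt
    exact hlt.false
  choose next hnext using hnext
  let v : J → V := WellFoundedLT.fix fun j w => next j fun i => w i i.2
  have hv (j : J) : v j ∉ (Set.range fun i : Set.Iio j => v i) ∪ B j := by
    rw [show v j = next j fun i => v i from WellFoundedLT.fix_eq _ j]
    exact hnext j _
  exact ⟨v, .of_lt_imp_ne fun i j hij h => hv j (.inl ⟨⟨i, hij⟩, h⟩), fun j hj => hv j (.inr hj)⟩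

end Avoidance

section Derivation

variable {k R : Type*} [CommRing k] [CommRing R] [Algebra k R]

theorem derivation_dual_apply {I N : Type*} [AddCommGroup N] [Module R N] [Module k N]
    (d : Derivation k R N) (φ : Module.Dual R (I →₀ R)) (f : I →₀ R) :
    d (φ f) = Finsupp.linearCombination R (fun i => d (φ (Finsupp.single i 1))) f +
      f.sum fun i c => φ (Finsupp.single i 1) • d c := by
  have hφ : φ f = f.sum fun i c => c * φ (Finsupp.single i 1) := by
    conv_lhs => rw [← f.sum_single, Finsupp.sum, map_sum]
    refine Finset.sum_congr rfl fun i _ => ?_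
    simp only [← smul_eq_mul, ← map_smul, Finsupp.smul_single_one]
  rw [hφ, map_finsuppSum, Finsupp.linearCombination_apply, ← Finsupp.sum_add]
  exact Finsupp.sum_congr fun i _ => d.leibniz _ _

variable {I J V : Type*} {d : Derivation k R (V →₀ R)} {x : V → R}

theorem exists_linearMap_unitriangular [Preorder J] (hx : ∀ v, d (x v) = Finsupp.single v 1)
    {e : J → I →₀ R} {v : J → V} (hv : Function.Injective v)
    (he : ∀ i j, i ≤ j → ∀ β, d (e i β) (v j) = 0) (φ : Module.Dual R (I →₀ R))
    (hφ : ∀ j, φ (e j) = x (v j)) :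
    ∃ P : (I →₀ R) →ₗ[R] J →₀ R, ∀ i j, i ≤ j → P (e i) j = Finsupp.single i 1 j := by
  refine ⟨Finsupp.lcomapDomain v hv ∘ₗ
    Finsupp.linearCombination R fun β => d (φ (Finsupp.single β 1)), fun i j hij => ?_⟩
  have hzero : ((e i).sum fun β c => φ (Finsupp.single β 1) • d c) (v j) = 0 := by
    rw [Finsupp.sum, Finsupp.finsetSum_apply]
    exact Finset.sum_eq_zero fun β _ => by rw [Finsupp.smul_apply, he i j hij, smul_zero]
  calc
    _ = d (φ (e i)) (v j) := by
      rw [derivation_dual_apply, Finsupp.add_apply, hzero, add_zero]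
      rfl
    _ = Finsupp.single i 1 j := by rw [hφ, hx, Finsupp.single_apply_left hv]

end Derivation

theorem exists_derivation_extension_of_formallyEtale {k A R N : Type*} [CommRing k] [CommRing A]
    [CommRing R] [Algebra k A] [Algebra A R] [Algebra k R] [IsScalarTower k A R]
    [Algebra.FormallyEtale A R] [AddCommGroup N] [Module k N] [Module A N] [Module R N]
    [IsScalarTower A R N] [IsScalarTower k A N] [IsScalarTower k R N] (D : Derivation k A N) :
    ∃ d : Derivation k R N, ∀ a, d (algebraMap A R a) = D a := by
  let L : Ω[R⁄k] →ₗ[R] N := D.liftKaehlerDifferential.liftBaseChange R ∘ₗ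
    (KaehlerDifferential.tensorKaehlerEquivOfFormallyEtale k A R).symm.toLinearMap
  refine ⟨L.compDer (KaehlerDifferential.D k R), fun a => ?_⟩
  simp [L, KaehlerDifferential.tensorKaehlerEquivOfFormallyEtale_symm_D_algebraMap]

theorem isDiscreteValuationRing_of_isLocalization_span_prime {A : Type*} [CommRing A] [IsDomain A]
    [WfDvdMonoid A] {t : A} (R : Type*) [CommRing R] [IsDomain R] [Algebra A R]
    (ht : Prime t) [(Ideal.span {t}).IsPrime] [IsLocalization.AtPrime R (Ideal.span {t})] :
    IsDiscreteValuationRing R := by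
  have hunit (a : A) : IsUnit (algebraMap A R a) ↔ ¬ t ∣ a := by
    rw [IsLocalization.AtPrime.isUnit_to_map_iff R (Ideal.span {t}), Ideal.mem_primeCompl_iff,
      Ideal.mem_span_singleton]
  have hprime : Prime (algebraMap A R t) := by
    have := IsLocalization.AtPrime.isLocalRing R (Ideal.span {t})
    have hne : algebraMap A R t ≠ 0 := (map_ne_zero_iff _ <| IsLocalization.injective R
      (Ideal.span {t}).primeCompl_le_nonZeroDivisors).2 ht.ne_zero
    rw [← Ideal.span_singleton_prime hne, ← Set.image_singleton, ← Ideal.map_span,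
      IsLocalization.AtPrime.map_eq_maximalIdeal (Ideal.span {t}) R]
    infer_instance
  refine .ofHasUnitMulPowIrreducibleFactorization ⟨_, hprime.irreducible, fun {x} hx => ?_⟩
  obtain ⟨⟨a, s⟩, hs⟩ := IsLocalization.surj (Ideal.span {t}).primeCompl x
  have ha : a ≠ 0 := by
    rintro rfl
    simp only [map_zero, mul_eq_zero] at hs
    exact hs.elim hx (IsLocalization.map_units R s).ne_zero
  obtain ⟨n, b, hb, rfl⟩ := WfDvdMonoid.max_power_factor ha ht.irreducible
  refine ⟨n, ?_⟩
  calc Associated (algebraMap A R t ^ n) (algebraMap A R (t ^ n * b)) := by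
        rw [map_mul, map_pow]
        exact associated_mul_unit_right _ _ ((hunit b).2 hb)
    Associated _ x := hs ▸ associated_mul_unit_left _ _ (IsLocalization.map_units R s)

theorem exists_isDiscreteValuationRing_derivation (V : Type u) [Infinite V] :
    ∃ (R : Type u) (_ : CommRing R) (_ : IsDomain R) (_ : Algebra ℚ R)
      (x : V → R) (d : Derivation ℚ R (V →₀ R)), IsDiscreteValuationRing R ∧ #R = #V ∧
        ∀ v, d (x v) = Finsupp.single v 1 := by
  let A := MvPolynomial V ℚ
  have ht : Prime (MvPolynomial.X (Classical.arbitrary V) : A) := MvPolynomial.X_prime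
  set t : A := MvPolynomial.X (Classical.arbitrary V)
  have hP : (Ideal.span {t}).IsPrime := (Ideal.span_singleton_prime ht.ne_zero).2 ht
  let R := Localization.AtPrime (Ideal.span {t})
  have : Algebra.FormallyEtale A R := .of_isLocalization (Ideal.span {t}).primeCompl
  obtain ⟨d, hd⟩ := exists_derivation_extension_of_formallyEtale (R := R)
    (MvPolynomial.mkDerivation ℚ fun v => (Finsupp.single v 1 : V →₀ R))
  refine ⟨R, inferInstance, inferInstance, inferInstance, fun v => algebraMap A R (.X v), d,
    isDiscreteValuationRing_of_isLocalization_span_prime R ht, ?_, fun v => ?_⟩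
  · rw [IsLocalization.cardinalMk R (Ideal.span {t}).primeCompl
      (Ideal.span {t}).primeCompl_le_nonZeroDivisors]
    simp [A]
  · rw [hd, MvPolynomial.mkDerivation_X]

section Whitehead

variable {R : Type u} [CommRing R]

open CategoryTheory in
theorem exists_d_comp_eq_of_subsingleton_ext1 {M N : Type u} [AddCommGroup M] [Module R M]
    [AddCommGroup N] [Module R N] [Subsingleton (ext1 R M N)]
    (P : ProjectiveResolution (ModuleCat.of R M)) (f : P.complex.X 1 ⟶ ModuleCat.of R N)
    (hf : P.complex.d 2 1 ≫ f = 0) : ∃ g, P.complex.d 1 0 ≫ g = f := by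
  have hzero : Limits.IsZero ((P.complex.linearYonedaObj R (ModuleCat.of R N)).homology 1) :=
    .of_iso (@ModuleCat.isZero_of_subsingleton R _ (ext1 R M N) _)
      (P.isoExt 1 (ModuleCat.of R N)).symm
  rw [← HomologicalComplex.exactAt_iff_isZero_homology,
    HomologicalComplex.exactAt_iff' _ 0 1 2 (by simp) (by simp),
    ShortComplex.moduleCat_exact_iff] at hzero
  exact hzero f hf

theorem domRestrict'_ker_surjective_of_projective {M N P F : Type*} [AddCommGroup M] [Module R M]
    [AddCommGroup N] [Module R N] [AddCommGroup P] [Module R P] [Module.Projective R P]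
    [AddCommGroup F] [Module R F] [Module.Projective R F]
    {ε : P →ₗ[R] M} (hε : Function.Surjective ε) {π : F →ₗ[R] M} (hπ : Function.Surjective π)
    (h : Function.Surjective (LinearMap.domRestrict' (M₂ := N) (LinearMap.ker ε))) :
    Function.Surjective (LinearMap.domRestrict' (M₂ := N) (LinearMap.ker π)) := by
  intro ψ
  obtain ⟨t, ht⟩ := Module.projective_lifting_property π ε hπ
  obtain ⟨s, hs⟩ := Module.projective_lifting_property ε π hε
  replace ht (y : P) : π (t y) = ε y := LinearMap.congr_fun ht y
  replace hs (y : F) : ε (s y) = π y := LinearMap.congr_fun hs y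
  let t' : LinearMap.ker ε →ₗ[R] LinearMap.ker π := t.restrict fun y hy => (ht y).trans hy
  let s' : LinearMap.ker π →ₗ[R] LinearMap.ker ε := s.restrict fun y hy => (hs y).trans hy
  let r : F →ₗ[R] LinearMap.ker π :=
    (LinearMap.id - t ∘ₗ s).codRestrict _ fun y => by simp [ht, hs]
  obtain ⟨g, hg⟩ := h (ψ ∘ₗ t')
  have hdecomp (k : LinearMap.ker π) : t' (s' k) + r k = k :=
    Subtype.ext (add_sub_cancel (t (s k)) (k : F))
  refine ⟨g ∘ₗ s + ψ ∘ₗ r, LinearMap.ext fun k => ?_⟩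
  calc g (s k) + ψ (r k) = ψ (t' (s' k)) + ψ (r k) :=
        congrArg (· + ψ (r k)) (LinearMap.congr_fun hg (s' k))
    _ = ψ k := by rw [← map_add, hdecomp]

open CategoryTheory in
theorem domRestrict'_ker_surjective_of_subsingleton_ext1 {M N : Type u} {F : Type*}
    [AddCommGroup M] [Module R M] [AddCommGroup N] [Module R N] [Subsingleton (ext1 R M N)]
    [AddCommGroup F] [Module R F] [Module.Projective R F] {π : F →ₗ[R] M}
    (hπ : Function.Surjective π) :
    Function.Surjective (LinearMap.domRestrict' (M₂ := N) (LinearMap.ker π)) := by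
  let P := ProjectiveResolution.of (ModuleCat.of R M)
  let ε : P.complex.X 0 ⟶ ModuleCat.of R M := P.π.f 0
  let d : P.complex.X 1 ⟶ P.complex.X 0 := P.complex.d 1 0
  have hε : Function.Surjective ε.hom :=
    (ModuleCat.epi_iff_surjective ε).1 (inferInstanceAs (Epi (P.π.f 0)))
  have hdε (z : P.complex.X 1) : ε.hom (d.hom z) = 0 :=
    congrArg (fun f => f.hom z) P.complex_d_comp_π_f_zero
  have hexact (y : P.complex.X 0) (hy : ε.hom y = 0) : ∃ z, d.hom z = y :=
    (ShortComplex.moduleCat_exact_iff _).1 P.exact₀ y hy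
  have : Module.Projective R (P.complex.X 0) := (IsProjective.iff_projective _).2 (P.projective 0)
  refine domRestrict'_ker_surjective_of_projective hε hπ fun χ => ?_
  let d' : P.complex.X 1 →ₗ[R] LinearMap.ker ε.hom := d.hom.codRestrict _ hdε
  obtain ⟨g, hg⟩ := exists_d_comp_eq_of_subsingleton_ext1 P (ModuleCat.ofHom (χ ∘ₗ d')) <| by
    ext z
    have hdd : d' ((P.complex.d 2 1).hom z) = 0 :=
      Subtype.ext (congrArg (fun f => f.hom z) (P.complex.d_comp_d 2 1 0))
    exact (congrArg χ hdd).trans (map_zero χ)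
  refine ⟨g.hom, LinearMap.ext fun ⟨y, hy⟩ => ?_⟩
  obtain ⟨z, rfl⟩ := hexact y hy
  exact congrArg (fun f => f.hom z) hg

end Whitehead

theorem exists_retraction_of_domRestrict'_surjective {k R I : Type*} {J V : Type u} [CommRing k]
    [CommRing R] [Algebra k R] [Infinite V] {d : Derivation k R (V →₀ R)} {x : V → R}
    (hx : ∀ v, d (x v) = Finsupp.single v 1) [LinearOrder J] [WellFoundedLT J]
    (hJ : ∀ j : J, #(Set.Iio j) < #V) {K : Submodule R (I →₀ R)} (b : Module.Basis J R K)
    (hK : Function.Surjective (LinearMap.domRestrict' (M₂ := R) K)) :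
    ∃ r : (I →₀ R) →ₗ[R] K, ∀ y : K, r y = y := by
  classical
  let vars (j : J) : Finset V :=
    (b j : I →₀ R).support.biUnion fun i => (d ((b j : I →₀ R) i)).support
  have hIic (j : J) : #(Set.Iic j) < #V := by
    rw [← Set.Iio_insert]
    exact mk_insert_le.trans_lt (add_lt_of_lt (aleph0_le_mk V) (hJ j)
      (one_lt_aleph0.trans_le (aleph0_le_mk V)))
  obtain ⟨v, hv, hvar⟩ := exists_injective_forall_notMem hJ
    (fun j => ⋃ i : Set.Iic j, (vars i : Set V)) fun j => mk_iUnion_finset_lt (hIic j) _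
  have hd (i j : J) (hij : i ≤ j) (β : I) : d ((b i : I →₀ R) β) (v j) = 0 := by
    by_contra hne
    refine hvar j (Set.mem_iUnion.2 ⟨⟨i, hij⟩, ?_⟩)
    have hβ : (b i : I →₀ R) β ≠ 0 := fun h => hne (by rw [h, map_zero, Finsupp.zero_apply])
    simpa [vars] using ⟨β, hβ, hne⟩
  obtain ⟨φ, hφ⟩ := hK (b.constr R fun j => x (v j))
  have hφb (j : J) : φ (b j) = x (v j) :=
    (LinearMap.congr_fun hφ (b j)).trans (b.constr_basis R _ j)
  obtain ⟨P, hP⟩ := exists_linearMap_unitriangular hx hv hd φ hφb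
  obtain ⟨B, hB⟩ := exists_basis_coe_eq_of_unitriangular (fun j => P (b j)) hP
  have hr : (B.constr R b ∘ₗ P) ∘ₗ K.subtype = LinearMap.id := b.ext fun j => calc
    B.constr R b (P (b j)) = B.constr R b (B j) := by rw [hB]
    _ = b j := B.constr_basis R b j
  exact ⟨B.constr R b ∘ₗ P, LinearMap.congr_fun hr⟩

theorem exists_basis_mk_Iio_lt {R N : Type u} [CommRing R] [Nontrivial R] [AddCommGroup N]
    [Module R N] [Module.Free R N] {c : Cardinal.{u}} (hN : #N ≤ c) :
    ∃ (J : Type u) (_ : LinearOrder J) (_ : WellFoundedLT J) (_ : Module.Basis J R N),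
      ∀ j : J, #(Set.Iio j) < c := by
  let b := Module.Free.chooseBasis R N
  obtain ⟨e⟩ := Cardinal.eq.1 (mk_ord_toType #(Module.Free.ChooseBasisIndex R N))
  let b' := b.reindex e.symm
  exact ⟨_, inferInstance, inferInstance, b', fun j =>
    (mk_Iio_lt j (by simp)).trans_le ((mk_le_of_injective b'.injective).trans hN)⟩

theorem IsWhitehead.free_of_derivation {k : Type*} {R V M : Type u} [CommRing k] [CommRing R]
    [IsDomain R] [IsPrincipalIdealRing R] [Algebra k R] [Infinite V] {d : Derivation k R (V →₀ R)}
    {x : V → R} (hx : ∀ v, d (x v) = Finsupp.single v 1) (hR : #R ≤ #V) [AddCommGroup M]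
    [Module R M] (hM : IsWhitehead R M) (hMV : #M ≤ #V) : Module.Free R M := by
  let π : (M →₀ R) →ₗ[R] M := Finsupp.linearCombination R id
  have hπ : Function.Surjective π := Finsupp.linearCombination_id_surjective R M
  obtain ⟨f⟩ := le_def M V |>.1 hMV
  have hF : #(M →₀ R) ≤ #V := (mk_le_of_injective (Finsupp.embDomain_injective f)).trans <| by
    rw [mk_finsupp_of_infinite, max_eq_left hR]
  have := free_submodule_finsupp (LinearMap.ker π)
  obtain ⟨J, _, _, b, hJ⟩ := exists_basis_mk_Iio_lt (R := R) (N := LinearMap.ker π)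
    ((mk_subtype_le _).trans hF)
  have : Subsingleton (ext1 R M R) := hM
  obtain ⟨r, hr⟩ := exists_retraction_of_domRestrict'_surjective hx hJ b
    (domRestrict'_ker_surjective_of_subsingleton_ext1 hπ)
  exact free_of_ker_retraction π hπ r hr

theorem exists_local_pid_whitehead_implies_free_general :
    ∀ κ : Cardinal.{u}, ℵ₀ ≤ κ →
    ∃ (R : Type u) (_ : CommRing R),
      IsDomain R ∧ IsPrincipalIdealRing R ∧ ¬ IsField R ∧ IsLocalRing R ∧
      #R = κ ∧
      ∀ (M : Type u) (_ : AddCommGroup M) (_ : Module R M),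
        #M ≤ κ → IsWhitehead R M → Module.Free R M := by
  intro κ hκ
  have : Infinite κ.out := infinite_iff.2 (by rwa [mk_out])
  obtain ⟨R, _, _, _, x, d, _, hR, hx⟩ := exists_isDiscreteValuationRing_derivation κ.out
  rw [mk_out] at hR
  refine ⟨R, inferInstance, inferInstance, inferInstance, IsDiscreteValuationRing.not_isField R,
    inferInstance, hR, fun M _ _ hM hW => hW.free_of_derivation hx ?_ ?_⟩
  · rw [hR, mk_out]
  · rwa [mk_out]

/-- Eklof–Shelah, Theorem 5: for every cardinal `κ ≥ ℵ₁` there is a local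
p.i.d. `R` of cardinality `κ` such that an `R`-module of cardinality `≤ κ` is Whitehead
only if it is free. -/
theorem exists_local_pid_whitehead_implies_free :
    ∀ κ : Cardinal.{0}, aleph 1 ≤ κ →
    ∃ (R : Type) (_ : CommRing R),
      IsDomain R ∧ IsPrincipalIdealRing R ∧ ¬ IsField R ∧ IsLocalRing R ∧
      #R = κ ∧
      ∀ (M : Type) (_ : AddCommGroup M) (_ : Module R M),
        #M ≤ κ → IsWhitehead R M → Module.Free R M := fun κ hκ =>
  exists_local_pid_whitehead_implies_free_general κ ((aleph0_le_aleph 1).trans hκ)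
end

section
/- Let ι be an index type of cardinality ℵ₂, let 𝓕 = ℚ(t_ν : ν ∈ ι) be the field of rational functions over ℚ in algebraically independent variables indexed by ι (i.e., the fraction field of the multivariate polynomial ring ℚ[t_ν : ν ∈ ι]), and let R = 𝓕[X] be the polynomial ring in one variable over 𝓕. Then every R-module A that is ℵ₁-generated, ℵ₁-free, and not free satisfies Ext¹_R(A, R) ≠ 0; in particular, every ℵ₁-generated ℵ₁-free Whitehead R-module is free. -/
/-!
Statement 0 (Eklof–Shelah, "Whitehead modules over large principal ideal domains",
Theorem 1): There is a slender (local, not `p`-adically complete) p.i.d. `R` of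
cardinality `2 ^ ℵ₁` such that every `ℵ₁`-free `ℵ₁`-generated `R`-module is a
Whitehead module.
-/

open Cardinal

universe u

/-!
Present `A` as `G / K` with `G` free on a small set; then `K` has a small basis `b`. All but few of
the automorphisms `σ_ν` translating one variable, `t_ν ↦ t_ν + 1`, fix every coordinate of every
`b_e`, so distinct such indices `ν(e)` can be chosen. If `A` is a Whitehead module, the functional
`b_e ↦ t_{ν(e)}` on `K` extends to `ψ : G → R`. On vectors fixed by `σ_{ν(e)}` the difference
`(σ_{ν(e)} - 1) ∘ ψ` agrees with an `R`-linear functional, which on `K` is the `e`-th coordinate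
with respect to `b`. These functionals assemble to a retraction `G → K`, so `A` is a direct summand
of `G`, hence free.
-/

section FreeSubmodule

open Set Finsupp Module

section LeadingTerms

variable {R I : Type*} [CommRing R] [LinearOrder I]

/-- The ideal of leading coefficients at position `i`: the `i`-th coordinates of those elements
of `K` whose coordinates beyond `i` vanish. -/
noncomputable def leadingIdeal (K : Submodule R (I →₀ R)) (i : I) : Ideal R :=
  (K ⊓ supported R R (Iic i)).map (lapply i)

theorem exists_mem_supported_Iic {s : Set I} {y : I →₀ R} (hys : y ∈ supported R R s)
    (hy : y ≠ 0) : ∃ m ∈ s, y ∈ supported R R (Iic m) := by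
  obtain ⟨m, hm, hmax⟩ := y.support.exists_max_image id (support_nonempty_iff.2 hy)
  exact ⟨m, hys hm, hmax⟩

theorem linearIndependent_of_mem_supported_Iic [NoZeroDivisors R] {E : Type*} {p : E → I}
    (hp : Function.Injective p) {v : E → I →₀ R} (hv : ∀ e, v e ∈ supported R R (Iic (p e)))
    (hne : ∀ e, v e (p e) ≠ 0) : LinearIndependent R v := by
  rw [linearIndependent_iff]
  intro c hc
  by_contra hc0
  obtain ⟨m, hm, hmax⟩ := c.support.exists_max_image p (support_nonempty_iff.2 hc0)
  have hsum : ∑ e ∈ c.support, c e * v e (p m) = 0 := by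
    simpa [linearCombination_apply, Finsupp.sum, finsetSum_apply] using DFunLike.congr_fun hc (p m)
  rw [Finset.sum_eq_single_of_mem m hm] at hsum
  · exact mul_ne_zero (mem_support_iff.1 hm) (hne m) hsum
  · intro e he hem
    have hlt : p e < p m := (hmax e he).lt_of_ne (hp.ne hem)
    rw [(mem_supported' R _).1 (hv e) _ hlt.not_ge, mul_zero]

theorem le_span_of_leadingIdeal_eq [WellFoundedLT I] {K : Submodule R (I →₀ R)}
    {x : I → I →₀ R} (hx : ∀ i, x i ∈ K ⊓ supported R R (Iic i))
    (hlead : ∀ i, leadingIdeal K i = Ideal.span {x i i}) :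
    K ≤ Submodule.span R (x '' {i | x i i ≠ 0}) := by
  suffices h : ∀ i, K ⊓ supported R R (Iic i) ≤ Submodule.span R (x '' {i | x i i ≠ 0}) by
    intro y hy
    rcases eq_or_ne y 0 with rfl | hy0
    · exact zero_mem _
    · obtain ⟨m, -, hm⟩ := exists_mem_supported_Iic (s := univ) (fun _ _ => mem_univ _) hy0
      exact h m ⟨hy, hm⟩
  intro i
  induction i using WellFoundedLT.induction with
  | ind i ih =>
    have hlow : ∀ y ∈ K ⊓ supported R R (Iic i), y i = 0 →
        y ∈ Submodule.span R (x '' {i | x i i ≠ 0}) := by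
      intro y hy hyi
      have hy_lt : y ∈ supported R R (Iio i) := fun j hj =>
        (hy.2 hj).lt_of_ne fun hji => mem_support_iff.1 hj (hji ▸ hyi)
      rcases eq_or_ne y 0 with rfl | hy0
      · exact zero_mem _
      · obtain ⟨m, hmi, hm⟩ := exists_mem_supported_Iic hy_lt hy0
        exact ih m hmi ⟨hy.1, hm⟩
    intro y hy
    have hyi : y i ∈ leadingIdeal K i := ⟨y, hy, rfl⟩
    obtain ⟨r, hr⟩ := Ideal.mem_span_singleton'.1 (hlead i ▸ hyi)
    by_cases hxi : x i i = 0
    · exact hlow y hy (by rw [← hr, hxi, mul_zero])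
    · rw [← sub_add_cancel y (r • x i)]
      exact add_mem
        (hlow _ (sub_mem hy (Submodule.smul_mem _ r (hx i))) (by simp [hr]))
        (Submodule.smul_mem _ r (Submodule.subset_span (mem_image_of_mem x hxi)))

end LeadingTerms

variable {R I M : Type*} [CommRing R] [IsDomain R] [IsPrincipalIdealRing R] [AddCommGroup M]
  [Module R M]

theorem exists_basis_submodule_finsupp_of_pid (K : Submodule R (I →₀ R)) :
    ∃ E : Set I, Nonempty (Basis E R K) := by
  obtain ⟨_, _⟩ := exists_wellFoundedLT I
  choose x hx hgen using fun i =>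
    Submodule.mem_map.1 (Submodule.IsPrincipal.generator_mem (leadingIdeal K i))
  have hlead : ∀ i, leadingIdeal K i = Ideal.span {x i i} := fun i => by
    rw [← Ideal.span_singleton_generator (leadingIdeal K i), ← hgen, lapply_apply]
  let E : Set I := {i | x i i ≠ 0}
  have hli : LinearIndependent R fun e : E => x e :=
    linearIndependent_of_mem_supported_Iic Subtype.val_injective (fun e => (hx e).2) fun e => e.2
  have hspan : Submodule.span R (range fun e : E => x e) = K :=
    le_antisymm (Submodule.span_le.2 (range_subset_iff.2 fun e => (hx e).1))
      (image_eq_range x E ▸ le_span_of_leadingIdeal_eq hx hlead)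
  exact ⟨E, ⟨(Basis.span hli).map (LinearEquiv.ofEq _ _ hspan)⟩⟩

theorem exists_basis_submodule_of_pid (b : Basis I R M) (N : Submodule R M) :
    ∃ E : Set I, Nonempty (Basis E R N) := by
  obtain ⟨E, ⟨c⟩⟩ := exists_basis_submodule_finsupp_of_pid (N.map b.repr.toLinearMap)
  exact ⟨E, ⟨c.map (b.repr.submoduleMap N).symm⟩⟩

theorem free_of_injective_of_pid {N : Type*} [AddCommGroup N] [Module R N] [Free R M]
    {f : N →ₗ[R] M} (hf : Function.Injective f) : Free R N := by
  obtain ⟨E, ⟨b⟩⟩ := exists_basis_submodule_of_pid (Free.chooseBasis R M) f.range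
  exact .of_basis (b.map (LinearEquiv.ofInjective f hf).symm)

end FreeSubmodule

section Ext

open CategoryTheory Limits

variable {C : Type*} [Category* C] [Abelian C]

theorem epi_biprod_desc_of_exact {S : ShortComplex C} (hS : S.Exact) [Epi S.g] {W : C}
    (a : W ⟶ S.X₂) [Epi (a ≫ S.g)] : Epi (biprod.desc a S.f) := by
  refine Preadditive.epi_of_cancel_zero _ fun u hu => ?_
  have hau : a ≫ u = 0 := by simpa using biprod.inl ≫= hu
  have hfu : S.f ≫ u = 0 := by simpa using biprod.inr ≫= hu
  have hdesc : hS.desc u hfu = 0 := by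
    rw [← cancel_epi (a ≫ S.g), Category.assoc, hS.g_desc, hau, comp_zero]
  rw [← hS.g_desc u hfu, hdesc, comp_zero]

theorem exact_shortComplex_of_exact_of_mono {T S : ShortComplex C} (τ : T ⟶ S) (hT : T.Exact)
    [Mono S.f] [Mono τ.τ₃] : (CommSq.mk τ.comm₁₂.symm).shortComplex.Exact := by
  rw [ShortComplex.exact_iff_exact_up_to_refinements]
  intro W (w : W ⟶ T.X₂ ⊞ S.X₁) (hw : w ≫ biprod.desc τ.τ₂ S.f = 0)
  have hsum : (w ≫ biprod.fst) ≫ τ.τ₂ + (w ≫ biprod.snd) ≫ S.f = 0 := by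
    simpa [biprod.desc_eq] using hw
  have hfst : (w ≫ biprod.fst) ≫ T.g = 0 := by
    rw [← cancel_mono τ.τ₃, zero_comp, Category.assoc, ← τ.comm₂₃, ← Category.assoc,
      eq_neg_of_add_eq_zero_left hsum, Preadditive.neg_comp, Category.assoc, S.zero,
      comp_zero, neg_zero]
  obtain ⟨W', π, hπ, r, hr⟩ := hT.exact_up_to_refinements _ hfst
  have hsnd : π ≫ w ≫ biprod.snd = -(r ≫ τ.τ₁) := by
    simp only [← cancel_mono S.f, Preadditive.neg_comp, Category.assoc, τ.comm₁₂,
      ← reassoc_of% hr]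
    rw [eq_neg_iff_add_eq_zero, add_comm]
    simpa using π ≫= hsum
  have hlift : π ≫ w = r ≫ biprod.lift T.f (-τ.τ₁) :=
    biprod.hom_ext _ _ (by simpa using hr) (by simpa using hsnd)
  exact ⟨W', π, hπ, r, hlift⟩

theorem isPushout_of_exact_of_isIso {T S : ShortComplex C} (τ : T ⟶ S) (hT : T.Exact)
    (hS : S.Exact) [Epi T.g] [Mono S.f] [IsIso τ.τ₃] : IsPushout T.f τ.τ₁ τ.τ₂ S.f := by
  have : Epi (τ.τ₂ ≫ S.g) := τ.comm₂₃ ▸ inferInstance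
  have := epi_of_epi τ.τ₂ S.g
  let sq : CommSq T.f τ.τ₁ τ.τ₂ S.f := ⟨τ.comm₁₂.symm⟩
  have hexact : sq.shortComplex.Exact := exact_shortComplex_of_exact_of_mono τ hT
  have : Epi sq.shortComplex.g := epi_biprod_desc_of_exact hS τ.τ₂
  exact .of_isColimit' sq (sq.isColimitEquivIsColimitCokernelCofork.symm hexact.gIsCokernel)

variable {R : Type*} [Ring R] [Linear R C] [EnoughProjectives C]

theorem exists_d_comp_eq_of_isZero_ext {X Y : C} (P : ProjectiveResolution X)
    (hExt : IsZero (((Ext R C 1).obj (Opposite.op X)).obj Y)) {z : P.complex.X 1 ⟶ Y}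
    (hz : P.complex.d 2 1 ≫ z = 0) : ∃ y : P.complex.X 0 ⟶ Y, P.complex.d 1 0 ≫ y = z := by
  have hexact := hExt.of_iso (P.isoExt (R := R) 1 Y).symm
  rw [← HomologicalComplex.exactAt_iff_isZero_homology,
    HomologicalComplex.exactAt_iff' _ 0 1 2 (by simp) (by simp),
    ShortComplex.moduleCat_exact_iff] at hexact
  exact hexact z hz

theorem exists_extension_of_isZero_ext {S : ShortComplex C} (hS : S.ShortExact) {Y : C}
    (hExt : IsZero (((Ext R C 1).obj (Opposite.op S.X₃)).obj Y)) (φ : S.X₁ ⟶ Y) :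
    ∃ ψ : S.X₂ ⟶ Y, S.f ≫ ψ = φ := by
  have := hS.epi_g
  have := hS.mono_f
  let P := projectiveResolution S.X₃
  let T := ShortComplex.mk (X₃ := S.X₃) (P.complex.d 1 0) (P.π.f 0) P.complex_d_comp_π_f_zero
  have hT : T.Exact := P.exact₀
  have : Epi T.g := inferInstanceAs (Epi (P.π.f 0))
  obtain ⟨a, ha⟩ : ∃ a : T.X₂ ⟶ S.X₂, a ≫ S.g = T.g := Projective.factors T.g S.g
  obtain ⟨b, hb⟩ := hS.exact.lift' (T.f ≫ a) (by rw [Category.assoc, ha, T.zero])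
  let τ : T ⟶ S :=
    { τ₁ := b, τ₂ := a, τ₃ := 𝟙 S.X₃, comm₁₂ := hb, comm₂₃ := ha.trans (Category.comp_id _).symm }
  have : IsIso τ.τ₃ := inferInstanceAs (IsIso (𝟙 S.X₃))
  have hpush : IsPushout T.f b a S.f := isPushout_of_exact_of_isIso τ hT hS.exact
  have hcocycle : P.complex.d 2 1 ≫ b = 0 := by
    have hd : P.complex.d 2 1 ≫ T.f = 0 := P.complex.d_comp_d 2 1 0
    rw [← cancel_mono S.f, Category.assoc, hb, reassoc_of% hd, zero_comp, zero_comp]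
  obtain ⟨y, hy⟩ := exists_d_comp_eq_of_isZero_ext P hExt (z := b ≫ φ)
    (by rw [reassoc_of% hcocycle, zero_comp])
  exact ⟨hpush.desc y φ hy, hpush.inr_desc y φ hy⟩

end Ext

theorem IsWhitehead.exists_extension {R K G A : Type u} [CommRing R] [AddCommGroup K] [Module R K]
    [AddCommGroup G] [Module R G] [AddCommGroup A] [Module R A] (hA : IsWhitehead R A)
    {f : K →ₗ[R] G} {g : G →ₗ[R] A} (hf : Function.Injective f) (hg : Function.Surjective g)
    (hfg : Function.Exact f g) (φ : K →ₗ[R] R) : ∃ ψ : G →ₗ[R] R, ψ ∘ₗ f = φ := by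
  let S := ModuleCat.shortComplexOfCompEqZero f g hfg.linearMap_comp_eq_zero
  have hS : S.ShortExact :=
    { exact := (CategoryTheory.ShortComplex.ShortExact.moduleCat_exact_iff_function_exact S).2 hfg
      mono_f := (ModuleCat.mono_iff_injective _).2 hf
      epi_g := (ModuleCat.epi_iff_surjective _).2 hg }
  have : Subsingleton (ext1 R A R) := hA
  obtain ⟨ψ, hψ⟩ := exists_extension_of_isZero_ext (R := R) hS
    (ModuleCat.isZero_of_subsingleton (ext1 R A R)) (ModuleCat.ofHom φ)
  exact ⟨ψ.hom, congrArg ModuleCat.Hom.hom hψ⟩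

/-- Elements `t j` of a ring together with endomorphisms `σ j` translating `t j` by `1` and fixing
the other `t i`, such that each ring element is moved by only finitely many `σ j`. The model is the
family of variables of a polynomial ring. -/
structure TranslationFamily (R J : Type*) [CommRing R] where
  t : J → R
  σ : J → R →+* R
  σ_t_self : ∀ j, σ j (t j) = t j + 1
  σ_t_of_ne : ∀ ⦃i j⦄, i ≠ j → σ i (t j) = t j
  finite_moved : ∀ r, {j | σ j r ≠ r}.Finite

namespace TranslationFamily

section Constructions

variable {R J : Type*} [CommRing R]

/-- The subfamily indexed along an embedding. -/
def reindex {E : Type*} (T : TranslationFamily R J) (f : E ↪ J) : TranslationFamily R E where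
  t e := T.t (f e)
  σ e := T.σ (f e)
  σ_t_self e := T.σ_t_self (f e)
  σ_t_of_ne _ _ h := T.σ_t_of_ne (f.injective.ne h)
  finite_moved r := (T.finite_moved r).preimage f.injective.injOn

/-- Extension of a translation family to a polynomial ring, coefficientwise. -/
noncomputable def polynomial (T : TranslationFamily R J) :
    TranslationFamily (Polynomial R) J where
  t j := Polynomial.C (T.t j)
  σ j := Polynomial.mapRingHom (T.σ j)
  σ_t_self j := by simp [T.σ_t_self]
  σ_t_of_ne i j h := by simp [T.σ_t_of_ne h]
  finite_moved p := by
    refine (p.support.finite_toSet.biUnion fun n _ => T.finite_moved (p.coeff n)).subset ?_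
    intro j hj
    obtain ⟨n, hn⟩ : ∃ n, T.σ j (p.coeff n) ≠ p.coeff n := by
      by_contra! h
      exact hj (Polynomial.ext fun n => by simpa using h n)
    have hn_supp : n ∈ p.support := by
      by_contra h
      exact hn (by rw [Polynomial.notMem_support_iff.1 h, map_zero])
    exact Set.mem_biUnion hn_supp hn

/-- Extension of a translation family of injective endomorphisms to the field of fractions. -/
noncomputable def fractionRing [IsDomain R] (T : TranslationFamily R J)
    (hT : ∀ j, Function.Injective (T.σ j)) : TranslationFamily (FractionRing R) J where
  t j := algebraMap R _ (T.t j)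
  σ j := IsFractionRing.map (hT j)
  σ_t_self j := by simp [IsFractionRing.map, T.σ_t_self]
  σ_t_of_ne i j h := by simp [IsFractionRing.map, T.σ_t_of_ne h]
  finite_moved x := by
    obtain ⟨p, q, -, rfl⟩ := IsFractionRing.div_surjective (A := R) x
    refine ((T.finite_moved p).union (T.finite_moved q)).subset fun j hj => ?_
    by_contra h
    simp only [Set.mem_union, Set.mem_ofPred_eq, not_or, not_not] at h
    exact hj (by simp [IsFractionRing.map, h.1, h.2])

end Constructions

section MvPolynomial

open MvPolynomial

variable {k ι : Type*} [CommRing k]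

variable (k) in
open Classical in
/-- The automorphism of a polynomial ring translating the variable `X i` by `1`. -/
noncomputable def translateVar (i : ι) : MvPolynomial ι k ≃ₐ[k] MvPolynomial ι k :=
  AlgEquiv.ofAlgHom (aeval fun j => X j + C (Pi.single i 1 j))
    (aeval fun j => X j - C (Pi.single i 1 j)) (by ext j; simp) (by ext j; simp)

theorem translateVar_X_self (i : ι) : translateVar k i (X i) = X i + 1 := by
  simp [translateVar]

theorem translateVar_X_of_ne {i j : ι} (h : i ≠ j) : translateVar k i (X j) = X j := by
  simp [translateVar, h.symm]

theorem translateVar_eq_self {i : ι} {p : MvPolynomial ι k} (hi : i ∉ p.vars) :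
    translateVar k i p = p :=
  hom_congr_vars (f₁ := (translateVar k i : MvPolynomial ι k →+* MvPolynomial ι k))
    (f₂ := RingHom.id _) (RingHom.ext fun c => (translateVar k i).commutes c)
    (fun _ hj _ => translateVar_X_of_ne fun h => hi (h ▸ hj)) rfl

variable (k ι)

/-- The variables of a polynomial ring, each with its translation. -/
noncomputable def mvPolynomial : TranslationFamily (MvPolynomial ι k) ι where
  t := X
  σ i := translateVar k i
  σ_t_self i := translateVar_X_self i
  σ_t_of_ne _ _ h := translateVar_X_of_ne h
  finite_moved p := p.vars.finite_toSet.subset fun _ hi => by_contra fun h =>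
    hi (translateVar_eq_self h)

/-- The translation family of the variables `t_i` in `𝓕[X]`, where `𝓕` is the field of fractions
of `k[t_i : i ∈ ι]`. -/
noncomputable def rationalFunctionPolynomial [IsDomain k] :
    TranslationFamily (Polynomial (FractionRing (MvPolynomial ι k))) ι :=
  ((mvPolynomial k ι).fractionRing fun i => (translateVar k i).injective).polynomial

end MvPolynomial

section Retraction

variable {R I E : Type*} [CommRing R]

/-- The linear map whose `e`-th coordinate agrees with `(σ e - 1) ∘ ψ` on the standard basis. It is
well defined into `E →₀ R` because a basis vector has only finitely many nonzero coordinates. -/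
noncomputable def differences (T : TranslationFamily R E) (ψ : (I →₀ R) →ₗ[R] R) :
    (I →₀ R) →ₗ[R] E →₀ R :=
  Finsupp.linearCombination R fun i =>
    Finsupp.ofSupportFinite (fun e => T.σ e (ψ (Finsupp.single i 1)) - ψ (Finsupp.single i 1))
      ((T.finite_moved (ψ (Finsupp.single i 1))).subset fun _ => sub_ne_zero.1)

theorem differences_apply_of_fixed (T : TranslationFamily R E) (ψ : (I →₀ R) →ₗ[R] R) {e : E}
    {x : I →₀ R} (hx : ∀ i, T.σ e (x i) = x i) : T.differences ψ x e = T.σ e (ψ x) - ψ x := by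
  have hψx : ψ x = ∑ i ∈ x.support, x i * ψ (Finsupp.single i 1) := by
    conv_lhs => rw [← Finsupp.sum_single x]
    simp only [Finsupp.sum, map_sum]
    refine Finset.sum_congr rfl fun i _ => ?_
    rw [← smul_eq_mul, ← map_smul, Finsupp.smul_single_one]
  calc T.differences ψ x e
      = ∑ i ∈ x.support, x i * (T.σ e (ψ (Finsupp.single i 1)) - ψ (Finsupp.single i 1)) := by
        simp [differences, Finsupp.linearCombination_apply, Finsupp.sum, Finsupp.finsetSum_apply,
          Finsupp.ofSupportFinite_coe]
    _ = T.σ e (ψ x) - ψ x := by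
        simp only [hψx, map_sum, map_mul, hx, mul_sub, Finset.sum_sub_distrib]

theorem exists_leftInverse_of_extension (T : TranslationFamily R E) {N : Type*} [AddCommGroup N]
    [Module R N] (b : Module.Basis E R N) {f : N →ₗ[R] I →₀ R}
    (hfix : ∀ e e' i, T.σ e (f (b e') i) = f (b e') i) {ψ : (I →₀ R) →ₗ[R] R}
    (hψ : ∀ e, ψ (f (b e)) = T.t e) : ∃ s : (I →₀ R) →ₗ[R] N, s ∘ₗ f = LinearMap.id := by
  have hdual (e' : E) : T.differences ψ (f (b e')) = Finsupp.single e' 1 := by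
    ext e
    rw [T.differences_apply_of_fixed ψ (hfix e e'), hψ]
    rcases eq_or_ne e e' with rfl | hne
    · rw [T.σ_t_self, add_sub_cancel_left, Finsupp.single_eq_same]
    · rw [T.σ_t_of_ne hne, sub_self, Finsupp.single_eq_of_ne hne]
  exact ⟨b.repr.symm.toLinearMap ∘ₗ T.differences ψ, b.ext fun e' => by simp [hdual]⟩

end Retraction

section Cardinality

variable {R : Type*} [CommRing R] {J P E : Type u} [Infinite J] (T : TranslationFamily R J)

theorem mk_fixing (hP : #P < #J) (m : P → R) : #{j | ∀ p, T.σ j (m p) = m p} = #J := by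
  have hmoved : #(⋃ p, {j | T.σ j (m p) ≠ m p} : Set J) < #J := by
    rcases finite_or_infinite P with _ | _
    · exact (Set.finite_iUnion fun p => T.finite_moved (m p)).lt_aleph0.trans_le (aleph0_le_mk J)
    · calc #(⋃ p, {j | T.σ j (m p) ≠ m p} : Set J)
          ≤ #P * ⨆ p, #{j | T.σ j (m p) ≠ m p} := mk_iUnion_le _
        _ ≤ #P * ℵ₀ := by
            gcongr
            exact ciSup_le' fun p => (T.finite_moved (m p)).lt_aleph0.le
        _ = #P := mul_aleph0_eq (aleph0_le_mk P)
        _ < #J := hP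
  rw [← mk_compl_of_infinite _ hmoved]
  congr 2
  ext j
  simp

theorem exists_embedding_fixing (hP : #P < #J) (m : P → R) (hE : #E ≤ #J) :
    ∃ f : E ↪ J, ∀ e p, T.σ (f e) (m p) = m p := by
  rw [← T.mk_fixing hP m, le_def] at hE
  obtain ⟨g⟩ := hE
  exact ⟨g.trans (.subtype _), fun e => (g e).2⟩

end Cardinality

end TranslationFamily

theorem IsWhitehead.free_of_isGenerated {R A J : Type u} [CommRing R] [IsDomain R]
    [IsPrincipalIdealRing R] [AddCommGroup A] [Module R A] (hA : IsWhitehead R A) [Infinite J]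
    (T : TranslationFamily R J) {κ : Cardinal.{u}} (hκ : κ < #J) (hgen : IsGenerated R A κ) :
    Module.Free R A := by
  obtain ⟨S, hS, hspan⟩ := hgen
  have hSJ : #S < #J := hS.trans_lt hκ
  let π := Finsupp.linearCombination R (Subtype.val : S → A)
  have hπ : Function.Surjective π := by
    rw [← LinearMap.range_eq_top, Finsupp.range_linearCombination, Subtype.range_coe, hspan]
  have hexact : Function.Exact π.ker.subtype π := π.exact_subtype_ker_map
  obtain ⟨E, ⟨b⟩⟩ := exists_basis_submodule_finsupp_of_pid π.ker
  have hEJ : #E < #J := (mk_set_le E).trans_lt hSJ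
  obtain ⟨f, hf⟩ := T.exists_embedding_fixing (P := E × S) (E := E)
    (by simpa using mul_lt_of_lt (aleph0_le_mk J) hEJ hSJ) (fun p => (b p.1 : S →₀ R) p.2) hEJ.le
  obtain ⟨ψ, hψ⟩ := hA.exists_extension (K := π.ker) π.ker.subtype_injective hπ hexact
    (b.constr ℕ fun e => T.t (f e))
  have hretract : ∃ s, s ∘ₗ π.ker.subtype = LinearMap.id :=
    (T.reindex f).exists_leftInverse_of_extension (N := π.ker) b (fun e e' i => hf e (e', i))
      fun e => (LinearMap.congr_fun hψ (b e)).trans (b.constr_basis _ _ e)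
  obtain ⟨s, hs⟩ : ∃ s, π ∘ₗ s = LinearMap.id :=
    ((hexact.split_tfae (M := π.ker) π.ker.subtype_injective hπ).out 0 1).2 hretract
  exact free_of_injective_of_pid
    (Function.LeftInverse.injective (g := π) fun x => LinearMap.congr_fun hs x)

theorem ext_ne_zero_of_aleph_one_free_not_free_general {R A J : Type u} [CommRing R] [IsDomain R]
    [IsPrincipalIdealRing R] [AddCommGroup A] [Module R A] [Infinite J]
    (T : TranslationFamily R J) {κ : Cardinal.{u}} (hκ : κ < #J) (hgen : IsGenerated R A κ)
    (hnotfree : ¬ Module.Free R A) : ¬ IsWhitehead R A :=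
  fun hA => hnotfree (hA.free_of_isGenerated T hκ hgen)

/-- Eklof–Shelah, proof of Theorem 2: for `R = 𝓕[X]` where
`𝓕 = ℚ(t_ν : ν < ω₂)` is the field of rational functions in `ℵ₂` algebraically
independent variables over `ℚ`, every `ℵ₁`-generated `ℵ₁`-free non-free `R`-module `A`
satisfies `Ext¹_R(A, R) ≠ 0`; in particular every `ℵ₁`-generated `ℵ₁`-free Whitehead
`R`-module is free. -/
theorem ext_ne_zero_of_aleph_one_free_not_free (ι : Type u) (hι : #ι = aleph 2)
    (A : Type u) (_ : AddCommGroup A)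
    (_ : Module (Polynomial (FractionRing (MvPolynomial ι ℚ))) A)
    (hgen : IsGenerated (Polynomial (FractionRing (MvPolynomial ι ℚ))) A (aleph 1))
    (hfree : IsKappaFree (Polynomial (FractionRing (MvPolynomial ι ℚ))) A (aleph 1))
    (hnotfree : ¬ Module.Free (Polynomial (FractionRing (MvPolynomial ι ℚ))) A) :
    ¬ IsWhitehead (Polynomial (FractionRing (MvPolynomial ι ℚ))) A := by
  have hlt : aleph 1 < #ι := hι ▸ aleph_lt_aleph.2 one_lt_two
  have : Infinite ι := infinite_iff.2 ((aleph0_le_aleph 1).trans hlt.le)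
  exact ext_ne_zero_of_aleph_one_free_not_free_general
    (TranslationFamily.rationalFunctionPolynomial ℚ ι) hlt hgen hnotfree
end

section
/- Let ι be an index type of cardinality ℵ₁, let 𝓕₁ = ℚ(t_ν : ν ∈ ι) be the field of rational functions over ℚ in algebraically independent variables indexed by ι (the fraction field of the multivariate polynomial ring ℚ[t_ν : ν ∈ ι]), and let R = 𝓕₁[X] be the polynomial ring in one variable over 𝓕₁. Then R is a principal ideal domain of cardinality ℵ₁, and every R-module A that is ℵ₁-generated, ℵ₁-free, and not free satisfies Ext¹_R(A, R) ≠ 0; in particular, every ℵ₁-generated ℵ₁-free Whitehead R-module is free. -/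
/-!
Statement 0 (Eklof–Shelah, "Whitehead modules over large principal ideal domains",
Theorem 1): There is a slender (local, not `p`-adically complete) p.i.d. `R` of
cardinality `2 ^ ℵ₁` such that every `ℵ₁`-free `ℵ₁`-generated `R`-module is a
Whitehead module.
-/

open Cardinal

universe u

/-!
Present `A` by `q : (ι →₀ R) → A`, and let `d : R → (ι →₀ R)` be a derivation taking elements `t i`
to the standard basis vectors. If `Ext¹(A, R) = 0`, then for a basis `b` of `ker q` and any `τ` the
functional `b μ ↦ t (τ μ)` extends to a functional `g` on `ι →₀ R`. By the Leibniz rule `d ∘ g` is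
an `R`-linear map plus a term that only involves the differentials of the coordinates. When `τ κ`
avoids the finitely many indices at which the differentials of the coordinates of `b μ` are nonzero,
for every `μ ≤ κ`, the linear part, read off in the coordinates `τ κ`, is unitriangular on `b`.
Hence `ker q` is a direct summand of `ι →₀ R`, so `A` is isomorphic to a submodule of a free module,
and is free. Such a `τ` exists because, in a well-order of minimal type, every `κ` has fewer than
`#ι` predecessors; for `R = k(t_i : i ∈ ι)[X]`, partial differentiation in the `t_i` provides `d`.
-/

universe v

section Triangular

variable {R ι : Type*} [LinearOrder ι]

theorem exists_leading_index [Zero R] {x : ι →₀ R} (hx : x ≠ 0) :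
    ∃ k, x k ≠ 0 ∧ ∀ j, k < j → x j = 0 := by
  obtain ⟨k, hk, hmax⟩ := x.support.exists_max_image id (Finsupp.support_nonempty_iff.2 hx)
  exact ⟨k, Finsupp.mem_support_iff.1 hk, fun j hkj => Finsupp.notMem_support_iff.1 fun hj =>
    (hmax j hj).not_gt hkj⟩

/-- Lower triangularity of the square matrix whose rows are the finitely supported `v i`. -/
def IsLowerTriangular [Zero R] (v : ι → ι →₀ R) : Prop :=
  ∀ ⦃i j⦄, i < j → v i j = 0

theorem IsLowerTriangular.linearIndepOn [Ring R] {v : ι → ι →₀ R} (hv : IsLowerTriangular v)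
    {s : Set ι} (hs : ∀ i ∈ s, IsRightRegular (v i i)) : LinearIndepOn R v s := by
  rw [LinearIndepOn, linearIndependent_iff]
  intro l hl
  by_contra hne
  obtain ⟨m, hm, hmax⟩ := exists_leading_index hne
  have hsum : l.sum (fun k r => r * v k m) = 0 := by
    simpa [Finsupp.linearCombination_apply, Finsupp.sum] using DFunLike.congr_fun hl (m : ι)
  have hother : ∀ k, l k ≠ 0 → k ≠ m → l k * v k m = 0 := fun k hk hkm => by
    rw [hv ((le_of_not_gt fun h => hk (hmax k h)).lt_of_ne hkm), mul_zero]
  rw [Finsupp.sum_eq_single m hother (fun _ => zero_mul _)] at hsum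
  exact hm ((hs m m.2).mul_right_eq_zero_iff.1 hsum)

theorem IsLowerTriangular.mem_span [WellFoundedLT ι] [CommRing R] {v : ι → ι →₀ R}
    (hv : IsLowerTriangular v) {s : Set ι} (hs : ∀ i ∉ s, v i i = 0)
    {N : Submodule R (ι →₀ R)} (hvN : ∀ i, v i ∈ N)
    (hdvd : ∀ i, ∀ x ∈ N, (∀ j, i < j → x j = 0) → v i i ∣ x i) {x : ι →₀ R} (hx : x ∈ N) :
    x ∈ Submodule.span R (v '' s) := by
  have of_leading : ∀ m, ∀ x ∈ N, (∀ j, m < j → x j = 0) → x ∈ Submodule.span R (v '' s) := by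
    intro m
    induction m using WellFoundedLT.induction with | ind m ih
    intro x hxN hxm
    obtain ⟨r, hr, hrv⟩ : ∃ r, x m = r * v m m ∧ r • v m ∈ Submodule.span R (v '' s) := by
      obtain ⟨r, hr⟩ := hdvd m x hxN hxm
      by_cases hm : m ∈ s
      · exact ⟨r, by rw [hr, mul_comm],
          Submodule.smul_mem _ _ (Submodule.subset_span (Set.mem_image_of_mem v hm))⟩
      · exact ⟨0, by simp [hr, hs m hm], by simp⟩
    have hdiff : ∀ j, m ≤ j → (x - r • v m) j = 0 := by
      intro j hmj
      rcases hmj.eq_or_lt with rfl | hmj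
      · simp [hr]
      · simp [hxm j hmj, hv hmj]
    rw [← sub_add_cancel x (r • v m)]
    refine add_mem ?_ hrv
    rcases eq_or_ne (x - r • v m) 0 with h0 | h0
    · exact h0 ▸ zero_mem _
    · obtain ⟨k, hk, hmax⟩ := exists_leading_index h0
      exact ih k (not_le.1 fun h => hk (hdiff k h)) _ (sub_mem hxN (N.smul_mem r (hvN m))) hmax
  rcases eq_or_ne x 0 with rfl | h0
  · exact zero_mem _
  · obtain ⟨k, -, hk⟩ := exists_leading_index h0
    exact of_leading k x hx hk

theorem IsLowerTriangular.bijective_of_diag_eq_one [WellFoundedLT ι] [CommRing R]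
    {M : Type*} [AddCommGroup M] [Module R M] (b : Module.Basis ι R M) (f : M →ₗ[R] ι →₀ R)
    (hf : IsLowerTriangular (f ∘ b)) (hdiag : ∀ i, f (b i) i = 1) : Function.Bijective f := by
  refine f.bijective_of_linearIndependent_of_span_eq_top b.span_eq ?_ ?_
  · exact linearIndepOn_univ_iff.1 (hf.linearIndepOn fun i _ => hdiag i ▸ isRegular_one.right)
  · rw [eq_top_iff, ← Set.image_univ]
    exact fun x hx => hf.mem_span (fun i hi => absurd (Set.mem_univ i) hi) (N := ⊤)
      (fun _ => trivial) (fun i y _ _ => (hdiag i ▸ one_dvd (y i) :)) hx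

end Triangular

section PrincipalIdealDomain

variable {R : Type*} [CommRing R] [IsDomain R] [IsPrincipalIdealRing R]

theorem exists_basis_submodule_finsupp {ι : Type*} (N : Submodule R (ι →₀ R)) :
    ∃ I : Set ι, Nonempty (Module.Basis I R N) := by
  obtain ⟨_, _, -⟩ := exists_ord_eq_type_lt ι
  -- `v i` realises a generator of the ideal of `i`-th coordinates of the elements of `N` that
  -- vanish above `i`.
  have hgen : ∀ i, ∃ y ∈ N, (∀ j, i < j → y j = 0) ∧
      ∀ x ∈ N, (∀ j, i < j → x j = 0) → y i ∣ x i := by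
    intro i
    let 𝔞 : Ideal R := (N ⊓ Finsupp.supported R R (Set.Iic i)).map (Finsupp.lapply i)
    have hmem : ∀ x, x ∈ Finsupp.supported R R (Set.Iic i) ↔ ∀ j, i < j → x j = 0 := fun x => by
      simp [Finsupp.mem_supported']
    obtain ⟨y, ⟨hyN, hy⟩, hyi⟩ := Submodule.IsPrincipal.generator_mem 𝔞
    refine ⟨y, hyN, (hmem y).1 hy, fun x hxN hx => ?_⟩
    have hxi : x i ∈ 𝔞 := ⟨x, ⟨hxN, (hmem x).2 hx⟩, rfl⟩
    exact hyi ▸ (Submodule.IsPrincipal.mem_iff_generator_dvd 𝔞).1 hxi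
  choose v hvN hv hdvd using hgen
  have htri : IsLowerTriangular v := fun i j hij => hv i j hij
  have hspan : Submodule.span R (v '' {i | v i i ≠ 0}) = N :=
    le_antisymm (Submodule.span_le.2 (Set.image_subset_iff.2 fun i _ => hvN i))
      fun x hx => htri.mem_span (fun i => not_not.1) hvN hdvd hx
  have hindep : LinearIndepOn R v {i | v i i ≠ 0} :=
    htri.linearIndepOn fun i hi => (IsRegular.of_ne_zero hi).right
  rw [Set.image_eq_range] at hspan
  exact ⟨_, ⟨(Module.Basis.span hindep).map (LinearEquiv.ofEq _ _ hspan)⟩⟩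

theorem free_submodule_of_free {L : Type*} [AddCommGroup L] [Module R L] [Module.Free R L]
    (N : Submodule R L) : Module.Free R N := by
  let e := (Module.Free.chooseBasis R L).repr
  obtain ⟨I, ⟨b⟩⟩ := exists_basis_submodule_finsupp (N.map e.toLinearMap)
  exact Module.Free.of_basis (b.map (e.submoduleMap N).symm)

theorem free_of_bijective_domRestrict_ker {L A F : Type*} [AddCommGroup L] [Module R L]
    [Module.Free R L] [AddCommGroup A] [Module R A] [AddCommGroup F] [Module R F]
    {q : L →ₗ[R] A} (hq : Function.Surjective q) (p : L →ₗ[R] F)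
    (hp : Function.Bijective (p.domRestrict (LinearMap.ker q))) : Module.Free R A := by
  let e := LinearEquiv.ofBijective _ hp
  have hcompl : IsCompl (LinearMap.ker q) (LinearMap.ker p) := by
    rw [← e.symm.ker_comp p]
    exact LinearMap.isCompl_of_proj fun x => e.symm_apply_apply x
  have := free_submodule_of_free (LinearMap.ker p)
  exact Module.Free.of_equiv <|
    (Submodule.quotientEquivOfIsCompl _ _ hcompl).symm ≪≫ₗ q.quotKerEquivOfSurjective hq

end PrincipalIdealDomain

section Ext

variable {R : Type u} [CommRing R]

theorem exists_extension_ker_of_projective {P L A N : Type*} [AddCommGroup P] [Module R P]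
    [Module.Projective R P] [AddCommGroup L] [Module R L] [Module.Projective R L]
    [AddCommGroup A] [Module R A] [AddCommGroup N] [Module R N] {p : P →ₗ[R] A} {q : L →ₗ[R] A}
    (hp : Function.Surjective p) (hq : Function.Surjective q)
    (hext : ∀ f : LinearMap.ker p →ₗ[R] N, ∃ g : P →ₗ[R] N, g.domRestrict (LinearMap.ker p) = f)
    (f : LinearMap.ker q →ₗ[R] N) : ∃ g : L →ₗ[R] N, g.domRestrict (LinearMap.ker q) = f := by
  obtain ⟨u, hu⟩ := Module.projective_lifting_property q p hq
  obtain ⟨v, hv⟩ := Module.projective_lifting_property p q hp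
  have hqu : ∀ x, q (u x) = p x := DFunLike.congr_fun hu
  have hpv : ∀ x, p (v x) = q x := DFunLike.congr_fun hv
  obtain ⟨g, hg⟩ := hext (f ∘ₗ u.restrict fun x hx => (hqu x).trans hx)
  let w : L →ₗ[R] LinearMap.ker q :=
    (u ∘ₗ v - LinearMap.id).codRestrict _ fun x => by simp [hqu, hpv]
  refine ⟨g ∘ₗ v - f ∘ₗ w, LinearMap.ext fun x => ?_⟩
  have hvx : v x ∈ LinearMap.ker p := (hpv x).trans x.2
  have hgv : g (v x) = f ⟨u (v x), (hqu (v x)).trans hvx⟩ := DFunLike.congr_fun hg ⟨v x, hvx⟩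
  simp only [LinearMap.domRestrict_apply, LinearMap.sub_apply, LinearMap.comp_apply, hgv,
    ← map_sub]
  congr 1
  exact Subtype.ext (by simp [w])

open CategoryTheory in
theorem exists_extension_ker_projectiveResolution {A N : Type u} [AddCommGroup A] [Module R A]
    [AddCommGroup N] [Module R N] [Subsingleton (ext1 R A N)]
    (P : ProjectiveResolution (ModuleCat.of R A)) (f : LinearMap.ker (P.π.f 0).hom →ₗ[R] N) :
    ∃ g : P.complex.X 0 →ₗ[R] N, g.domRestrict (LinearMap.ker (P.π.f 0).hom) = f := by
  have hzero : Limits.IsZero ((P.complex.linearYonedaObj R (ModuleCat.of R N)).homology 1) :=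
    (ModuleCat.isZero_of_subsingleton (ext1 R A N)).of_iso (P.isoExt 1 (ModuleCat.of R N)).symm
  rw [← HomologicalComplex.exactAt_iff_isZero_homology,
    HomologicalComplex.exactAt_iff' _ 0 1 2 (by simp) (by simp),
    ShortComplex.moduleCat_exact_iff] at hzero
  have factor : ∀ h : P.complex.X 1 ⟶ ModuleCat.of R N, P.complex.d 2 1 ≫ h = 0 →
      ∃ g : P.complex.X 0 ⟶ ModuleCat.of R N, P.complex.d 1 0 ≫ g = h := hzero
  let δ : P.complex.X 1 →ₗ[R] LinearMap.ker (P.π.f 0).hom := (P.complex.d 1 0).hom.codRestrict _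
    fun x => ConcreteCategory.congr_hom P.complex_d_comp_π_f_zero x
  have hδ : ∀ y, ∃ x, δ x = y := fun y =>
    ((ShortComplex.moduleCat_exact_iff _).1 P.exact₀ y y.2).imp fun _ => Subtype.ext
  obtain ⟨g, hg⟩ := factor (ModuleCat.ofHom (f ∘ₗ δ)) <| by
    ext x
    have hδd : δ ((P.complex.d 2 1).hom x) = 0 :=
      Subtype.ext (ConcreteCategory.congr_hom (P.complex.d_comp_d 2 1 0) x)
    exact (congrArg f hδd).trans f.map_zero
  refine ⟨g.hom, LinearMap.ext fun y => ?_⟩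
  obtain ⟨x, rfl⟩ := hδ y
  exact ConcreteCategory.congr_hom hg x

open CategoryTheory in
theorem exists_extension_ker_of_subsingleton_ext1 {A N : Type u} [AddCommGroup A] [Module R A]
    [AddCommGroup N] [Module R N] [Subsingleton (ext1 R A N)] {L : Type*} [AddCommGroup L]
    [Module R L] [Module.Projective R L] {q : L →ₗ[R] A} (hq : Function.Surjective q)
    (f : LinearMap.ker q →ₗ[R] N) : ∃ g : L →ₗ[R] N, g.domRestrict (LinearMap.ker q) = f := by
  let P : ProjectiveResolution (ModuleCat.of R A) := projectiveResolution _
  have : Module.Projective R (P.complex.X 0) :=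
    (IsProjective.iff_projective _).2 (P.projective 0)
  exact exists_extension_ker_of_projective
    ((ModuleCat.epi_iff_surjective (P.π.f 0)).1 inferInstance) hq
    (exists_extension_ker_projectiveResolution P) f

end Ext

section Cardinal

variable {I ι : Type u} [Infinite ι]

theorem mk_biUnion_lt_of_finite {s : Set I} (hs : #s < #ι) (F : I → Set ι)
    (hF : ∀ i, (F i).Finite) : #(⋃ i ∈ s, F i) < #ι := by
  rcases (aleph0_le_mk ι).eq_or_lt with h0 | h0
  · rw [← h0, lt_aleph0_iff_set_finite] at hs ⊢
    exact hs.biUnion fun i _ => hF i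
  · refine (mk_biUnion_le F s).trans_lt (mul_lt_of_lt h0.le hs (lt_of_le_of_lt ?_ h0))
    exact ciSup_le' fun i => (hF i).lt_aleph0.le

theorem exists_injective_notMem (hI : #I ≤ #ι) (Z : I → Set ι) (hZ : ∀ i, #(Z i) < #ι) :
    ∃ τ : I → ι, Function.Injective τ ∧ ∀ i, τ i ∉ Z i := by
  obtain ⟨e⟩ : #(I × ι) ≤ #ι := by
    rw [← mul_def]
    exact (mul_le_mul_left hI _).trans (mul_eq_self (aleph0_le_mk ι)).le
  have hex : ∀ i, ∃ j, e (i, j) ∉ Z i := by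
    intro i
    by_contra! h
    have hinj : Function.Injective fun j => (⟨e (i, j), h j⟩ : Z i) := fun j j' hj =>
      congrArg Prod.snd (e.injective (Subtype.ext_iff.1 hj))
    exact (mk_le_of_injective hinj).not_gt (hZ i)
  choose j hj using hex
  exact ⟨fun i => e (i, j i), fun i i' h => congrArg Prod.fst (e.injective h), hj⟩

theorem exists_wellOrder_injective_notMem (hI : #I ≤ #ι) (F : I → Set ι)
    (hF : ∀ i, (F i).Finite) : ∃ (_ : LinearOrder I) (_ : WellFoundedLT I) (τ : I → ι),
      Function.Injective τ ∧ ∀ i j, i ≤ j → τ j ∉ F i := by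
  obtain ⟨hlin, hwf, hord⟩ := exists_ord_eq_type_lt I
  have hIic : ∀ j : I, #(Set.Iic j) < #ι := fun j => by
    rw [← Set.Iio_insert]
    exact mk_insert_le.trans_lt (add_lt_of_lt (aleph0_le_mk ι) ((mk_Iio_lt j hord).trans_le hI)
      (one_lt_aleph0.trans_le (aleph0_le_mk ι)))
  obtain ⟨τ, hτ, hτF⟩ := exists_injective_notMem hI (fun j => ⋃ i ∈ Set.Iic j, F i)
    fun j => mk_biUnion_lt_of_finite (hIic j) F hF
  exact ⟨hlin, hwf, τ, hτ, fun i j hij h => hτF j (Set.mem_biUnion hij h)⟩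

end Cardinal

theorem IsGenerated.exists_span_range_eq_top {R A : Type (max u v)} {ι : Type u} [Semiring R]
    [AddCommMonoid A] [Module R A] (h : IsGenerated R A (lift.{v} #ι)) :
    ∃ a : ι → A, Submodule.span R (Set.range a) = ⊤ := by
  obtain ⟨S, hS, hspan⟩ := h
  rw [← mk_uLift] at hS
  obtain ⟨f⟩ := hS
  let e : S ↪ ι := f.trans Equiv.ulift.toEmbedding
  refine ⟨Function.extend e Subtype.val 0, eq_top_mono (Submodule.span_mono fun x hx => ?_) hspan⟩
  exact ⟨e ⟨x, hx⟩, e.injective.extend_apply _ _ _⟩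

section Derivation

variable {k R : Type*} [CommSemiring k] [CommRing R] [Algebra k R] {σ : Type*}

theorem derivation_comp_linearMap_apply {M : Type*} [AddCommGroup M] [Module k M] [Module R M]
    (d : Derivation k R M) (g : (σ →₀ R) →ₗ[R] R) (x : σ →₀ R) :
    d (g x) = Finsupp.linearCombination R (fun ν => d (g (Finsupp.single ν 1))) x +
      x.sum fun ν r => g (Finsupp.single ν 1) • d r := by
  have hgx : g x = x.sum fun ν r => r * g (Finsupp.single ν 1) := by
    conv_lhs => rw [← x.sum_single, map_finsuppSum]
    exact Finsupp.sum_congr fun ν _ => by rw [← smul_eq_mul, ← map_smul, Finsupp.smul_single_one]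
  rw [hgx, map_finsuppSum, Finsupp.linearCombination_apply, ← Finsupp.sum_add]
  exact Finsupp.sum_congr fun ν _ => d.leibniz _ _

theorem free_of_derivation_basis_ker [IsDomain R] [IsPrincipalIdealRing R] {ι I A : Type*}
    [LinearOrder I] [WellFoundedLT I] [AddCommGroup A] [Module R A]
    (d : Derivation k R (ι →₀ R)) {q : (σ →₀ R) →ₗ[R] A} (hq : Function.Surjective q)
    (b : Module.Basis I R (LinearMap.ker q)) {τ : I → ι} (hτ : Function.Injective τ)
    (hτb : ∀ μ κ, μ ≤ κ → ∀ ν, d ((b μ : σ →₀ R) ν) (τ κ) = 0) {g : (σ →₀ R) →ₗ[R] R}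
    (hg : ∀ μ, d (g (b μ)) = Finsupp.single (τ μ) 1) : Module.Free R A := by
  let p : (σ →₀ R) →ₗ[R] I →₀ R := Finsupp.lcomapDomain τ hτ ∘ₗ
    Finsupp.linearCombination R fun ν => d (g (Finsupp.single ν 1))
  have hp : ∀ μ κ, μ ≤ κ → p (b μ) κ = Finsupp.single μ 1 κ := by
    intro μ κ hμκ
    have h := DFunLike.congr_fun (derivation_comp_linearMap_apply d g (b μ)) (τ κ)
    have hcoeff : ((b μ : σ →₀ R).sum fun ν r => g (Finsupp.single ν 1) • d r) (τ κ) = 0 := by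
      simp [Finsupp.sum, Finsupp.finsetSum_apply, hτb μ κ hμκ]
    rw [hg, Finsupp.add_apply, hcoeff, add_zero] at h
    rw [← Finsupp.single_apply_left hτ, h]
    rfl
  have hbij : Function.Bijective (p.domRestrict (LinearMap.ker q)) := by
    refine IsLowerTriangular.bijective_of_diag_eq_one (M := LinearMap.ker q) b _
      (fun μ κ h => ?_) fun μ => ?_
    · exact (hp μ κ h.le).trans (Finsupp.single_eq_of_ne h.ne')
    · exact (hp μ μ le_rfl).trans Finsupp.single_eq_same
  exact free_of_bijective_domRestrict_ker hq p hbij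

end Derivation

theorem IsWhitehead.free_of_derivation_s9 {k : Type*} {R A : Type (max u v)} {ι : Type u}
    [Infinite ι] [CommSemiring k] [CommRing R] [IsDomain R] [IsPrincipalIdealRing R] [Algebra k R]
    (d : Derivation k R (ι →₀ R)) {t : ι → R} (ht : ∀ i, d (t i) = Finsupp.single i 1)
    [AddCommGroup A] [Module R A] (hA : IsWhitehead R A)
    (hgen : IsGenerated R A (lift.{v} #ι)) : Module.Free R A := by
  classical
  obtain ⟨a, ha⟩ := hgen.exists_span_range_eq_top
  let q : (ι →₀ R) →ₗ[R] A := Finsupp.linearCombination R a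
  have hq : Function.Surjective q := by
    rw [← LinearMap.range_eq_top, Finsupp.range_linearCombination, ha]
  obtain ⟨I, ⟨b⟩⟩ := exists_basis_submodule_finsupp (LinearMap.ker q)
  obtain ⟨_, _, τ, hτ, hτb⟩ := exists_wellOrder_injective_notMem (mk_set_le I)
    (fun μ => ⋃ ν ∈ ((b μ : ι →₀ R).support : Set ι), ((d ((b μ : ι →₀ R) ν)).support : Set ι))
    fun μ => (Finset.finite_toSet _).biUnion fun ν _ => Finset.finite_toSet _
  have : Subsingleton (ext1 R A R) := hA
  obtain ⟨g, hg⟩ := exists_extension_ker_of_subsingleton_ext1 hq (b.constr R (t ∘ τ))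
  refine free_of_derivation_basis_ker d hq b hτ (g := g) (fun μ κ hμκ ν => ?_) fun μ => ?_
  · by_contra h
    refine hτb μ κ hμκ (Set.mem_biUnion (x := ν) (Finsupp.mem_support_iff.2 fun h0 => h ?_)
        (Finsupp.mem_support_iff.2 h))
    simp [h0]
  · have hgb : g (b μ) = t (τ μ) := by
      simpa using DFunLike.congr_fun hg (b μ)
    rw [hgb, ht]

attribute [local instance] Polynomial.algebra in
theorem exists_derivation_polynomial_eq_single (k ι S : Type*) [CommRing k] [CommRing S]
    [Algebra (MvPolynomial ι k) S] [Algebra.FormallyEtale (MvPolynomial ι k) S] [Algebra k S]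
    [IsScalarTower k (MvPolynomial ι k) S] :
    ∃ (d : Derivation k (Polynomial S) (ι →₀ Polynomial S)) (t : ι → Polynomial S),
      ∀ i, d (t i) = Finsupp.single i 1 := by
  let bS : Module.Basis ι S (Ω[S⁄k]) :=
    (KaehlerDifferential.isBaseChange_of_formallyEtale k (MvPolynomial ι k) S).basis
      (KaehlerDifferential.mvPolynomialBasis k ι)
  let s : ι → S := fun i => algebraMap (MvPolynomial ι k) S (MvPolynomial.X i)
  have hbS : ∀ i, bS i = KaehlerDifferential.D k S (s i) := fun i => by
    simp [bS, s, IsBaseChange.basis_apply]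
  let b : Module.Basis ι (Polynomial S) (Ω[Polynomial S⁄Polynomial k]) :=
    (bS.baseChange (Polynomial S)).map
      (KaehlerDifferential.tensorKaehlerEquiv k (Polynomial k) S (Polynomial S))
  have hb : ∀ i, b i = KaehlerDifferential.D _ _ (algebraMap S (Polynomial S) (s i)) := fun i => by
    rw [Module.Basis.map_apply, Module.Basis.baseChange_apply, hbS,
      KaehlerDifferential.tensorKaehlerEquiv_tmul_D, one_smul]
  refine ⟨(b.repr.toLinearMap.compDer (KaehlerDifferential.D _ _)).restrictScalars k,
    fun i => algebraMap S (Polynomial S) (s i), fun i => ?_⟩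
  exact (congrArg b.repr (hb i)).symm.trans (b.repr_self i)

theorem pid_aleph_one_ext_ne_zero_of_aleph_one_free_not_free_general (k : Type v) [CommRing k]
    [IsDomain k] (ι : Type u) [Infinite ι] :
    IsDomain (Polynomial (FractionRing (MvPolynomial ι k))) ∧
    IsPrincipalIdealRing (Polynomial (FractionRing (MvPolynomial ι k))) ∧
    ¬ IsField (Polynomial (FractionRing (MvPolynomial ι k))) ∧
    #(Polynomial (FractionRing (MvPolynomial ι k))) = max (lift.{u} #k) (lift.{v} #ι) ∧
    ∀ (A : Type (max u v)) (_ : AddCommGroup A)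
      (_ : Module (Polynomial (FractionRing (MvPolynomial ι k))) A),
      IsGenerated (Polynomial (FractionRing (MvPolynomial ι k))) A (lift.{v} #ι) →
      ¬ Module.Free (Polynomial (FractionRing (MvPolynomial ι k))) A →
      ¬ IsWhitehead (Polynomial (FractionRing (MvPolynomial ι k))) A := by
  refine ⟨inferInstance, inferInstance, Polynomial.not_isField _, by simp,
    fun A _ _ hgen hfree hA => hfree ?_⟩
  have : Algebra.FormallyEtale (MvPolynomial ι k) (FractionRing (MvPolynomial ι k)) :=
    .of_isLocalization (nonZeroDivisors _)
  obtain ⟨d, t, ht⟩ :=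
    exists_derivation_polynomial_eq_single k ι (FractionRing (MvPolynomial ι k))
  exact hA.free_of_derivation_s9 d ht hgen

/-- Eklof–Shelah, remark after Theorem 2: for `R = 𝓕₁[X]` where
`𝓕₁ = ℚ(t_ν : ν < ω₁)` is the field of rational functions in `ℵ₁` algebraically
independent variables over `ℚ`, the ring `R` is a p.i.d. of cardinality `ℵ₁`, and
every `ℵ₁`-generated `ℵ₁`-free non-free `R`-module `A` satisfies `Ext¹_R(A, R) ≠ 0`;
in particular every `ℵ₁`-generated `ℵ₁`-free Whitehead `R`-module is free. -/
theorem pid_aleph_one_ext_ne_zero_of_aleph_one_free_not_free (ι : Type u)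
    (hι : #ι = aleph 1) :
    IsDomain (Polynomial (FractionRing (MvPolynomial ι ℚ))) ∧
    IsPrincipalIdealRing (Polynomial (FractionRing (MvPolynomial ι ℚ))) ∧
    ¬ IsField (Polynomial (FractionRing (MvPolynomial ι ℚ))) ∧
    #(Polynomial (FractionRing (MvPolynomial ι ℚ))) = aleph 1 ∧
    ∀ (A : Type u) (_ : AddCommGroup A)
      (_ : Module (Polynomial (FractionRing (MvPolynomial ι ℚ))) A),
      IsGenerated (Polynomial (FractionRing (MvPolynomial ι ℚ))) A (aleph 1) →
      IsKappaFree (Polynomial (FractionRing (MvPolynomial ι ℚ))) A (aleph 1) →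
      ¬ Module.Free (Polynomial (FractionRing (MvPolynomial ι ℚ))) A →
      ¬ IsWhitehead (Polynomial (FractionRing (MvPolynomial ι ℚ))) A := by
  have : Infinite ι := infinite_iff.2 (hι ▸ aleph0_le_aleph 1)
  obtain ⟨hdom, hpir, hfield, -, hext⟩ :=
    pid_aleph_one_ext_ne_zero_of_aleph_one_free_not_free_general ℚ ι
  exact ⟨hdom, hpir, hfield, by simp [hι, aleph0_le_aleph],
    fun A _ _ hgen _ => hext A _ _ (by simpa [hι] using hgen)⟩
end

section
/- Let R be a principal ideal domain (not a field), let κ be an infinite cardinal, and let M be an ℵ₁-free R-module whose rank (the supremum of cardinalities of linearly independent subsets of M) is at most κ. Then M is κ-generated, i.e., M is generated by a subset of cardinality ≤ κ. -/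
/-!
Statement 10 (Eklof–Shelah, introductory remark): over a p.i.d. (not a field),
every `ℵ₁`-free module of rank at most `κ` (for `κ` infinite) is `κ`-generated.
-/

open Cardinal

universe u

/-!
Let `B` be a maximal linearly independent subset of `M`, so `B` has at most `κ` elements. Every
`x : M` has a nonzero multiple in the span of some finite `F ⊆ B`, so `M` is the union of the
saturations of these at most `κ` spans. A saturation of a span of finitely many elements has finite
rank, and it remains to see that it is finitely generated. In an `ℵ₁`-free module, a submodule of
finite rank that is not finitely generated would contain a countably generated one that is not
finitely generated either; but the latter is free of finite rank.
-/

open scoped nonZeroDivisors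

theorem exists_strictMono_fg_le_of_not_fg {R M : Type*} [Semiring R] [AddCommMonoid M]
    [Module R M] {N : Submodule R M} (hN : ¬ N.FG) :
    ∃ P : ℕ → Submodule R M, StrictMono P ∧ ∀ n, (P n).FG ∧ P n ≤ N := by
  obtain ⟨P, hP, hlt⟩ := exists_seq_of_forall_finset_exists
    (fun P : Submodule R M => P.FG ∧ P ≤ N) (· < ·) fun t ht => by
      have hfg : (t.sup id).FG := Submodule.fg_finset_sup t id fun P hP => (ht P hP).1
      have hle : t.sup id ≤ N := Finset.sup_le fun P hP => (ht P hP).2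
      have hlt : t.sup id < N := lt_of_le_of_ne hle fun h => hN (h ▸ hfg)
      obtain ⟨x, hxN, hx⟩ := SetLike.exists_of_lt hlt
      have hlt_sup : t.sup id < t.sup id ⊔ R ∙ x :=
        left_lt_sup.2 fun h => hx ((Submodule.span_singleton_le_iff_mem x _).1 h)
      exact ⟨t.sup id ⊔ R ∙ x, ⟨hfg.sup (Submodule.fg_span_singleton x),
        sup_le hle ((Submodule.span_singleton_le_iff_mem x N).2 hxN)⟩,
        fun P hP => (Finset.le_sup (f := id) hP).trans_lt hlt_sup⟩
  exact ⟨P, fun m n => hlt m n, hP⟩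

theorem fg_of_forall_countable_fg_span {R M : Type*} [Semiring R] [AddCommMonoid M] [Module R M]
    {N : Submodule R M} (hN : ∀ s : Set M, s ⊆ N → s.Countable → (Submodule.span R s).FG) :
    N.FG := by
  by_contra hNfg
  obtain ⟨P, hmono, hP⟩ := exists_strictMono_fg_le_of_not_fg hNfg
  choose S hSfin hS using fun n => Submodule.fg_def.1 (hP n).1
  have hspan : Submodule.span R (⋃ n, S n) = ⨆ n, P n := by
    simp only [Submodule.span_iUnion, hS]
  have hsub : ⋃ n, S n ⊆ N :=
    Set.iUnion_subset fun n => (hS n ▸ Submodule.subset_span).trans (hP n).2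
  have hfg : (⨆ n, P n).FG :=
    hspan ▸ hN _ hsub (Set.countable_iUnion fun n => (hSfin n).countable)
  obtain ⟨_, ⟨n, rfl⟩, hn⟩ := (Submodule.fg_iff_compact _).1 hfg _ _ (Set.range_nonempty P)
    hmono.monotone.directed_le.directedOn_range isLUB_iSup le_rfl
  exact (hmono n.lt_succ_self).not_ge ((le_iSup P _).trans hn)

theorem IsKappaFree.fg_of_rank_lt_aleph0 {R M : Type u} [Ring R] [StrongRankCondition R]
    [AddCommGroup M] [Module R M] (hfree : IsKappaFree R M (aleph 1)) {N : Submodule R M}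
    (hN : Module.rank R N < ℵ₀) : N.FG := by
  refine fg_of_forall_countable_fg_span fun s hsN hs => ?_
  have : Module.Free R (Submodule.span R s) :=
    hfree s (lt_aleph_one_iff.2 (le_aleph0_iff_set_countable.2 hs))
  rw [← Module.Finite.iff_fg, ← Module.rank_lt_aleph0_iff]
  exact (Submodule.rank_mono (Submodule.span_le.2 hsN)).trans_lt hN

section Saturation

variable {R M : Type*} [CommRing R] [AddCommGroup M] [Module R M]

/-- The saturation of a submodule `N`: the elements of which some multiple by a non-zero-divisor
lies in `N`, encoded as the preimage of the torsion of `M ⧸ N`. For `M` torsion-free over a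
principal ideal domain it is the smallest pure submodule containing `N`. -/
def saturation (N : Submodule R M) : Submodule R M :=
  (Submodule.torsion R (M ⧸ N)).comap N.mkQ

theorem mem_saturation {N : Submodule R M} {x : M} :
    x ∈ saturation N ↔ ∃ a ∈ R⁰, a • x ∈ N := by
  simp only [saturation, Submodule.mem_comap, Submodule.mem_torsion_iff, Submodule.mkQ_apply,
    Subtype.exists, Submonoid.mk_smul, ← Submodule.Quotient.mk_smul,
    Submodule.Quotient.mk_eq_zero, exists_prop]

theorem le_saturation (N : Submodule R M) : N ≤ saturation N := fun x hx =>
  mem_saturation.2 ⟨1, one_mem _, by rwa [one_smul]⟩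

theorem saturation_mono {N P : Submodule R M} (h : N ≤ P) : saturation N ≤ saturation P :=
  fun _ hx =>
    let ⟨a, ha, hax⟩ := mem_saturation.1 hx
    mem_saturation.2 ⟨a, ha, h hax⟩

theorem rank_saturation [IsDomain R] (N : Submodule R M) :
    Module.rank R (saturation N) = Module.rank R N := by
  have htorsion : Module.IsTorsion R (saturation N ⧸ N.submoduleOf (saturation N)) := by
    rw [Module.IsTorsion, (Submodule.Quotient.mk_surjective _).forall]
    rintro ⟨x, hx⟩
    obtain ⟨a, ha, hax⟩ := mem_saturation.1 hx
    exact ⟨⟨a, ha⟩, (Submodule.Quotient.mk_eq_zero _).2 hax⟩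
  rw [← Submodule.rank_quotient_add_rank (N.submoduleOf (saturation N)), htorsion.rank_eq_zero,
    zero_add, (Submodule.submoduleOfEquivOfLe (le_saturation N)).rank_eq]

theorem saturation_span_eq_iSup_finset (s : Set M) :
    saturation (Submodule.span R s) =
      ⨆ F : Finset s, saturation (Submodule.span R (Subtype.val '' (F : Set s))) := by
  classical
  apply le_antisymm
  · intro x hx
    obtain ⟨a, ha, hax⟩ := mem_saturation.1 hx
    obtain ⟨T, hTs, hT⟩ := Submodule.mem_span_finite_of_mem_span hax
    have hTF : (T : Set M) ⊆ Subtype.val '' (T.subtype (· ∈ s) : Set s) := fun y hy =>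
      ⟨⟨y, hTs hy⟩, Finset.mem_subtype.2 hy, rfl⟩
    exact Submodule.mem_iSup_of_mem (T.subtype (· ∈ s))
      (mem_saturation.2 ⟨a, ha, Submodule.span_mono hTF hT⟩)
  · exact iSup_le fun F =>
      saturation_mono (Submodule.span_mono (Subtype.coe_image_subset s F))

variable (R M) in
theorem exists_linearIndepOn_saturation_span_eq_top [IsDomain R] :
    ∃ B : Set M, LinearIndepOn R id B ∧ saturation (Submodule.span R B) = ⊤ := by
  obtain ⟨B, hB, hmax⟩ := exists_maximal_linearIndepOn R (id : M → M)
  refine ⟨B, hB, eq_top_iff.2 fun x _ => ?_⟩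
  by_cases hxB : x ∈ B
  · exact le_saturation _ (Submodule.subset_span hxB)
  · obtain ⟨a, ha, hax⟩ := hmax x hxB
    exact mem_saturation.2 ⟨a, mem_nonZeroDivisors_of_ne_zero ha, by simpa using hax⟩

end Saturation

theorem mk_finset_le_of_aleph0_le {α : Type u} {κ : Cardinal.{u}} (hκ : ℵ₀ ≤ κ) (hα : #α ≤ κ) :
    #(Finset α) ≤ κ := by
  cases finite_or_infinite α
  · exact mk_le_aleph0.trans hκ
  · rwa [mk_finset_of_infinite]

theorem isGenerated_of_iSup_eq_top {R M ι : Type u} [Semiring R] [AddCommMonoid M] [Module R M]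
    {κ : Cardinal.{u}} (hκ : ℵ₀ ≤ κ) (hι : #ι ≤ κ) {N : ι → Submodule R M}
    (hN : ∀ i, (N i).FG) (htop : ⨆ i, N i = ⊤) : IsGenerated R M κ := by
  choose S hSfin hS using fun i => Submodule.fg_def.1 (hN i)
  refine ⟨⋃ i, S i, (mk_iUnion_le S).trans (mul_le_of_le hκ hι ?_), ?_⟩
  · exact ciSup_le' fun i => (hSfin i).lt_aleph0.le.trans hκ
  · simp only [Submodule.span_iUnion, hS, htop]

theorem isGenerated_of_aleph_one_free_of_rank_le_general {R : Type u} [CommRing R] [IsDomain R]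
    (κ : Cardinal.{u}) (hκ : ℵ₀ ≤ κ)
    (M : Type u) [AddCommGroup M] [Module R M]
    (hfg : ∀ N : Submodule R M, Module.rank R N < ℵ₀ → N.FG)
    (hrank : Module.rank R M ≤ κ) :
    IsGenerated R M κ := by
  obtain ⟨B, hB, hBtop⟩ := exists_linearIndepOn_saturation_span_eq_top R M
  have hBκ : #B ≤ κ := hB.linearIndependent.cardinal_le_rank.trans hrank
  have hsat_fg (F : Finset B) :
      (saturation (Submodule.span R (Subtype.val '' (F : Set B)))).FG := by
    refine hfg _ ?_
    rw [rank_saturation]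
    exact (rank_span_le _).trans_lt (F.finite_toSet.image _).lt_aleph0
  exact isGenerated_of_iSup_eq_top hκ (mk_finset_le_of_aleph0_le hκ hBκ) hsat_fg
    ((saturation_span_eq_iSup_finset B).symm.trans hBtop)

theorem isGenerated_of_aleph_one_free_of_rank_le {R : Type u} [CommRing R] [IsDomain R]
    [IsPrincipalIdealRing R] (hnf : ¬ IsField R)
    (κ : Cardinal.{u}) (hκ : ℵ₀ ≤ κ)
    (M : Type u) [AddCommGroup M] [Module R M]
    (hfree : IsKappaFree R M (aleph 1))
    (hrank : Module.rank R M ≤ κ) :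
    IsGenerated R M κ :=
  isGenerated_of_aleph_one_free_of_rank_le_general κ hκ M
    (fun _ hN => hfree.fg_of_rank_lt_aleph0 hN) hrank
end
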